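/- Let s > 1, f ∈ H^s(𝕊) with f_φ ∈ H^{s−1/2}(𝕊), and h ∈ H^{s+3/4}(ℰ). Then the function v(r,θ,φ) = Σ_{l=0}^∞ Σ_{m=−l}^{l} (b_l^m + c_l^m) r^{−l−1} Y_l^m(θ,φ) belongs to C²(Ω) ∩ C¹(cl Ω) and is a classical solution of: Δv = 0 in the exterior Ω of 𝕊; −2 sin θ · v_r + cos θ · v_θ = f/2 on 𝕊; v → 0 uniformly as r → ∞; and v = h on the equator ℰ. -/

import Mathlib

noncomputable section

open MeasureTheory Real Filter

/-- The Legendre polynomial of degree `n`, via Rodrigues' formula. -/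
def legendreP (n : ℕ) : Polynomial ℝ :=
  Polynomial.C ((2 ^ n * n.factorial : ℝ)⁻¹) *
    Polynomial.derivative^[n] ((Polynomial.X ^ 2 - 1) ^ n)

/-- The associated Legendre function `P_l^m` (with Condon–Shortley phase),
so that `P_{|m|+2k}^{|m|}(0) = (-1)^{|m|+k} (2|m|+2k-1)!!/(2k)!!`. -/
def assocLegendre (l m : ℕ) (x : ℝ) : ℝ :=
  (-1 : ℝ) ^ m * (1 - x ^ 2) ^ ((m : ℝ) / 2) *
    (Polynomial.derivative^[m] (legendreP l)).eval x

/-- The normalizing constant `α_l^m` of the spherical harmonics. -/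
def alphaY (l : ℕ) (m : ℤ) : ℝ :=
  (-1 : ℝ) ^ ((m + |m|) / 2) *
    Real.sqrt ((2 * l + 1) * (l - m.natAbs).factorial /
      (4 * Real.pi * (l + m.natAbs).factorial))

/-- The spherical harmonic `Y_l^m` in latitude/longitude coordinates `(θ, φ)`. -/
def Ylm (l : ℕ) (m : ℤ) (θ φ : ℝ) : ℂ :=
  ((alphaY l m * assocLegendre l m.natAbs (Real.sin θ) : ℝ) : ℂ) *
    Complex.exp (Complex.I * m * φ)

/-- The surface measure `dS = cos θ dθ dφ` of the unit sphere, in the coordinate box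
`[-π/2, π/2] × [-π, π)`. -/
def sphereMeasure : Measure (ℝ × ℝ) :=
  ((volume : Measure (ℝ × ℝ)).restrict
      (Set.Icc (-(Real.pi / 2)) (Real.pi / 2) ×ˢ Set.Ico (-Real.pi) Real.pi)).withDensity
    fun p => ENNReal.ofReal (Real.cos p.1)

/-- The Fourier–Laplace coefficient `ψ̂_l^m = ∫_𝕊 ψ conj(Y_l^m) dS`. -/
def flCoeff (ψ : ℝ → ℝ → ℂ) (l : ℕ) (m : ℤ) : ℂ :=
  ∫ p : ℝ × ℝ, ψ p.1 p.2 * (starRingEnd ℂ) (Ylm l m p.1 p.2) ∂sphereMeasure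

/-- Membership in the fractional Sobolev space `H^s(𝕊)`:
`ψ ∈ L²(𝕊)` and `Σ_{l,m} (l+1)^{2s} |ψ̂_l^m|² < ∞`.
(The coefficients with `|m| > l` vanish automatically.) -/
def MemHs (s : ℝ) (ψ : ℝ → ℝ → ℂ) : Prop :=
  MeasureTheory.MemLp (fun p : ℝ × ℝ => ψ p.1 p.2) 2 sphereMeasure ∧
    Summable fun p : ℕ × ℤ =>
      ((p.1 : ℝ) + 1) ^ (2 * s) * ‖flCoeff ψ p.1 p.2‖ ^ 2

/-- The `H^s(𝕊)` norm. -/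
def HsNorm (s : ℝ) (ψ : ℝ → ℝ → ℂ) : ℝ :=
  Real.sqrt (∑' p : ℕ × ℤ, ((p.1 : ℝ) + 1) ^ (2 * s) * ‖flCoeff ψ p.1 p.2‖ ^ 2)

/-- Axially symmetric functions on the sphere: functions not depending on the longitude. -/
def Axial (ψ : ℝ → ℝ → ℂ) : Prop := ∀ θ φ₁ φ₂, ψ θ φ₁ = ψ θ φ₂

/-- Spherical (latitude/longitude) coordinates on the unit sphere of `ℝ³`. -/
def sphCoord (θ φ : ℝ) : EuclideanSpace ℝ (Fin 3) :=
  (WithLp.equiv 2 (Fin 3 → ℝ)).symm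
    ![Real.cos θ * Real.cos φ, Real.cos θ * Real.sin φ, Real.sin θ]

/-- The open exterior `Ω` of the unit sphere. -/
def extDomain : Set (EuclideanSpace ℝ (Fin 3)) := {x | 1 < ‖x‖}

/-- The closed exterior `cl Ω` of the unit sphere. -/
def closedExt : Set (EuclideanSpace ℝ (Fin 3)) := {x | 1 ≤ ‖x‖}

/-- The Laplacian of a function on `ℝ³`. -/
def lap {F : Type*} [NormedAddCommGroup F] [NormedSpace ℝ F]
    (u : EuclideanSpace ℝ (Fin 3) → F) (x : EuclideanSpace ℝ (Fin 3)) : F :=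
  ∑ i : Fin 3, fderiv ℝ (fun y => fderiv ℝ u y (EuclideanSpace.single i 1)) x
    (EuclideanSpace.single i 1)

/-- The radial derivative `u_r` at a point of the unit sphere (taken from outside). -/
def radialDeriv {F : Type*} [NormedAddCommGroup F] [NormedSpace ℝ F]
    (u : EuclideanSpace ℝ (Fin 3) → F) (θ φ : ℝ) : F :=
  derivWithin (fun r : ℝ => u (r • sphCoord θ φ)) (Set.Ici 1) 1

/-- The latitudinal derivative `u_θ` at a point of the unit sphere. -/
def thetaDeriv {F : Type*} [NormedAddCommGroup F] [NormedSpace ℝ F]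
    (u : EuclideanSpace ℝ (Fin 3) → F) (θ φ : ℝ) : F :=
  deriv (fun t => u (sphCoord t φ)) θ

/-- The boundary trace on the unit sphere of a real-valued function, in coordinates. -/
def traceR (u : EuclideanSpace ℝ (Fin 3) → ℝ) (θ φ : ℝ) : ℂ := (u (sphCoord θ φ) : ℂ)

/-- The boundary trace on the unit sphere of a complex-valued function, in coordinates. -/
def traceC (u : EuclideanSpace ℝ (Fin 3) → ℂ) (θ φ : ℝ) : ℂ := u (sphCoord θ φ)

/-- The Fourier coefficient on the equator `ℰ`. -/
def equatorCoeff (h : ℝ → ℂ) (m : ℤ) : ℂ :=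
  (1 / (2 * Real.pi)) * ∫ φ in (-Real.pi)..Real.pi, h φ * Complex.exp (-(Complex.I * m * φ))

/-- Membership in the fractional Sobolev space `H^s(ℰ)` on the equator. -/
def MemHsE (s : ℝ) (h : ℝ → ℂ) : Prop :=
  MeasureTheory.MemLp h 2 (volume.restrict (Set.Ico (-Real.pi) Real.pi)) ∧
    Summable fun m : ℤ => ((m.natAbs : ℝ) + 1) ^ (2 * s) * ‖equatorCoeff h m‖ ^ 2

/-- The `H^s(ℰ)` norm. -/
def HsNormE (s : ℝ) (h : ℝ → ℂ) : ℝ :=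
  Real.sqrt (∑' m : ℤ, ((m.natAbs : ℝ) + 1) ^ (2 * s) * ‖equatorCoeff h m‖ ^ 2)

/-- The constant `β_l^m`. -/
def betaLM (l : ℕ) (m : ℤ) : ℝ :=
  Real.sqrt (((l : ℝ) - m.natAbs) * ((l : ℝ) + m.natAbs) /
    ((2 * (l : ℝ) - 1) * (2 * (l : ℝ) + 1)))

/-- The constant `γ_l^m = -(l+1)β_l^m / (3(l+2)β_{l+1}^m)`. -/
def gammaLM (l : ℕ) (m : ℤ) : ℝ :=
  -(((l : ℝ) + 1) * betaLM l m) / (3 * ((l : ℝ) + 2) * betaLM (l + 1) m)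

/-- The product `Γ_k^m = ∏_{j=1}^k γ_{|m|+2j-1}^m` (with `Γ_0^m = 1`). -/
def GammaKM (m : ℤ) (k : ℕ) : ℝ :=
  ∏ j ∈ Finset.Icc 1 k, gammaLM (m.natAbs + 2 * j - 1) m

/-- The value `α_{|m|+2k}^m P_{|m|+2k}^{|m|}(0)`. -/
def PzeroM (m : ℤ) (k : ℕ) : ℝ :=
  alphaY (m.natAbs + 2 * k) m * assocLegendre (m.natAbs + 2 * k) m.natAbs 0

/-- The coefficient `a_l^m = f̂_l^m / (6(l+2)β_{l+1}^m)`. -/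
def aCoef (f : ℝ → ℝ → ℂ) (l : ℕ) (m : ℤ) : ℂ :=
  flCoeff f l m / ((6 * ((l : ℝ) + 2) * betaLM (l + 1) m : ℝ) : ℂ)

/-- The solution of the recurrence `b_{|m|-1}^m = b_{|m|}^m = 0`,
`b_{l+1}^m = γ_l^m b_{l-1}^m + a_l^m`; here `bSeq f m n = b_{|m|-1+n}^m`. -/
def bSeq (f : ℝ → ℝ → ℂ) (m : ℤ) : ℕ → ℂ
  | 0 => 0
  | 1 => 0
  | n + 2 => ((gammaLM (m.natAbs + n) m : ℝ) : ℂ) * bSeq f m n + aCoef f (m.natAbs + n) m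

/-- The coefficient `b_l^m`. -/
def bCoef (f : ℝ → ℝ → ℂ) (l : ℕ) (m : ℤ) : ℂ := bSeq f m (l + 1 - m.natAbs)

/-- The constant `ã^m`. -/
def aTilde (f : ℝ → ℝ → ℂ) (h : ℝ → ℂ) (m : ℤ) : ℂ :=
  (equatorCoeff h m - ∑' k : ℕ, bCoef f (m.natAbs + 2 * k) m * ((PzeroM m k : ℝ) : ℂ)) /
    (((∑' k : ℕ, GammaKM m k * PzeroM m k : ℝ)) : ℂ)

/-- The coefficient `c_l^m`: `c_{|m|+2k}^m = Γ_k^m ã^m` and `c_{|m|+2k-1}^m = 0`. -/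
def cCoef (f : ℝ → ℝ → ℂ) (h : ℝ → ℂ) (l : ℕ) (m : ℤ) : ℂ :=
  if m.natAbs ≤ l ∧ (l - m.natAbs) % 2 = 0 then
    ((GammaKM m ((l - m.natAbs) / 2) : ℝ) : ℂ) * aTilde f h m
  else 0

/-- The boundary trace `v(1, θ, φ)` of the formal series solution. -/
def vTraceS (f : ℝ → ℝ → ℂ) (h : ℝ → ℂ) (θ φ : ℝ) : ℂ :=
  ∑' p : ℕ × ℤ, (bCoef f p.1 p.2 + cCoef f h p.1 p.2) * Ylm p.1 p.2 θ φ

/-- The latitude of a point of `ℝ³`. -/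
def latitude (x : EuclideanSpace ℝ (Fin 3)) : ℝ := Real.arcsin (x 2 / ‖x‖)

/-- The longitude of a point of `ℝ³`. -/
def longitude (x : EuclideanSpace ℝ (Fin 3)) : ℝ :=
  Complex.arg ((x 0 : ℂ) + (x 1 : ℂ) * Complex.I)

/-- The formal series solution `v = Σ (b_l^m + c_l^m) r^{-l-1} Y_l^m(θ, φ)`. -/
def vFun (f : ℝ → ℝ → ℂ) (h : ℝ → ℂ) (x : EuclideanSpace ℝ (Fin 3)) : ℂ :=
  ∑' p : ℕ × ℤ, (bCoef f p.1 p.2 + cCoef f h p.1 p.2) * ((‖x‖ : ℂ) ^ (-(p.1 : ℤ) - 1)) *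
    Ylm p.1 p.2 (latitude x) (longitude x)

/-- `v` is a classical solution of the linearized (oblique derivative) problem
`Δv = 0` in `Ω`, `∇d⋅∇v = -2 sin θ v_r + cos θ v_θ = f/2` on `𝕊`, `v → 0` at infinity,
`v = h` on the equator; complex-valued version. -/
def SolvesObliqueC (v : EuclideanSpace ℝ (Fin 3) → ℂ) (f : ℝ → ℝ → ℂ) (h : ℝ → ℂ) : Prop :=
  ContDiffOn ℝ 2 v extDomain ∧ ContDiffOn ℝ 1 v closedExt ∧
    (∀ x ∈ extDomain, lap v x = 0) ∧
    (∀ θ ∈ Set.Icc (-(Real.pi / 2)) (Real.pi / 2), ∀ φ : ℝ,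
      -2 * (Real.sin θ : ℂ) * radialDeriv v θ φ + (Real.cos θ : ℂ) * thetaDeriv v θ φ
        = f θ φ / 2) ∧
    Filter.Tendsto v (Bornology.cobounded _) (nhds 0) ∧
    (∀ φ : ℝ, v (sphCoord 0 φ) = h φ)

/-- Real-valued version of `SolvesObliqueC`. -/
def SolvesObliqueR (v : EuclideanSpace ℝ (Fin 3) → ℝ) (f : ℝ → ℝ → ℝ) (h : ℝ → ℝ) : Prop :=
  ContDiffOn ℝ 2 v extDomain ∧ ContDiffOn ℝ 1 v closedExt ∧
    (∀ x ∈ extDomain, lap v x = 0) ∧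
    (∀ θ ∈ Set.Icc (-(Real.pi / 2)) (Real.pi / 2), ∀ φ : ℝ,
      -2 * Real.sin θ * radialDeriv v θ φ + Real.cos θ * thetaDeriv v θ φ = f θ φ / 2) ∧
    Filter.Tendsto v (Bornology.cobounded _) (nhds 0) ∧
    (∀ φ : ℝ, v (sphCoord 0 φ) = h φ)


/-! Part A -/
noncomputable section
open MeasureTheory Real Filter

section Legendre
open Polynomial

/-- iterated derivative of the Legendre polynomial -/
def QP (l m : ℕ) : Polynomial ℝ := derivative^[m] (legendreP l)

lemma it_out (k : ℕ) (p : Polynomial ℝ) :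
    derivative^[k+1] p = derivative (derivative^[k] p) := Function.iterate_succ_apply' _ _ _

lemma it_in (k : ℕ) (p : Polynomial ℝ) :
    derivative^[k+1] p = derivative^[k] (derivative p) := Function.iterate_succ_apply _ _ _

lemma leib_X (k : ℕ) (p : Polynomial ℝ) :
    derivative^[k+1] (X * p) = X * derivative^[k+1] p + C ((k:ℝ)+1) * derivative^[k] p := by
  induction k with
  | zero => simp [derivative_mul]; ring
  | succ k ih =>
    rw [it_out, ih, it_out (k+1) p]
    simp only [derivative_add, derivative_mul, derivative_X, derivative_C, ← it_out k]
    push_cast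
    simp only [C_add, C_1]
    ring

lemma iter_C_mul (k : ℕ) (a : ℝ) (p : Polynomial ℝ) :
    derivative^[k] (C a * p) = C a * derivative^[k] p := by
  simp [iterate_derivative_C_mul]

lemma iter_add (k : ℕ) (p q : Polynomial ℝ) :
    derivative^[k] (p + q) = derivative^[k] p + derivative^[k] q := by
  induction k with
  | zero => simp
  | succ k ih => simp [it_out, ih, -Function.iterate_succ]

lemma C_two : (C 2 : Polynomial ℝ) = 2 := rfl

lemma der_U (n : ℕ) : derivative ((X ^ 2 - 1 : Polynomial ℝ) ^ (n+1)) =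
    C (2 * ((n:ℝ)+1)) * (X * (X^2-1)^n) := by
  rw [derivative_pow_succ]
  simp [C_two]
  ring

lemma cn_succ (n : ℕ) : ((2 ^ (n+1) * (n+1).factorial : ℝ)⁻¹) * (2 * ((n:ℝ)+1)) =
    (2 ^ n * n.factorial : ℝ)⁻¹ := by
  rw [Nat.factorial_succ]; push_cast
  have : (n.factorial : ℝ) ≠ 0 := by positivity
  have : (n:ℝ)+1 ≠ 0 := by positivity
  field_simp
  ring

lemma QP_succ (l m : ℕ) : QP l (m+1) = derivative (QP l m) := by
  simp [QP, Function.iterate_succ_apply']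

lemma leg_L1 (n : ℕ) : QP (n+1) 1 = C ((n:ℝ)+1) * QP n 0 + X * QP n 1 := by
  simp only [QP, Function.iterate_one, Function.iterate_zero, id, legendreP]
  rw [derivative_C_mul, ← it_out, it_in, der_U,
    iter_C_mul, leib_X, ← mul_assoc, ← C_mul, cn_succ, derivative_C_mul,
    ← it_out]
  ring

lemma leg_L2 (n : ℕ) : X * QP (n+1) 1 = QP n 1 + C ((n:ℝ)+1) * QP (n+1) 0 := by
  simp only [QP, Function.iterate_one, Function.iterate_zero, id, legendreP]
  have h1 : X * derivative ((X ^ 2 - 1 : Polynomial ℝ) ^ (n+1)) =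
      C (2 * ((n:ℝ)+1)) * ((X^2-1)^(n+1)) + C (2 * ((n:ℝ)+1)) * ((X^2-1)^n) := by
    rw [der_U]; ring
  have h2 := congrArg (fun p => derivative^[n+1] p) h1
  simp only [iter_add, iter_C_mul, leib_X, ← it_in] at h2
  rw [derivative_C_mul, derivative_C_mul, ← it_out, ← it_out]
  rw [← cn_succ n]
  simp only [C_mul, C_add, C_two, C_1] at h2 ⊢
  linear_combination C ((2 ^ (n+1) * (n+1).factorial : ℝ)⁻¹) * h2

lemma QP_I1 (l m : ℕ) : QP (l+1) (m+1) = C ((l:ℝ)+m+1) * QP l m + X * QP l (m+1) := by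
  induction m with
  | zero => simpa using leg_L1 l
  | succ m ih =>
    rw [QP_succ, ih]
    simp only [derivative_add, derivative_mul, derivative_X, derivative_C, ← QP_succ]
    push_cast
    simp only [C_add, C_1]
    ring

lemma QP_I4 (l m : ℕ) : X * QP (l+1) (m+1) = QP l (m+1) + C ((l:ℝ)+1-m) * QP (l+1) m := by
  induction m with
  | zero => simpa using leg_L2 l
  | succ m ih =>
    have := congrArg derivative ih
    simp only [derivative_add, derivative_mul, derivative_X, derivative_C, ← QP_succ] at this
    push_cast
    simp only [C_add, C_sub] at this ⊢
    simp only [C_1] at *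
    linear_combination this

/-- evaluated -/
def q (l m : ℕ) (t : ℝ) : ℝ := (QP l m).eval t

lemma q_I1 (l m : ℕ) (t : ℝ) : q (l+1) (m+1) t = ((l:ℝ)+m+1) * q l m t + t * q l (m+1) t := by
  simp [q, QP_I1 l m]

lemma q_I4 (l m : ℕ) (t : ℝ) : t * q (l+1) (m+1) t = q l (m+1) t + ((l:ℝ)+1-m) * q (l+1) m t := by
  have := congrArg (fun p => p.eval t) (QP_I4 l m)
  simpa [q] using this

lemma q_I2 (l m : ℕ) (t : ℝ) :
    ((l:ℝ)+1-m) * q (l+1) m t = ((l:ℝ)+m+1) * t * q l m t - (1-t^2) * q l (m+1) t := by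
  linear_combination t * q_I1 l m t - q_I4 l m t

lemma q_ode (l m : ℕ) (t : ℝ) :
    (1-t^2) * q l (m+2) t = 2*((m:ℝ)+1)*t*q l (m+1) t - ((l:ℝ)-m)*((l:ℝ)+m+1)*q l m t := by
  have h := q_I2 l (m+1) t
  push_cast at h
  linear_combination h - ((l:ℝ)-m) * q_I1 l m t

lemma q_three (l m : ℕ) (t : ℝ) :
    (2*(l:ℝ)+3) * t * q (l+1) m t = ((l:ℝ)-m+2) * q (l+2) m t + ((l:ℝ)+m+1) * q l m t := by
  have h := q_I2 (l+1) m t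
  push_cast at h
  linear_combination -h + q_I1 l m t - t * q_I4 l m t

lemma q_hasDeriv (l m : ℕ) (t : ℝ) : HasDerivAt (q l m) (q l (m+1) t) t := by
  simp only [q, QP_succ]
  exact (QP l m).hasDerivAt t

lemma natDegree_legendre (l : ℕ) : (legendreP l).natDegree ≤ l := by
  unfold legendreP
  refine (natDegree_C_mul_le _ _).trans ?_
  refine (natDegree_iterate_derivative _ _).trans ?_
  have : ((X ^ 2 - 1 : Polynomial ℝ) ^ l).natDegree ≤ l * 2 := by
    refine natDegree_pow_le_of_le l ?_
    have : (X ^ 2 - 1 : Polynomial ℝ) = X^2 - C 1 := by simp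
    rw [this, natDegree_X_pow_sub_C]
  omega

lemma QP_zero {l m : ℕ} (h : l < m) : QP l m = 0 := by
  unfold QP
  exact iterate_derivative_eq_zero (lt_of_le_of_lt (natDegree_legendre l) h)

lemma q_zero {l m : ℕ} (h : l < m) (t : ℝ) : q l m t = 0 := by
  simp [q, QP_zero h]

lemma legendre_zero : legendreP 0 = 1 := by simp [legendreP]

lemma q_zero_zero (t : ℝ) : q 0 0 t = 1 := by simp [q, QP, legendre_zero]

lemma q_diag (m : ℕ) (t : ℝ) : q (m+1) (m+1) t = (2*(m:ℝ)+1) * q m m t := by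
  rw [q_I1, q_zero (Nat.lt_succ_self m)]; ring

lemma q_diag_pos (m : ℕ) (t : ℝ) : 0 < q m m t := by
  induction m with
  | zero => rw [q_zero_zero]; norm_num
  | succ m ih => rw [q_diag]; positivity

lemma q_step (m : ℕ) (t : ℝ) : q (m+1) m t = (2*(m:ℝ)+1) * t * q m m t := by
  have := q_I2 m m t
  rw [q_zero (Nat.lt_succ_self m)] at this
  linear_combination this

lemma q_one (l : ℕ) : q l 0 1 = 1 := by
  induction l with
  | zero => exact q_zero_zero 1
  | succ l ih =>
    have := q_I2 l 0 1
    rw [ih] at this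
    norm_num at this
    have h2 : (l:ℝ)+1 ≠ 0 := by positivity
    exact mul_left_cancel₀ h2 (by linarith)

lemma q_continuous (l m : ℕ) : Continuous (q l m) := (QP l m).continuous

lemma QP_natDegree (l m : ℕ) : (QP l m).natDegree ≤ l - m :=
  (natDegree_iterate_derivative _ _).trans (Nat.sub_le_sub_right (natDegree_legendre l) m)

end Legendre
end

/-! Part B -/
noncomputable section
open MeasureTheory Real Filter

lemma hd_pow (m : ℕ) (t : ℝ) :
    HasDerivAt (fun t : ℝ => (1-t^2)^(m+1)) (((m:ℝ)+1)*(1-t^2)^m * (-(2*t))) t := by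
  refine HasDerivAt.congr_deriv
    (((hasDerivAt_const t (1:ℝ)).fun_sub (hasDerivAt_pow 2 t)).fun_pow (m+1)) ?_
  simp

/-- Gram integrals of associated Legendre functions -/
def NI (m l l' : ℕ) : ℝ := ∫ t in (-1:ℝ)..1, (1-t^2)^m * q l m t * q l' m t

lemma NI_symm (m l l' : ℕ) : NI m l l' = NI m l' l := by
  unfold NI; congr 1; ext t; ring

lemma NI_succ (m l l' : ℕ) : NI (m+1) l l' = ((l:ℝ)-m)*((l:ℝ)+m+1) * NI m l l' := by
  have hu : ∀ t : ℝ, HasDerivAt (fun t => (1-t^2)^(m+1) * q l (m+1) t)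
      (-(((l:ℝ)-m)*((l:ℝ)+m+1)) * ((1-t^2)^m * q l m t)) t := by
    intro t
    have h1 := hd_pow m t
    refine HasDerivAt.congr_deriv (h1.fun_mul (q_hasDeriv l (m+1) t)) ?_
    linear_combination ((1-t^2)^m) * q_ode l m t
  have key := intervalIntegral.integral_mul_deriv_eq_deriv_mul (a := -1) (b := 1)
    (u := fun t => (1-t^2)^(m+1) * q l (m+1) t) (v := q l' m)
    (u' := fun t => -(((l:ℝ)-m)*((l:ℝ)+m+1)) * ((1-t^2)^m * q l m t)) (v' := q l' (m+1))
    (fun t _ => hu t) (fun t _ => q_hasDeriv l' m t)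
    (by
      apply Continuous.intervalIntegrable
      have := q_continuous l m
      fun_prop)
    ((q_continuous l' (m+1)).intervalIntegrable _ _)
  unfold NI
  rw [key]
  simp only [one_pow, sub_self, ne_eq, Nat.add_eq_zero_iff, one_ne_zero, and_false,
    not_false_eq_true, zero_pow, zero_mul, even_two, Even.neg_pow]
  rw [← intervalIntegral.integral_const_mul]
  simp only [zero_sub, sub_zero]
  rw [← intervalIntegral.integral_neg]
  congr 1; ext t; ring

lemma NI0_orth {l l' : ℕ} (h : l ≠ l') : NI 0 l l' = 0 := by
  have h1 := NI_succ 0 l l'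
  have h2 := NI_succ 0 l' l
  rw [NI_symm 1 l' l, NI_symm 0 l' l] at h2
  have h3 : (((l:ℝ)-l')*((l:ℝ)+l'+1)) * NI 0 l l' = 0 := by
    push_cast at h1 h2; linear_combination h2 - h1
  have h4 : ((l:ℝ)-l') ≠ 0 := sub_ne_zero.2 (by exact_mod_cast h)
  have h5 : ((l:ℝ)+l'+1) ≠ 0 := by positivity
  exact (mul_eq_zero.1 h3).resolve_left (mul_ne_zero h4 h5)

lemma NI0_intg (p r : ℝ → ℝ) (hp : Continuous p) (hr : Continuous r) :
    IntervalIntegrable (fun t => p t * r t) volume (-1) 1 :=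
  (hp.mul hr).intervalIntegrable _ _

lemma NI0_eq (l l' : ℕ) : NI 0 l l' = ∫ t in (-1:ℝ)..1, q l 0 t * q l' 0 t := by
  simp [NI]

lemma NI0_norm (l : ℕ) : NI 0 l l = 2 / (2*(l:ℝ)+1) := by
  have key : ∀ l : ℕ, (2*(l:ℝ)+3) * NI 0 (l+1) (l+1) = (2*(l:ℝ)+1) * NI 0 l l := by
    intro l
    -- ∫ t q_l q_{l+1}
    have hc := fun l => q_continuous l 0
    set J := ∫ t in (-1:ℝ)..1, t * q l 0 t * q (l+1) 0 t with hJ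
    have e1 : (2*(l:ℝ)+3) * J = ((l:ℝ)+1) * NI 0 l l := by
      have e : (2*(l:ℝ)+3) * J = ((l:ℝ)+2) * NI 0 (l+2) l + ((l:ℝ)+1) * NI 0 l l := by
        rw [NI0_eq, NI0_eq, hJ, ← intervalIntegral.integral_const_mul,
          ← intervalIntegral.integral_const_mul, ← intervalIntegral.integral_const_mul,
          ← intervalIntegral.integral_add]
        · congr 1; ext t
          have := q_three l 0 t
          push_cast at this
          linear_combination q l 0 t * this
        · exact (((hc (l+2)).mul (hc l)).const_mul _).intervalIntegrable _ _
        · exact (((hc l).mul (hc l)).const_mul _).intervalIntegrable _ _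
      rw [e, NI0_orth (by omega)]; ring
    have e2 : ((l:ℝ)+1) * NI 0 (l+1) (l+1) = (2*(l:ℝ)+1) * J := by
      rcases l with _ | l
      · have : NI 0 1 1 = J := by
          rw [NI0_eq, hJ]; congr 1; ext t
          have := q_step 0 t
          rw [q_zero_zero] at this
          simp only [q_zero_zero]
          norm_num at this
          rw [this]; simp [this]
        simp [this]
      · have e : (2*((l+1:ℕ):ℝ)+1) * J = (((l+1:ℕ):ℝ)+1) * NI 0 (l+2) (l+2)
            + ((l:ℝ)+1) * NI 0 l (l+2) := by
          rw [NI0_eq, NI0_eq, hJ, ← intervalIntegral.integral_const_mul,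
            ← intervalIntegral.integral_const_mul, ← intervalIntegral.integral_const_mul,
            ← intervalIntegral.integral_add]
          · congr 1; ext t
            have := q_three l 0 t
            push_cast at this ⊢
            linear_combination q (l+2) 0 t * this
          · exact (((hc (l+2)).mul (hc (l+2))).const_mul _).intervalIntegrable _ _
          · exact (((hc l).mul (hc (l+2))).const_mul _).intervalIntegrable _ _
        rw [e, NI0_orth (l := l) (l' := l+2) (by omega)]; ring
    have h3 : (l:ℝ)+1 ≠ 0 := by positivity
    apply mul_left_cancel₀ h3
    linear_combination (2*(l:ℝ)+3) * e2 + (2*(l:ℝ)+1) * e1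
  have h : (2*(l:ℝ)+1) * NI 0 l l = 2 := by
    induction l with
    | zero =>
      rw [NI0_eq]; simp only [q_zero_zero]; norm_num
    | succ l ih =>
      have := key l
      push_cast
      linear_combination this + ih
  rw [eq_div_iff (by positivity)]
  linarith

lemma NI_orth (m : ℕ) {l l' : ℕ} (h : l ≠ l') : NI m l l' = 0 := by
  induction m with
  | zero => exact NI0_orth h
  | succ m ih => rw [NI_succ, ih, mul_zero]

lemma NI_norm (m l : ℕ) (h : m ≤ l) :
    NI m l l = 2 / (2*(l:ℝ)+1) * ((l+m).factorial / (l-m).factorial) := by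
  induction m with
  | zero =>
    rw [NI0_norm]
    have : (l.factorial : ℝ) ≠ 0 := by positivity
    simp [this]
  | succ m ih =>
    rw [NI_succ, ih (by omega)]
    obtain ⟨k, rfl⟩ : ∃ k, l = m + 1 + k := ⟨l - (m+1), by omega⟩
    have e1 : m + 1 + k - m = k + 1 := by omega
    have e2 : m + 1 + k - (m+1) = k := by omega
    have e3 : m + 1 + k + (m+1) = (m+1+k+m) + 1 := by ring
    rw [e1, e2, e3, Nat.factorial_succ, Nat.factorial_succ]
    push_cast
    have h1 : (k.factorial : ℝ) ≠ 0 := by positivity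
    have h2 : (k:ℝ)+1 ≠ 0 := by positivity
    have h3 : (2*((m:ℝ)+1+k)+1) ≠ 0 := by positivity
    field_simp
    ring

/-- factorial ratio -/
def kap (l m : ℕ) : ℝ := (l-m).factorial / (l+m).factorial

lemma kap_succ (l m : ℕ) (h : m < l) :
    kap l (m+1) * (((l:ℝ)-m)*((l:ℝ)+m+1)) = kap l m := by
  obtain ⟨k, rfl⟩ : ∃ k, l = m + 1 + k := ⟨l - (m+1), by omega⟩
  have e1 : m + 1 + k - m = k + 1 := by omega
  have e2 : m + 1 + k - (m+1) = k := by omega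
  have e3 : m + 1 + k + (m+1) = (m+1+k+m) + 1 := by ring
  unfold kap
  rw [e1, e2, e3, Nat.factorial_succ, Nat.factorial_succ]
  push_cast
  have h1 : ((m+1+k+m).factorial : ℝ) ≠ 0 := by positivity
  field_simp
  ring

lemma kap_pos (l m : ℕ) : 0 < kap l m := by unfold kap; positivity

/-- the (normalized) sum in the addition theorem -/
def TT (l : ℕ) (t : ℝ) : ℝ := (q l 0 t)^2 +
  2 * ∑ m ∈ Finset.range l, kap l (m+1) * ((1-t^2)^(m+1) * (q l (m+1) t)^2)

lemma TT_deriv (l : ℕ) (t : ℝ) : HasDerivAt (TT l) 0 t := by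
  have hm : ∀ m ∈ Finset.range l, HasDerivAt
      (fun t => kap l (m+1) * ((1-t^2)^(m+1) * (q l (m+1) t)^2))
      (kap l (m+1) * ((1-t^2)^(m+1) * q l (m+1) t * q l (m+2) t)
        - kap l m * ((1-t^2)^m * q l m t * q l (m+1) t)) t := by
    intro m hm
    have h1 := hd_pow m t
    have h2 := (h1.fun_mul ((q_hasDeriv l (m+1) t).fun_pow 2)).const_mul (kap l (m+1))
    refine HasDerivAt.congr_deriv h2 ?_
    rw [← kap_succ l m (Finset.mem_range.1 hm)]
    have := q_ode l m t
    simp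
    linear_combination (kap l (m+1) * (1-t^2)^m * q l (m+1) t) * this
  have h := ((q_hasDeriv l 0 t).fun_pow 2).fun_add ((HasDerivAt.fun_sum hm).const_mul 2)
  refine HasDerivAt.congr_deriv h ?_
  rw [Finset.sum_range_sub (fun m => kap l m * ((1-t^2)^m * q l m t * q l (m+1) t)),
    q_zero (Nat.lt_succ_self l)]
  have : kap l 0 = 1 := by
    unfold kap
    have : (l.factorial : ℝ) ≠ 0 := by positivity
    simp [this]
  rw [this]
  simp
  ring

lemma TT_eq (l : ℕ) (t : ℝ) : TT l t = 1 := by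
  have h1 : TT l t = TT l 1 :=
    is_const_of_deriv_eq_zero (fun t => (TT_deriv l t).differentiableAt)
      (fun t => (TT_deriv l t).deriv) t 1
  rw [h1]
  simp [TT, q_one]

/-- the normalization constant -/
def nrm (l m : ℕ) : ℝ := Real.sqrt ((2 * l + 1) * (l - m).factorial /
      (4 * Real.pi * (l + m).factorial))

lemma nrm_sq (l m : ℕ) : nrm l m ^ 2 = (2*l+1)/(4*π) * kap l m := by
  unfold nrm kap
  rw [Real.sq_sqrt (by positivity)]
  have : ((l+m).factorial : ℝ) ≠ 0 := by positivity
  field_simp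

lemma nrm_pos (l m : ℕ) : 0 < nrm l m := by
  unfold nrm; positivity

lemma sum_nrm_le (l : ℕ) (t : ℝ) :
    ∑ m ∈ Finset.Icc (-(l:ℤ)) l, nrm l m.natAbs ^ 2 * ((1-t^2)^m.natAbs * (q l m.natAbs t)^2)
      = (2*l+1)/(4*π) := by
  have key : ∀ (g : ℕ → ℝ) (l : ℕ), ∑ m ∈ Finset.Icc (-(l:ℤ)) l, g m.natAbs =
      g 0 + 2 * ∑ m ∈ Finset.range l, g (m+1) := by
    intro g l
    induction l with
    | zero => simp
    | succ l ih =>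
      have : Finset.Icc (-((l+1:ℕ):ℤ)) ((l+1:ℕ):ℤ) =
          insert (-((l+1:ℕ):ℤ)) (insert (((l+1:ℕ):ℤ)) (Finset.Icc (-(l:ℤ)) l)) := by
        ext x; simp only [Finset.mem_Icc, Finset.mem_insert]; push_cast; omega
      rw [this, Finset.sum_insert, Finset.sum_insert, ih, Finset.sum_range_succ]
      · simp only [Int.natAbs_neg, Int.natAbs_natCast]; ring
      · simp
      · simp only [Finset.mem_Icc, Finset.mem_insert]; push_cast; omega
  rw [key (fun M => nrm l M ^ 2 * ((1-t^2)^M * (q l M t)^2))]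
  have := TT_eq l t
  unfold TT at this
  have hk : kap l 0 = 1 := by
    unfold kap
    have : (l.factorial : ℝ) ≠ 0 := by positivity
    simp [this]
  simp only [nrm_sq, hk]
  have e : ∑ m ∈ Finset.range l, (2*l+1)/(4*π) * kap l (m+1) * ((1-t^2)^(m+1) * (q l (m+1) t)^2)
    = (2*l+1)/(4*π) * ∑ m ∈ Finset.range l, kap l (m+1) * ((1-t^2)^(m+1) * (q l (m+1) t)^2) := by
    rw [Finset.mul_sum]; congr 1; ext m; ring
  rw [e]
  simp only [pow_zero, one_mul, mul_one]
  linear_combination ((2*l+1)/(4*π)) * this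
end

/-! Part C -/
noncomputable section
open MeasureTheory Real Filter

/-- abbreviation for Euclidean three space -/
abbrev E3 := EuclideanSpace ℝ (Fin 3)

/-- the functional `v ↦ a v₀ + b v₁ + c v₂` -/
def DL (a b c : ℂ) : E3 →L[ℝ] ℂ :=
  (EuclideanSpace.proj (𝕜 := ℝ) (0 : Fin 3) : E3 →L[ℝ] ℝ).smulRight a +
  (EuclideanSpace.proj (𝕜 := ℝ) (1 : Fin 3) : E3 →L[ℝ] ℝ).smulRight b +
  (EuclideanSpace.proj (𝕜 := ℝ) (2 : Fin 3) : E3 →L[ℝ] ℝ).smulRight c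

lemma DL_apply (a b c : ℂ) (v : E3) : DL a b c v = v 0 * a + v 1 * b + v 2 * c := by
  simp [DL]

/-- inverse norm -/
def rho (x : E3) : ℝ := ‖x‖⁻¹

lemma inner_E3 (x v : E3) : inner ℝ x v = x 0 * v 0 + x 1 * v 1 + x 2 * v 2 := by
  simp [PiLp.inner_apply, Fin.sum_univ_three]
  ring

lemma norm_sq_E3 (x : E3) : ‖x‖^2 = x 0 ^2 + x 1 ^2 + x 2 ^ 2 := by
  rw [← real_inner_self_eq_norm_sq, inner_E3]; ring

lemma rho_sq {x : E3} (hx : x ≠ 0) : rho x ^ 2 * (x 0 ^2 + x 1 ^2 + x 2 ^ 2) = 1 := by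
  rw [← norm_sq_E3, rho]
  have : ‖x‖ ≠ 0 := norm_ne_zero_iff.2 hx
  field_simp

lemma rho_hasFDeriv {x : E3} (hx : x ≠ 0) :
    HasFDerivAt rho ((-(rho x)^3) • (innerSL ℝ x : E3 →L[ℝ] ℝ)) x := by
  have hn : ‖x‖ ≠ 0 := norm_ne_zero_iff.2 hx
  have h1 := (hasStrictFDerivAt_norm_sq x).hasFDerivAt
  have h2 := h1.sqrt (by positivity)
  have h3 := (hasDerivAt_inv (x := Real.sqrt (‖x‖^2)) (by positivity)).comp_hasFDerivAt x h2
  refine (h3.congr_of_eventuallyEq ?_).congr_fderiv ?_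
  · refine Filter.Eventually.of_forall fun y => ?_
    simp [rho]
  · ext v
    simp [rho]
    field_simp

/-- real radial/latitudinal factor -/
def gF (l M : ℕ) (x : E3) : ℝ := rho x ^ (l+M+1) * q l M (x 2 * rho x)

lemma coord_hasFDeriv (i : Fin 3) (x : E3) :
    HasFDerivAt (fun x : E3 => x i) (EuclideanSpace.proj (𝕜 := ℝ) i : E3 →L[ℝ] ℝ) x :=
  (EuclideanSpace.proj (𝕜 := ℝ) i : E3 →L[ℝ] ℝ).hasFDerivAt

lemma gF_hasFDeriv (l M : ℕ) {x : E3} (hx : x ≠ 0) :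
    ∃ L : E3 →L[ℝ] ℝ, HasFDerivAt (gF l M) L x ∧ ∀ v, L v =
      -(((l:ℝ)+M+1) * rho x ^(l+M+3) * inner ℝ x v) * q l M (x 2 * rho x) +
       rho x ^(l+M+1) * (q l (M+1) (x 2 * rho x) * (rho x * v 2 - x 2 * rho x ^3 * inner ℝ x v)) := by
  have h1 := HasFDerivAt.pow (rho_hasFDeriv hx) (l+M+1)
  have h2 := (coord_hasFDeriv 2 x).fun_mul (rho_hasFDeriv hx)
  have h3 := (q_hasDeriv l M (x 2 * rho x)).comp_hasFDerivAt x h2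
  refine ⟨_, h1.fun_mul h3, fun v => ?_⟩
  simp
  ring

/-- unnormalized exterior harmonics -/
def eF (σ : ℝ) (l M : ℕ) (x : E3) : ℂ := ((x 0:ℂ) + σ * Complex.I * x 1)^M * (gF l M x : ℂ)

/-- `∂₊` part of the derivative -/
def eP (σ : ℝ) (l M : ℕ) (x : E3) : ℂ := - eF σ (l+1) (M+1) x
/-- `∂₋` part -/
def eN (σ : ℝ) (l M : ℕ) (x : E3) : ℂ := match M with
  | 0 => -eF (-σ) (l+1) 1 x
  | M+1 => (((l:ℝ)-M)*((l:ℝ)-M+1) : ℝ) * eF σ (l+1) M x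
/-- `∂_z` part -/
def eZ (σ : ℝ) (l M : ℕ) (x : E3) : ℂ := (-((l:ℝ)-M+1) : ℝ) * eF σ (l+1) M x

lemma wF_hasFDeriv (σ : ℝ) (x : E3) :
    HasFDerivAt (fun x : E3 => ((x 0:ℂ) + σ * Complex.I * x 1)) (DL 1 (σ * Complex.I) 0) x := by
  have : (fun x : E3 => ((x 0:ℂ) + σ * Complex.I * x 1)) = DL 1 (σ * Complex.I) 0 := by
    ext x; rw [DL_apply]; ring
  rw [this]
  exact (DL 1 (σ * Complex.I) 0).hasFDerivAt

lemma eF_hasFDeriv (σ : ℝ) (hσ : σ^2 = 1) (l M : ℕ) {x : E3} (hx : x ≠ 0) :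
    HasFDerivAt (eF σ l M) (DL ((eP σ l M x + eN σ l M x)/2)
      (σ * Complex.I * (eN σ l M x - eP σ l M x)/2) (eZ σ l M x)) x := by
  obtain ⟨L, hL, hLv⟩ := gF_hasFDeriv l M hx
  have h1 := HasFDerivAt.pow (wF_hasFDeriv σ x) M
  have h2 := Complex.ofRealCLM.hasFDerivAt.comp x hL
  refine (h1.fun_mul h2).congr_fderiv ?_
  ext v
  rw [DL_apply]
  simp only [ContinuousLinearMap.add_apply, ContinuousLinearMap.smul_apply,
    ContinuousLinearMap.comp_apply, DL_apply, Complex.ofRealCLM_apply, hLv, inner_E3,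
    Function.comp_apply, smul_eq_mul]
  have hr := rho_sq hx
  have hσ' : (σ:ℂ)^2 = 1 := by exact_mod_cast hσ
  have hI : Complex.I^2 = -1 := Complex.I_sq
  set r := rho x with hrdef
  set t := x 2 * r with ht
  have hr' : (r:ℂ)^2 * ((x 0:ℂ)^2 + (x 1:ℂ)^2 + (x 2:ℂ)^2) = 1 := by exact_mod_cast hr
  have ht' : (t:ℂ) = x 2 * r := by rw [ht]; push_cast; ring
  have i1 : ((q (l+1) (M+1) t : ℝ):ℂ) = ((l:ℂ)+M+1) * (q l M t:ℝ) + t * (q l (M+1) t:ℝ) := by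
    exact_mod_cast q_I1 l M t
  rcases M with _ | M
  · have i4 : (t:ℂ) * (q (l+1) (0+1) t:ℝ) = (q l (0+1) t:ℝ) + ((l:ℂ)+1) * (q (l+1) 0 t:ℝ) := by
      have := q_I4 l 0 t
      push_cast at this; rw [sub_zero] at this
      exact_mod_cast this
    simp only [eP, eN, eZ, eF, gF, ← hrdef, ← ht]
    push_cast at i1 ⊢
    simp only [zero_add, add_zero, pow_zero, zero_mul, mul_zero, Nat.cast_zero, sub_zero] at *
    generalize ((q (l+1) 1 t : ℝ):ℂ) = a at *
    generalize ((q (l+1) 0 t : ℝ):ℂ) = b at *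
    generalize ((q l 1 t : ℝ):ℂ) = c at *
    generalize ((q l 0 t : ℝ):ℂ) = d at *
    simp only [pow_succ (r:ℂ)]
    generalize (r:ℂ)^l = R at *
    simp only [pow_zero, one_mul, pow_one]
    rw [ht'] at i1 i4
    generalize (x 0:ℂ) = X at *
    generalize (x 1:ℂ) = Y at *
    generalize (x 2:ℂ) = Z at *
    generalize (v 0:ℂ) = V0
    generalize (v 1:ℂ) = V1
    generalize (v 2:ℂ) = V2
    generalize (σ:ℂ) = s at *
    generalize (r:ℂ) = ρ at *
    generalize Complex.I = I at *
    linear_combination (R*ρ^3*(X*V0+Y*V1+Z*V2)) * i1 + (-(R * ρ^2 * V2)) * i4 + (-(R*ρ^3*Y*V1*a) * I^2) * hσ' + (-(R*ρ^3*Y*V1*a)) * hI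
  · have i4 : (t:ℂ) * (q (l+1) (M+1+1) t:ℝ) = (q l (M+1+1) t:ℝ) + ((l:ℂ)-M) * (q (l+1) (M+1) t:ℝ) := by
      have := q_I4 l (M+1) t
      push_cast at this; rw [add_sub_add_right_eq_sub] at this
      exact_mod_cast this
    have i4' : (t:ℂ) * (q (l+1) (M+1) t:ℝ) = (q l (M+1) t:ℝ) + ((l:ℂ)+1-M) * (q (l+1) M t:ℝ) := by
      exact_mod_cast q_I4 l M t
    have io : (1-(t:ℂ)^2) * (q (l+1) (M+1+1) t:ℝ) = 2*((M:ℂ)+1)*t*(q (l+1) (M+1) t:ℝ)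
        - ((l:ℂ)+1-M)*((l:ℂ)+1+M+1)*(q (l+1) M t:ℝ) := by
      exact_mod_cast q_ode (l+1) M t
    simp only [eP, eN, eZ, eF, gF, ← hrdef, ← ht]
    simp only [nsmul_eq_mul]
    push_cast at i1 ⊢
    generalize ((q (l+1) (M+1+1) t : ℝ):ℂ) = a at *
    generalize ((q (l+1) (M+1) t : ℝ):ℂ) = b at *
    generalize ((q (l+1) M t : ℝ):ℂ) = b' at *
    generalize ((q l (M+1+1) t : ℝ):ℂ) = c at *
    generalize ((q l (M+1) t : ℝ):ℂ) = d at *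
    rw [ht'] at i1 i4 i4' io
    generalize (x 0:ℂ) = X at *
    generalize (x 1:ℂ) = Y at *
    generalize (x 2:ℂ) = Z at *
    generalize (v 0:ℂ) = V0
    generalize (v 1:ℂ) = V1
    generalize (v 2:ℂ) = V2
    generalize (σ:ℂ) = s at *
    generalize (r:ℂ) = ρ at *
    generalize Complex.I = I at *
    generalize (l:ℂ) = L at *
    generalize (M:ℂ) = m at *
    have e : (X + s * I * Y)^(M+1-1) = (X + s * I * Y)^M := by simp
    simp only [e, pow_succ (X + s * I * Y)]
    have hsI : (s*I)^2 = -1 := by rw [mul_pow, hσ', hI]; ring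
    have e1 : ρ^(l+(M+1)+1) = ρ^(l+M)*ρ^2 := by ring
    have e2 : ρ^(l+(M+1)+3) = ρ^(l+M)*ρ^4 := by ring
    have e3 : ρ^(l+1+(M+1+1)+1) = ρ^(l+M)*ρ^4 := by ring
    have e4 : ρ^(l+1+M+1) = ρ^(l+M)*ρ^2 := by ring
    have e5 : ρ^(l+1+(M+1)+1) = ρ^(l+M)*ρ^3 := by ring
    simp only [e1,e2,e3,e4,e5]
    generalize ρ^(l+M) = R
    rw [show s * I * (((L - m) * (L - m + 1) * ((X + s * I * Y) ^ M * (R * ρ^2 * b')) - -((X + s * I * Y) ^ M * (X + s * I * Y) * (X + s * I * Y) * (R * ρ^4 * a)))) = s * I * (((L - m) * (L - m + 1) * ((X + s * I * Y) ^ M * (R * ρ^2 * b')) + ((X + s * I * Y) ^ M * (X + s * I * Y) * (X + s * I * Y) * (R * ρ^4 * a)))) by ring]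
    generalize (X + s * I * Y)^M = Wm
    generalize s * I = w at *
    linear_combination (Wm*R*(X+w*Y)*ρ^4*(X*V0+Y*V1+Z*V2)) * i1
      + (-(Wm*R*(X+w*Y)*ρ^3*V2)) * i4 + (-(Wm * R * ρ^2 * (V0+w*V1)*(m+1))) * i4'
      + (-(Wm*R*ρ^2*(V0+w*V1)/2)) * io
      + (-(Wm*R*ρ^2*(V0+w*V1)/2*a)) * hr'
      + (Wm*R*ρ^4*a*(-(X+w*Y)*Y*V1 + Y^2*(V0+w*V1)/2)) * hsI
end

/-! Part C2 -/
noncomputable section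
open MeasureTheory Real Filter

lemma kap_r1 (l M : ℕ) (h : M ≤ l) :
    kap l M = ((l:ℝ)+M+1)*((l:ℝ)+M+2) * kap (l+1) (M+1) := by
  unfold kap
  rw [show l+1-(M+1) = l-M by omega, show l+1+(M+1) = l+M+1+1 by omega, Nat.factorial_succ,
    Nat.factorial_succ]
  push_cast
  field_simp
  ring

lemma kap_r2 (l M : ℕ) (h : M + 1 ≤ l) :
    kap l (M+1) * (((l:ℝ)-M)*((l:ℝ)-M+1)) = kap (l+1) M := by
  obtain ⟨k, rfl⟩ : ∃ k, l = M + 1 + k := ⟨l - (M+1), by omega⟩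
  unfold kap
  rw [show M+1+k-(M+1) = k by omega, show M+1+k+1-M = k+1+1 by omega,
    show M+1+k+1+M = M+1+k+(M+1) by omega, Nat.factorial_succ, Nat.factorial_succ]
  push_cast
  field_simp
  ring

lemma kap_r3 (l M : ℕ) (h : M ≤ l) :
    kap l M * ((l:ℝ)-M+1) = ((l:ℝ)+1+M) * kap (l+1) M := by
  obtain ⟨k, rfl⟩ : ∃ k, l = M + k := ⟨l - M, by omega⟩
  unfold kap
  rw [show M+k-M = k by omega, show M+k+1-M = k+1 by omega,
    show M+k+1+M = M+k+M+1 by omega, Nat.factorial_succ, Nat.factorial_succ]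
  push_cast
  field_simp
  ring

lemma nrm_r1 (l M : ℕ) (h : M ≤ l) :
    nrm l M = √((2*l+1)/(2*l+3)*(((l:ℝ)+M+1)*((l:ℝ)+M+2))) * nrm (l+1) (M+1) := by
  rw [← sq_eq_sq₀ (nrm_pos _ _).le (mul_nonneg (Real.sqrt_nonneg _) (nrm_pos _ _).le), mul_pow,
    Real.sq_sqrt (by positivity), nrm_sq, nrm_sq, kap_r1 l M h]
  push_cast
  field_simp
  ring

lemma nrm_r2 (l M : ℕ) (h : M + 1 ≤ l) :
    nrm l (M+1) * (((l:ℝ)-M)*((l:ℝ)-M+1)) =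
      √((2*l+1)/(2*l+3)*(((l:ℝ)-M)*((l:ℝ)-M+1))) * nrm (l+1) M := by
  have h0 : (0:ℝ) ≤ (l:ℝ) - M := by
    have : (M:ℝ)+1 ≤ l := by exact_mod_cast h
    linarith
  rw [← sq_eq_sq₀ (mul_nonneg (nrm_pos _ _).le (by positivity))
    (mul_nonneg (Real.sqrt_nonneg _) (nrm_pos _ _).le), mul_pow, mul_pow (√ _),
    Real.sq_sqrt (by positivity), nrm_sq, nrm_sq, ← kap_r2 l M h]
  push_cast
  field_simp
  ring

lemma nrm_r3 (l M : ℕ) (h : M ≤ l) :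
    nrm l M * ((l:ℝ)-M+1) =
      √((2*l+1)/(2*l+3)*(((l:ℝ)+1-M)*((l:ℝ)+1+M))) * nrm (l+1) M := by
  have h0 : (0:ℝ) ≤ (l:ℝ) - M := by
    have : (M:ℝ) ≤ l := by exact_mod_cast h
    linarith
  have h1 : (0:ℝ) ≤ (l:ℝ) + 1 - M := by linarith
  rw [← sq_eq_sq₀ (mul_nonneg (nrm_pos _ _).le (by positivity))
    (mul_nonneg (Real.sqrt_nonneg _) (nrm_pos _ _).le), mul_pow, mul_pow (√ _),
    Real.sq_sqrt (by positivity), nrm_sq, nrm_sq]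
  have := kap_r3 l M h
  push_cast
  field_simp
  linear_combination (2*(l:ℝ)+3) * ((l:ℝ)-M+1) * this

/-- sign of the order -/
def sg (m : ℤ) : ℝ := if 0 ≤ m then 1 else -1
/-- sign constant -/
def ep (m : ℤ) : ℝ := if 0 ≤ m then 1 else (-1)^m.natAbs

lemma sg_sq (m : ℤ) : sg m ^ 2 = 1 := by unfold sg; split_ifs <;> norm_num
lemma ep_sq (m : ℤ) : ep m ^ 2 = 1 := by
  unfold ep; split_ifs
  · norm_num
  · rw [← pow_mul, mul_comm, pow_mul]; norm_num

lemma alphaY_eq (l : ℕ) (m : ℤ) : alphaY l m * (-1)^m.natAbs = ep m * nrm l m.natAbs := by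
  unfold alphaY ep nrm
  split_ifs with h
  · lift m to ℕ using h
    have : ((m:ℤ) + |(m:ℤ)|)/2 = m := by rw [abs_of_nonneg (by positivity)]; omega
    rw [this]
    simp only [zpow_natCast, Int.natAbs_natCast]
    have h1 : ((-1:ℝ)^m)*(-1)^m = 1 := by rw [← pow_add, ← two_mul, pow_mul]; norm_num
    linear_combination (√((2 * l + 1) * (l - m).factorial / (4 * Real.pi * (l + m).factorial))) * h1
  · have : (m + |m|)/2 = 0 := by rw [abs_of_neg (by omega)]; simp
    rw [this]; simp [mul_comm]

/-- normalized exterior solid harmonics -/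
def EE (l : ℕ) (m : ℤ) (x : E3) : ℂ :=
  ((ep m * nrm l m.natAbs : ℝ) : ℂ) * eF (sg m) l m.natAbs x

/-- ladder coefficients -/
def Ap (l : ℕ) (m : ℤ) : ℝ := -√((2*l+1)/(2*l+3)*(((l:ℝ)+m+1)*((l:ℝ)+m+2)))
/-- ladder coefficients -/
def An (l : ℕ) (m : ℤ) : ℝ := √((2*l+1)/(2*l+3)*(((l:ℝ)-m+1)*((l:ℝ)-m+2)))
/-- ladder coefficients -/
def Az (l : ℕ) (m : ℤ) : ℝ := -√((2*l+1)/(2*l+3)*(((l:ℝ)+1-m)*((l:ℝ)+1+m)))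

lemma EE_hasFDeriv (l : ℕ) (m : ℤ) (hm : m.natAbs ≤ l) {x : E3} (hx : x ≠ 0) :
    HasFDerivAt (EE l m) (DL ((Ap l m * EE (l+1) (m+1) x + An l m * EE (l+1) (m-1) x)/2)
      (Complex.I * (An l m * EE (l+1) (m-1) x - Ap l m * EE (l+1) (m+1) x)/2)
      (Az l m * EE (l+1) m x)) x := by
  have h := (eF_hasFDeriv (sg m) (sg_sq m) l m.natAbs hx).const_mul
    ((ep m * nrm l m.natAbs : ℝ) : ℂ)
  refine h.congr_fderiv ?_
  have main : ∀ p n z P N Z: ℂ, ((sg m = 1 ∧ P = p ∧ N = n) ∨ (sg m = -1 ∧ P = n ∧ N = p)) → Z = z →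
      DL ((p+n)/2) (sg m * Complex.I * (n-p)/2) z = DL ((P+N)/2) (Complex.I * (N-P)/2) Z := by
    rintro p n z P N Z (⟨h1, rfl, rfl⟩ | ⟨h1, rfl, rfl⟩) rfl <;> rw [h1] <;> ext v <;>
      simp only [DL_apply] <;> push_cast <;> ring
  have smul : ∀ k a b c : ℂ, k • DL a b c = DL (k*a) (k*b) (k*c) := by
    intro k a b c; ext v; simp [DL_apply]; ring
  rw [smul]
  set k : ℂ := ((ep m * nrm l m.natAbs : ℝ) : ℂ) with hk
  rw [show k * ((eP (sg m) l m.natAbs x + eN (sg m) l m.natAbs x)/2) =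
      (k * eP (sg m) l m.natAbs x + k * eN (sg m) l m.natAbs x)/2 by ring,
    show k * (sg m * Complex.I * (eN (sg m) l m.natAbs x - eP (sg m) l m.natAbs x)/2) =
      (sg m * Complex.I * (k * eN (sg m) l m.natAbs x - k * eP (sg m) l m.natAbs x)/2) by ring]
  apply main
  · rcases lt_or_ge m 0 with h0 | h0
    · right
      obtain ⟨M, rfl⟩ : ∃ M : ℕ, m = -(M+1:ℕ) := ⟨m.natAbs - 1, by omega⟩
      have e1 : (-((M+1:ℕ):ℤ)).natAbs = M+1 := by omega
      have e2 : (-((M+1:ℕ):ℤ)+1).natAbs = M := by omega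
      have e3 : (-((M+1:ℕ):ℤ)-1).natAbs = M+2 := by omega
      have s1 : sg (-((M+1:ℕ):ℤ)) = -1 := by rw [sg, if_neg]; omega
      rw [e1] at hm
      have r1 := nrm_r1 l (M+1) hm
      have r2 := nrm_r2 l M hm
      refine ⟨s1, ?_, ?_⟩
      · have hA : Ap l (-((M+1:ℕ):ℤ)) = -√((2*l+1)/(2*l+3)*(((l:ℝ)-M)*((l:ℝ)-M+1))) := by
          unfold Ap; push_cast; congr 3; ring
        have hE : EE (l+1) (-((M+1:ℕ):ℤ)+1) x = ((-1)^M * nrm (l+1) M : ℝ) * eF (-1) (l+1) M x := by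
          unfold EE; rw [e2]
          rcases M with _ | M
          · simp [ep, eF]
          · have : ¬ (0 ≤ (-((M+1+1:ℕ):ℤ)+1)) := by omega
            rw [ep, sg, if_neg this, if_neg this, e2]
        rw [hA, hE, hk, e1, s1]
        simp only [eN]
        have : ep (-((M+1:ℕ):ℤ)) = -(-1)^M := by
          rw [ep, if_neg (by omega), e1, pow_succ]; ring
        rw [this]
        have r2' : ((nrm l (M+1) * (((l:ℝ)-M)*((l:ℝ)-M+1)) : ℝ):ℂ) =
          ((√((2*l+1)/(2*l+3)*(((l:ℝ)-M)*((l:ℝ)-M+1))) * nrm (l+1) M : ℝ) : ℂ) := by rw [r2]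
        rw [Complex.ofReal_mul, Complex.ofReal_mul (√ _)] at r2'
        rw [Complex.ofReal_neg, Complex.ofReal_mul, Complex.ofReal_mul]
        rw [Complex.ofReal_neg]
        linear_combination (-((-1:ℝ)^M : ℝ) * eF (-1) (l+1) M x) * (-r2')
      · have hA : An l (-((M+1:ℕ):ℤ)) = √((2*l+1)/(2*l+3)*(((l:ℝ)+(M+1:ℕ)+1)*((l:ℝ)+(M+1:ℕ)+2))) := by
          unfold An; push_cast; congr 2; ring
        have hE : EE (l+1) (-((M+1:ℕ):ℤ)-1) x = ((-1)^M * nrm (l+1) (M+2) : ℝ) * eF (-1) (l+1) (M+2) x := by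
          unfold EE; rw [e3]
          have : ¬ (0 ≤ (-((M+1:ℕ):ℤ)-1)) := by omega
          rw [ep, sg, if_neg this, if_neg this, e3]
          rw [pow_add]; norm_num
        rw [hA, hE, hk, e1, s1]
        simp only [eP]
        have : ep (-((M+1:ℕ):ℤ)) = -(-1)^M := by
          rw [ep, if_neg (by omega), e1, pow_succ]; ring
        rw [this, r1]
        push_cast
        ring
    · left
      lift m to ℕ using h0
      have s1 : sg (m:ℤ) = 1 := by rw [sg, if_pos]; omega
      have p1 : ep (m:ℤ) = 1 := by rw [ep, if_pos]; omega
      rw [Int.natAbs_natCast] at *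
      refine ⟨s1, ?_, ?_⟩
      · have hE : EE (l+1) ((m:ℤ)+1) x = (nrm (l+1) (m+1) : ℝ) * eF (1) (l+1) (m+1) x := by
          unfold EE; rw [show ((m:ℤ)+1).natAbs = m+1 by omega]
          have : (0 ≤ ((m:ℤ)+1)) := by omega
          rw [ep, sg, if_pos this, if_pos this, one_mul]
        rw [hE, hk, s1, p1, nrm_r1 l m hm]
        simp only [eP, Ap]
        push_cast
        ring
      · rcases m with _ | m
        · have hE : EE (l+1) (((0:ℕ):ℤ)-1) x = (-nrm (l+1) 1 : ℝ) * eF (-1) (l+1) 1 x := by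
            unfold EE; rw [show (((0:ℕ):ℤ)-1).natAbs = 1 by omega]
            have : ¬ (0 ≤ (((0:ℕ):ℤ)-1)) := by omega
            rw [ep, sg, if_neg this, if_neg this]
            norm_num
          rw [hE, hk, s1, p1, nrm_r1 l 0 (by omega)]
          simp only [eN, An]
          push_cast
          simp
          ring
        · have hE : EE (l+1) (((m+1:ℕ):ℤ)-1) x = (nrm (l+1) m : ℝ) * eF (1) (l+1) m x := by
            unfold EE; rw [show (((m+1:ℕ):ℤ)-1).natAbs = m by omega]
            have : (0 ≤ (((m+1:ℕ):ℤ)-1)) := by omega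
            rw [ep, sg, if_pos this, if_pos this, one_mul]
          have hA : An l ((m+1:ℕ):ℤ) = √((2*l+1)/(2*l+3)*(((l:ℝ)-m)*((l:ℝ)-m+1))) := by
            unfold An; push_cast; congr 2; ring
          have r2 := nrm_r2 l m hm
          have r2' : ((nrm l (m+1) * (((l:ℝ)-m)*((l:ℝ)-m+1)) : ℝ):ℂ) =
            ((√((2*l+1)/(2*l+3)*(((l:ℝ)-m)*((l:ℝ)-m+1))) * nrm (l+1) m : ℝ) : ℂ) := by rw [r2]
          rw [Complex.ofReal_mul, Complex.ofReal_mul (√ _)] at r2'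
          rw [hE, hk, s1, p1, hA, one_mul]
          simp only [eN]
          linear_combination (-eF 1 (l+1) m x) * r2'
  · have r3 := nrm_r3 l m.natAbs hm
    have hA : Az l m = - √((2*l+1)/(2*l+3)*(((l:ℝ)+1-m.natAbs)*((l:ℝ)+1+m.natAbs))) := by
      unfold Az
      congr 3
      have : ((m.natAbs:ℝ))^2 = (m:ℝ)^2 := by
        rw [Nat.cast_natAbs]; push_cast; exact sq_abs _
      linear_combination this
    have r3' : ((nrm l m.natAbs * (((l:ℝ)-m.natAbs+1)) : ℝ):ℂ) =
      ((√((2*l+1)/(2*l+3)*(((l:ℝ)+1-m.natAbs)*((l:ℝ)+1+m.natAbs))) * nrm (l+1) m.natAbs : ℝ) : ℂ) := by rw [r3]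
    rw [Complex.ofReal_mul, Complex.ofReal_mul (√ _)] at r3'
    rw [hk, hA]
    unfold eZ EE
    rw [Complex.ofReal_mul, Complex.ofReal_mul (ep m), Complex.ofReal_neg, Complex.ofReal_neg]
    linear_combination (ep m * eF (sg m) (l+1) m.natAbs x) * r3'
end

/-! Part C3 -/
noncomputable section
open MeasureTheory Real Filter
lemma EE_zero (l : ℕ) (m : ℤ) (h : l < m.natAbs) (x : E3) : EE l m x = 0 := by
  simp [EE, eF, gF, q_zero h]

lemma pow_polar (m : ℤ) (c φ : ℝ) :
    ((c * Real.cos φ : ℝ) + (sg m) * Complex.I * ((c * Real.sin φ : ℝ):ℂ))^m.natAbs =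
      (c:ℂ)^m.natAbs * Complex.exp (Complex.I * m * φ) := by
  have h1 : ((c * Real.cos φ : ℝ) + (sg m) * Complex.I * ((c * Real.sin φ : ℝ):ℂ)) =
      c * Complex.exp (Complex.I * (sg m * φ)) := by
    rw [mul_comm Complex.I, Complex.exp_mul_I]
    unfold sg
    split_ifs <;> push_cast <;> simp <;> ring
  rw [h1, mul_pow, ← Complex.exp_nat_mul]
  congr 2
  have : ((m.natAbs : ℕ):ℂ) * (sg m : ℂ) = m := by
    unfold sg
    split_ifs with h
    · lift m to ℕ using h; simp
    · obtain ⟨M, rfl⟩ : ∃ M : ℕ, m = -(M:ℕ) := ⟨m.natAbs, by omega⟩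
      simp
  linear_combination (Complex.I * φ) * this

lemma EE_polar (l : ℕ) (m : ℤ) (x : E3) (r c s φ : ℝ) (hr : 0 < r) (hn : ‖x‖ = r)
    (h0 : x 0 = r * (c * Real.cos φ)) (h1 : x 1 = r * (c * Real.sin φ)) (h2 : x 2 = r * s) :
    EE l m x = (((r⁻¹)^(l+1) : ℝ):ℂ) * ((alphaY l m * ((-1)^m.natAbs * c^m.natAbs * q l m.natAbs s) : ℝ) : ℂ)
      * Complex.exp (Complex.I * m * φ) := by
  have ha := alphaY_eq l m
  have hp := pow_polar m c φ
  have hw : ((x 0:ℂ) + sg m * Complex.I * x 1) = r * ((c * Real.cos φ : ℝ) + (sg m) * Complex.I * ((c * Real.sin φ : ℝ):ℂ)) := by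
    rw [h0, h1]; push_cast; ring
  have hs : x 2 * rho x = s := by
    rw [rho, hn, h2]; field_simp
  rw [EE, eF, gF, hw, mul_pow, hp, hs, rho, hn, ← ha]
  have hr' : (r:ℂ) ≠ 0 := by exact_mod_cast hr.ne'
  have e : (r:ℂ)^m.natAbs * ((r:ℂ)⁻¹)^m.natAbs = 1 := by
    rw [← mul_pow, mul_inv_cancel₀ hr', one_pow]
  push_cast
  rw [show l + m.natAbs + 1 = m.natAbs + (l+1) by ring, pow_add]
  linear_combination (alphaY l m * (-1)^m.natAbs * c^m.natAbs * Complex.exp (Complex.I * m * φ) * ((r:ℂ)⁻¹)^(l+1) * q l m.natAbs s) * e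

lemma sphCoord_norm (θ φ : ℝ) : ‖sphCoord θ φ‖ = 1 := by
  have := norm_sq_E3 (sphCoord θ φ)
  have h2 : ‖sphCoord θ φ‖^2 = 1 := by
    rw [this]; simp [sphCoord]
    linear_combination Real.sin_sq_add_cos_sq θ + (Real.cos θ)^2 * Real.sin_sq_add_cos_sq φ
  exact (pow_eq_one_iff_of_nonneg (norm_nonneg _) two_ne_zero).1 h2

lemma EE_sphCoord (l : ℕ) (m : ℤ) (θ φ : ℝ) (hc : 0 ≤ Real.cos θ) :
    EE l m (sphCoord θ φ) = Ylm l m θ φ := by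
  rw [EE_polar l m (sphCoord θ φ) 1 (Real.cos θ) (Real.sin θ) φ one_pos (sphCoord_norm _ _)
    (by simp [sphCoord]) (by simp [sphCoord]) (by simp [sphCoord]), Ylm, assocLegendre]
  have : (1 - Real.sin θ^2)^((m.natAbs:ℝ)/2) = Real.cos θ ^ m.natAbs := by
    rw [← Real.cos_sq', ← Real.rpow_natCast, ← Real.rpow_natCast, ← Real.rpow_mul hc]
    congr 1; push_cast; ring
  rw [this]
  simp [q, QP]

lemma EE_norm_sq (l : ℕ) (m : ℤ) {x : E3} (hx : x ≠ 0) :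
    ‖EE l m x‖^2 = rho x^(2*l+2) * (nrm l m.natAbs ^ 2 *
      ((1-(x 2 * rho x)^2)^m.natAbs * (q l m.natAbs (x 2 * rho x))^2)) := by
  have hr := rho_sq hx
  have hw : ‖((x 0:ℂ) + sg m * Complex.I * x 1)‖^2 = x 0^2 + x 1^2 := by
    rw [← Complex.normSq_eq_norm_sq]
    have hsg := sg_sq m
    simp [Complex.normSq_apply]
    linear_combination (x 1^2) * hsg
  rw [EE, eF, gF, norm_mul, norm_mul, norm_pow, mul_pow, mul_pow, ← pow_mul, mul_comm m.natAbs 2, pow_mul, hw, Complex.norm_real, Complex.norm_real]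
  rw [Real.norm_eq_abs, sq_abs, Real.norm_eq_abs, sq_abs, mul_pow, mul_pow, ep_sq]
  have : 1 - (x 2 * rho x)^2 = rho x^2 * (x 0^2+x 1^2) := by linear_combination -hr
  rw [this, mul_pow]
  ring

lemma EE_sum (l : ℕ) {x : E3} (hx : x ≠ 0) :
    ∑ m ∈ Finset.Icc (-(l:ℤ)) l, ‖EE l m x‖^2 = rho x^(2*l+2) * ((2*l+1)/(4*π)) := by
  rw [← sum_nrm_le l (x 2 * rho x), Finset.mul_sum]
  exact Finset.sum_congr rfl fun m _ => EE_norm_sq l m hx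

lemma EE_vterm (l : ℕ) (m : ℤ) {x : E3} (hx : x ≠ 0) :
    ((‖x‖ : ℂ) ^ (-(l : ℤ) - 1)) * Ylm l m (latitude x) (longitude x) = EE l m x := by
  have hn : 0 < ‖x‖ := norm_pos_iff.2 hx
  have hn2 := norm_sq_E3 x
  set w : ℂ := (x 0 : ℂ) + (x 1 : ℂ) * Complex.I with hw
  have hw2 : ‖w‖^2 = x 0^2 + x 1^2 := by
    rw [← Complex.normSq_eq_norm_sq]; simp [hw, Complex.normSq_apply]; ring
  have hwre : ‖w‖ * Real.cos w.arg = x 0 := by rw [Complex.norm_mul_cos_arg]; simp [hw]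
  have hwim : ‖w‖ * Real.sin w.arg = x 1 := by rw [Complex.norm_mul_sin_arg]; simp [hw]
  have hle : |x 2 / ‖x‖| ≤ 1 := by
    rw [abs_div, abs_norm, div_le_one hn]
    exact abs_le_of_sq_le_sq (by nlinarith [sq_nonneg (x 0), sq_nonneg (x 1)]) hn.le
  have hsin : Real.sin (latitude x) = x 2 / ‖x‖ :=
    Real.sin_arcsin (abs_le.1 hle).1 (abs_le.1 hle).2
  have hcos : Real.cos (latitude x) = ‖w‖ / ‖x‖ := by
    rw [latitude, Real.cos_arcsin, ← Real.sqrt_sq (div_nonneg (norm_nonneg w) hn.le)]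
    congr 1
    rw [div_pow, div_pow, hw2, hn2]
    have : x 0 ^2 + x 1^2 + x 2^2 ≠ 0 := by rw [← hn2]; positivity
    field_simp; ring
  have hc : 0 ≤ Real.cos (latitude x) := by rw [hcos]; positivity
  rw [EE_polar l m x ‖x‖ (Real.cos (latitude x)) (Real.sin (latitude x)) (longitude x) hn rfl
    (by rw [hcos, longitude, ← hw, ← hwre]; field_simp) (by rw [hcos, longitude, ← hw, ← hwim]; field_simp)
    (by rw [hsin]; field_simp), mul_assoc]
  congr 1
  · rw [show (-(l:ℤ)-1) = -((l+1:ℕ):ℤ) by push_cast; ring, zpow_neg, zpow_natCast]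
    push_cast; rw [inv_pow]
  · rw [← EE_sphCoord _ _ _ _ hc, EE_polar l m (sphCoord (latitude x) (longitude x)) 1 (Real.cos (latitude x)) (Real.sin (latitude x)) (longitude x) one_pos (sphCoord_norm _ _)
      (by simp [sphCoord]) (by simp [sphCoord]) (by simp [sphCoord])]
    simp
end

/-! Part D -/
noncomputable section
open MeasureTheory Real Filter

/-- degree `l` block of a series of exterior harmonics -/
def BB (w : ℕ → ℤ → ℂ) (l : ℕ) (x : E3) : ℂ := ∑ m ∈ Finset.Icc (-(l:ℤ)) l, w l m * EE l m x
/-- l2 norm of a block of coefficients -/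
def nn (w : ℕ → ℤ → ℂ) (l : ℕ) : ℝ := √(∑ m ∈ Finset.Icc (-(l:ℤ)) l, ‖w l m‖^2)
/-- the series -/
def SS (w : ℕ → ℤ → ℂ) (x : E3) : ℂ := ∑' l : ℕ, BB w l x

lemma nn_nonneg (w : ℕ → ℤ → ℂ) (l : ℕ) : 0 ≤ nn w l := Real.sqrt_nonneg _

lemma mem_Icc_abs (l : ℕ) (m : ℤ) : m ∈ Finset.Icc (-(l:ℤ)) l ↔ m.natAbs ≤ l := by
  rw [Finset.mem_Icc]; omega

lemma rho_nonneg (x : E3) : 0 ≤ rho x := by unfold rho; positivity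

lemma BB_abs_bound (w : ℕ → ℤ → ℂ) (l : ℕ) {x : E3} (hx : x ≠ 0) :
    ∑ m ∈ Finset.Icc (-(l:ℤ)) l, ‖w l m * EE l m x‖ ≤ nn w l * √((l:ℝ)+1) * rho x^(l+1) := by
  have h1 := Real.sum_mul_le_sqrt_mul_sqrt (Finset.Icc (-(l:ℤ)) l) (fun m => ‖w l m‖) (fun m => ‖EE l m x‖)
  simp only [norm_mul]
  refine h1.trans ?_
  rw [EE_sum l hx, mul_assoc]
  refine mul_le_mul_of_nonneg_left ?_ (Real.sqrt_nonneg _)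
  have hr := rho_nonneg x
  rw [Real.sqrt_le_left (by positivity), mul_pow, Real.sq_sqrt (by positivity), mul_comm, ← pow_mul,
    show (l+1)*2 = 2*l+2 by ring]
  refine mul_le_mul_of_nonneg_right ?_ (by positivity)
  rw [div_le_iff₀ (by positivity)]
  nlinarith [Real.pi_gt_three]

lemma BB_bound (w : ℕ → ℤ → ℂ) (l : ℕ) {x : E3} (hx : x ≠ 0) :
    ‖BB w l x‖ ≤ nn w l * √((l:ℝ)+1) * rho x^(l+1) :=
  (norm_sum_le _ _).trans (BB_abs_bound w l hx)

/-- shift operator on coefficients -/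
def Sh (δ : ℤ) (A : ℕ → ℤ → ℝ) (w : ℕ → ℤ → ℂ) : ℕ → ℤ → ℂ
  | 0, _ => 0
  | l+1, m => if (m-δ).natAbs ≤ l then (A l (m-δ) : ℂ) * w l (m-δ) else 0

lemma Sh_sum {R : Type*} [AddCommMonoid R] (δ : ℤ) (hδ : δ.natAbs ≤ 1) (l : ℕ) (g h : ℤ → R)
    (hg : ∀ m, m.natAbs ≤ l → g (m+δ) = h m) (hg0 : ∀ m, ¬ (m-δ).natAbs ≤ l → g m = 0) :
    ∑ m ∈ Finset.Icc (-((l+1:ℕ):ℤ)) (l+1:ℕ), g m = ∑ m ∈ Finset.Icc (-(l:ℤ)) l, h m := by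
  symm
  refine Finset.sum_bij_ne_zero (fun m _ _ => m + δ) ?_ ?_ ?_ ?_
  · intro m hm _; rw [mem_Icc_abs] at *; omega
  · intro a _ _ b _ _ h; simpa using h
  · intro m hm h0
    have : (m-δ).natAbs ≤ l := by by_contra hc; exact h0 (hg0 m hc)
    refine ⟨m-δ, (mem_Icc_abs _ _).2 this, ?_, by ring⟩
    rw [← hg _ this]; simpa using h0
  · intro m hm _
    exact (hg m ((mem_Icc_abs _ _).1 hm)).symm

lemma BB_Sh (δ : ℤ) (hδ : δ.natAbs ≤ 1) (A : ℕ → ℤ → ℝ) (w : ℕ → ℤ → ℂ) (l : ℕ) (x : E3) :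
    BB (Sh δ A w) (l+1) x = ∑ m ∈ Finset.Icc (-(l:ℤ)) l, w l m * (A l m * EE (l+1) (m+δ) x) := by
  unfold BB
  refine Sh_sum δ hδ l _ _ ?_ ?_
  · intro m hm; simp only [Sh, add_sub_cancel_right, if_pos hm]; ring
  · intro m hm; simp only [Sh, if_neg hm, zero_mul]

lemma BB_Sh_zero (δ : ℤ) (A : ℕ → ℤ → ℝ) (w : ℕ → ℤ → ℂ) (x : E3) :
    BB (Sh δ A w) 0 x = 0 := by simp [BB, Sh]

lemma nn_Sh_zero (δ : ℤ) (A : ℕ → ℤ → ℝ) (w : ℕ → ℤ → ℂ) :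
    nn (Sh δ A w) 0 = 0 := by simp [nn, Sh]

lemma nn_Sh (δ : ℤ) (hδ : δ.natAbs ≤ 1) (A : ℕ → ℤ → ℝ) (l : ℕ)
    (hA : ∀ m, m.natAbs ≤ l → |A l m| ≤ 2*((l:ℝ)+1)) (w : ℕ → ℤ → ℂ) :
    nn (Sh δ A w) (l+1) ≤ 2*((l:ℝ)+1) * nn w l := by
  unfold nn
  rw [Sh_sum δ hδ l _ (fun m => |A l m|^2 * ‖w l m‖^2), Real.sqrt_le_left, mul_pow, Real.sq_sqrt, Finset.mul_sum]
  · refine Finset.sum_le_sum fun m hm => ?_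
    have := hA m ((mem_Icc_abs _ _).1 hm)
    gcongr
  · positivity
  · positivity
  · intro m hm; simp only [Sh, add_sub_cancel_right, if_pos hm]
    rw [norm_mul, mul_pow, Complex.norm_real, Real.norm_eq_abs]
  · intro m hm; simp [Sh, if_neg hm]

lemma abs_sqrt_bound (l : ℕ) (a : ℝ) (h : a ≤ 4*((l:ℝ)+1)^2) :
   √((2*l+1)/(2*l+3)*a) ≤ 2 * ((l:ℝ)+1) := by
  rw [Real.sqrt_le_left (by positivity)]
  have h1 : (2*(l:ℝ)+1)/(2*l+3) ≤ 1 := by rw [div_le_one (by positivity)]; linarith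
  have h0 : 0 ≤ (2*(l:ℝ)+1)/(2*l+3) := by positivity
  nlinarith [sq_nonneg ((l:ℝ)+1)]

lemma cast_bd {l : ℕ} {m : ℤ} (hm : m.natAbs ≤ l) : -(l:ℝ) ≤ m ∧ (m:ℝ) ≤ l := by
  constructor
  · have : -(l:ℤ) ≤ m := by omega
    exact_mod_cast this
  · have : m ≤ (l:ℤ) := by omega
    exact_mod_cast this

lemma Ap_bd (l : ℕ) (m : ℤ) (hm : m.natAbs ≤ l) : |Ap l m| ≤ 2*((l:ℝ)+1) := by
  obtain ⟨h1, h2⟩ := cast_bd hm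
  rw [Ap, abs_neg, abs_of_nonneg (Real.sqrt_nonneg _)]
  exact abs_sqrt_bound _ _ (by nlinarith)
lemma An_bd (l : ℕ) (m : ℤ) (hm : m.natAbs ≤ l) : |An l m| ≤ 2*((l:ℝ)+1) := by
  obtain ⟨h1, h2⟩ := cast_bd hm
  rw [An, abs_of_nonneg (Real.sqrt_nonneg _)]
  exact abs_sqrt_bound _ _ (by nlinarith)
lemma Az_bd (l : ℕ) (m : ℤ) (hm : m.natAbs ≤ l) : |Az l m| ≤ 2*((l:ℝ)+1) := by
  obtain ⟨h1, h2⟩ := cast_bd hm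
  rw [Az, abs_neg, abs_of_nonneg (Real.sqrt_nonneg _)]
  exact abs_sqrt_bound _ _ (by nlinarith)

/-- coefficients of `∂₊` -/
def Dp (w : ℕ → ℤ → ℂ) := Sh 1 Ap w
/-- coefficients of `∂₋` -/
def Dn (w : ℕ → ℤ → ℂ) := Sh (-1) An w
/-- coefficients of `∂_z` -/
def Dz (w : ℕ → ℤ → ℂ) := Sh 0 Az w

lemma DL_sum {ι : Type*} (s : Finset ι) (a b c : ι → ℂ) :
    ∑ i ∈ s, DL (a i) (b i) (c i) = DL (∑ i ∈ s, a i) (∑ i ∈ s, b i) (∑ i ∈ s, c i) := by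
  ext v
  simp only [DL_apply, ContinuousLinearMap.sum_apply, Finset.sum_add_distrib, Finset.mul_sum]

lemma DL_smul (k a b c : ℂ) : k • DL a b c = DL (k*a) (k*b) (k*c) := by
  ext v; simp [DL_apply]; ring

/-- derivative block -/
def dB (w : ℕ → ℤ → ℂ) (l : ℕ) (x : E3) : E3 →L[ℝ] ℂ :=
  DL ((BB (Dp w) (l+1) x + BB (Dn w) (l+1) x)/2)
      (Complex.I * (BB (Dn w) (l+1) x - BB (Dp w) (l+1) x)/2) (BB (Dz w) (l+1) x)

lemma BB_hasFDeriv (w : ℕ → ℤ → ℂ) (l : ℕ) {x : E3} (hx : x ≠ 0) :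
    HasFDerivAt (BB w l) (dB w l x) x := by
  have h := HasFDerivAt.fun_sum (u := Finset.Icc (-(l:ℤ)) l) (fun m hm =>
    (EE_hasFDeriv l m ((mem_Icc_abs _ _).1 hm) hx).const_mul (w l m))
  refine h.congr_fderiv ?_
  simp only [DL_smul, DL_sum, dB, Dp, Dn, Dz]
  rw [BB_Sh _ (by decide), BB_Sh _ (by decide), BB_Sh _ (by decide), ← Finset.sum_add_distrib, ← Finset.sum_sub_distrib,
    Finset.mul_sum, Finset.sum_div, Finset.sum_div]
  simp only [add_zero, ← sub_eq_add_neg]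
  congr 1 <;> exact Finset.sum_congr rfl fun m _ => by ring

lemma DL_norm (a b c : ℂ) : ‖DL a b c‖ ≤ ‖a‖ + ‖b‖ + ‖c‖ := by
  refine ContinuousLinearMap.opNorm_le_bound _ (by positivity) fun v => ?_
  rw [DL_apply]
  have h0 := PiLp.norm_apply_le v 0
  have h1 := PiLp.norm_apply_le v 1
  have h2 := PiLp.norm_apply_le v 2
  refine (norm_add₃_le).trans ?_
  rw [norm_mul, norm_mul, norm_mul, Complex.norm_real, Complex.norm_real, Complex.norm_real]
  nlinarith [norm_nonneg a, norm_nonneg b, norm_nonneg c]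

lemma dB_bound (w : ℕ → ℤ → ℂ) (l : ℕ) {x : E3} (hx : x ≠ 0) :
    ‖dB w l x‖ ≤ 6 * (((l:ℝ)+1) * √((l:ℝ)+2) * nn w l) * rho x^(l+2) := by
  have b : ∀ (δ : ℤ) (A : ℕ → ℤ → ℝ), δ.natAbs ≤ 1 → (∀ l m, m.natAbs ≤ l → |A l m| ≤ 2*((l:ℝ)+1)) →
      ‖BB (Sh δ A w) (l+1) x‖ ≤ 2 * (((l:ℝ)+1) * √((l:ℝ)+2) * nn w l) * rho x^(l+2) := by
    intro δ A h1 h2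
    refine (BB_bound _ _ hx).trans ?_
    have := nn_Sh δ h1 A l (h2 l) w
    have h3 := rho_nonneg x
    push_cast
    rw [show (l:ℝ)+1+1 = l+2 by ring]
    calc _ ≤ (2*((l:ℝ)+1) * nn w l) * √((l:ℝ)+2) * rho x^(l+2) := by gcongr
      _ = _ := by ring
  have hp := b 1 Ap (by decide) Ap_bd
  have hn := b (-1) An (by decide) An_bd
  have hz := b 0 Az (by decide) Az_bd
  refine (DL_norm _ _ _).trans ?_
  have e1 := norm_add_le (BB (Dp w) (l+1) x) (BB (Dn w) (l+1) x)
  have e2 := norm_sub_le (BB (Dn w) (l+1) x) (BB (Dp w) (l+1) x)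
  simp only [norm_div, norm_mul, Complex.norm_I, one_mul, RCLike.norm_ofNat]
  unfold Dp Dn Dz at *
  linarith
end

/-! Part D2 -/
noncomputable section
open MeasureTheory Real Filter Topology

/-- absolute summability of the series at the sphere -/
def H0 (w : ℕ → ℤ → ℂ) : Prop := Summable fun l : ℕ => nn w l * √((l:ℝ)+1)
/-- absolute summability of the differentiated series at the sphere -/
def H1 (w : ℕ → ℤ → ℂ) : Prop := Summable fun l : ℕ => ((l:ℝ)+1) * √((l:ℝ)+2) * nn w l
/-- polynomial growth -/
def PG (w : ℕ → ℤ → ℂ) : Prop := ∃ (C : ℝ) (k : ℕ), 0 ≤ C ∧ ∀ l : ℕ, nn w l ≤ C * ((l:ℝ)+1)^k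

lemma H1.H0 {w : ℕ → ℤ → ℂ} (h : H1 w) : H0 w := by
  refine Summable.of_nonneg_of_le (fun l => mul_nonneg (nn_nonneg _ _) (Real.sqrt_nonneg _)) (fun l => ?_) h
  have h1 : √((l:ℝ)+1) ≤ √((l:ℝ)+2) := Real.sqrt_le_sqrt (by linarith)
  have h2 : (1:ℝ) ≤ (l:ℝ)+1 := by linarith [(Nat.cast_nonneg l : (0:ℝ) ≤ l)]
  have h3 := nn_nonneg w l
  calc nn w l * √((l:ℝ)+1) ≤ nn w l * √((l:ℝ)+2) := by gcongr
    _ = 1 * √((l:ℝ)+2) * nn w l := by ring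
    _ ≤ _ := by gcongr

lemma H0.PG {w : ℕ → ℤ → ℂ} (h : H0 w) : PG w := by
  refine ⟨∑' l : ℕ, nn w l * √((l:ℝ)+1), 0, tsum_nonneg fun l => mul_nonneg (nn_nonneg _ _) (Real.sqrt_nonneg _), fun l => ?_⟩
  rw [pow_zero, mul_one]
  refine le_trans ?_ (h.le_tsum l fun l _ => mul_nonneg (nn_nonneg _ _) (Real.sqrt_nonneg _))
  have : 1 ≤ √((l:ℝ)+1) := by rw [Real.one_le_sqrt]; linarith [(Nat.cast_nonneg l : (0:ℝ) ≤ l)]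
  nlinarith [nn_nonneg w l]

lemma Sh_H0 {w : ℕ → ℤ → ℂ} (h : H1 w) (δ : ℤ) (hδ : δ.natAbs ≤ 1) (A : ℕ → ℤ → ℝ)
    (hA : ∀ l m, m.natAbs ≤ l → |A l m| ≤ 2*((l:ℝ)+1)) : H0 (Sh δ A w) := by
  refine (summable_nat_add_iff 1).1 ?_
  refine Summable.of_nonneg_of_le (fun l => mul_nonneg (nn_nonneg _ _) (Real.sqrt_nonneg _)) (fun l => ?_) (h.mul_left 2)
  have := nn_Sh δ hδ A l (hA l) w
  push_cast
  rw [show (l:ℝ)+1+1 = l+2 by ring]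
  calc _ ≤ (2*((l:ℝ)+1) * nn w l) * √((l:ℝ)+2) := by gcongr
      _ = _ := by ring

lemma Sh_PG {w : ℕ → ℤ → ℂ} (h : PG w) (δ : ℤ) (hδ : δ.natAbs ≤ 1) (A : ℕ → ℤ → ℝ)
    (hA : ∀ l m, m.natAbs ≤ l → |A l m| ≤ 2*((l:ℝ)+1)) : PG (Sh δ A w) := by
  obtain ⟨C, k, hC, h⟩ := h
  refine ⟨2*C, k+1, by positivity, fun l => ?_⟩
  rcases l with _ | l
  · rw [nn_Sh_zero]; positivity
  · refine (nn_Sh δ hδ A l (hA l) w).trans ?_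
    have hl := h l
    push_cast
    calc _ ≤ 2*((l:ℝ)+1) * (C * ((l:ℝ)+1)^k) := by gcongr
      _ = 2*C*((l:ℝ)+1)^(k+1) := by ring
      _ ≤ _ := by gcongr; linarith

lemma rho_le_one {x : E3} (hx : x ∈ closedExt) : rho x ≤ 1 := inv_le_one_of_one_le₀ hx
lemma ne_zero_of_closed {x : E3} (hx : x ∈ closedExt) : x ≠ 0 := by
  rintro rfl; simp [closedExt] at hx; linarith
lemma ext_closed {x : E3} (hx : x ∈ extDomain) : x ∈ closedExt := le_of_lt (show 1 < ‖x‖ from hx)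

lemma BB_bound_closed (w : ℕ → ℤ → ℂ) (l : ℕ) {x : E3} (hx : x ∈ closedExt) :
    ‖BB w l x‖ ≤ nn w l * √((l:ℝ)+1) := by
  refine (BB_bound w l (ne_zero_of_closed hx)).trans ?_
  exact mul_le_of_le_one_right (mul_nonneg (nn_nonneg _ _) (Real.sqrt_nonneg _))
    (pow_le_one₀ (rho_nonneg x) (rho_le_one hx))

lemma BB_summable_closed {w : ℕ → ℤ → ℂ} (h : H0 w) {x : E3} (hx : x ∈ closedExt) :
    Summable fun l => BB w l x :=
  Summable.of_norm_bounded h fun l => BB_bound_closed w l hx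

lemma PG_summable {w : ℕ → ℤ → ℂ} (h : PG w) {r : ℝ} (hr0 : 0 ≤ r) (hr : r < 1) :
    Summable fun l : ℕ => ((l:ℝ)+1) * √((l:ℝ)+2) * nn w l * r^(l+1) := by
  obtain ⟨C, k, hC, h⟩ := h
  have hs0 : Summable fun n : ℕ => (n:ℝ)^(k+2) * r^n :=
    summable_pow_mul_geometric_of_norm_lt_one (k+2)
      (show ‖r‖ < 1 by rwa [Real.norm_of_nonneg hr0])
  have hs : Summable fun n : ℕ => (2*C) * (((n+1:ℕ):ℝ)^(k+2) * r^(n+1)) :=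
    ((summable_nat_add_iff (f := fun n : ℕ => (n:ℝ)^(k+2) * r^n) 1).2 hs0).mul_left (2*C)
  refine Summable.of_nonneg_of_le (fun l => ?_) (fun l => ?_) hs
  · have := nn_nonneg w l; positivity
  · have h1 : √((l:ℝ)+2) ≤ 2*((l:ℝ)+1) := by
      rw [Real.sqrt_le_left (by positivity)]
      nlinarith [(Nat.cast_nonneg l : (0:ℝ) ≤ l)]
    have hl := h l
    have := nn_nonneg w l
    push_cast
    calc _ ≤ ((l:ℝ)+1) * (2*((l:ℝ)+1)) * (C * ((l:ℝ)+1)^k) * r^(l+1) := by gcongr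
      _ = _ := by ring

lemma PG_BB_summable {w : ℕ → ℤ → ℂ} (h : PG w) {x : E3} (hx : x ∈ extDomain) :
    Summable fun l => BB w l x := by
  have hx0 := ne_zero_of_closed (ext_closed hx)
  refine Summable.of_norm_bounded (PG_summable h (rho_nonneg x) (inv_lt_one_of_one_lt₀ hx)) fun l => ?_
  refine (BB_bound w l hx0).trans ?_
  have h1 : √((l:ℝ)+1) ≤ √((l:ℝ)+2) := Real.sqrt_le_sqrt (by linarith)
  have h2 : (1:ℝ) ≤ (l:ℝ)+1 := by linarith [(Nat.cast_nonneg l : (0:ℝ) ≤ l)]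
  have h3 := nn_nonneg w l
  have h4 := rho_nonneg x
  calc nn w l * √((l:ℝ)+1) * rho x ^(l+1) ≤ nn w l * √((l:ℝ)+2) * rho x^(l+1) := by gcongr
    _ = 1 * √((l:ℝ)+2) * nn w l * rho x^(l+1) := by ring
    _ ≤ _ := by gcongr

/-- derivative of the sum -/
def dS (w : ℕ → ℤ → ℂ) (x : E3) : E3 →L[ℝ] ℂ :=
  DL ((SS (Dp w) x + SS (Dn w) x)/2)
      (Complex.I * (SS (Dn w) x - SS (Dp w) x)/2) (SS (Dz w) x)

lemma DL_hasSum {ι : Type*} {a b c : ι → ℂ} {A B C : ℂ} (ha : HasSum a A) (hb : HasSum b B)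
    (hc : HasSum c C) : HasSum (fun i => DL (a i) (b i) (c i)) (DL A B C) := by
  have key : ∀ (p : E3 →L[ℝ] ℝ) {a : ι → ℂ} {A : ℂ}, HasSum a A →
      HasSum (fun i => p.smulRight (a i)) (p.smulRight A) := fun p a A h =>
    (ContinuousLinearMap.smulRightL ℝ E3 ℂ p).hasSum h
  exact ((key _ ha).add (key _ hb)).add (key _ hc)

lemma SS_Sh_hasSum {δ : ℤ} {A : ℕ → ℤ → ℝ} {w : ℕ → ℤ → ℂ} {x : E3}
    (h : Summable fun l => BB (Sh δ A w) l x) :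
    HasSum (fun l => BB (Sh δ A w) (l+1) x) (SS (Sh δ A w) x) := by
  have := (hasSum_nat_add_iff' 1).2 h.hasSum
  simpa [BB_Sh_zero, SS] using this

lemma dB_hasSum {w : ℕ → ℤ → ℂ} {x : E3} (hp : Summable fun l => BB (Dp w) l x)
    (hn : Summable fun l => BB (Dn w) l x) (hz : Summable fun l => BB (Dz w) l x) :
    HasSum (fun l => dB w l x) (dS w x) := by
  have hp := SS_Sh_hasSum hp
  have hn := SS_Sh_hasSum hn
  have hz := SS_Sh_hasSum hz
  exact DL_hasSum ((hp.add hn).div_const 2) (((hn.sub hp).mul_left Complex.I).div_const 2) hz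

lemma isOpen_ext : IsOpen extDomain := isOpen_lt continuous_const continuous_norm

lemma SS_hasFDeriv {w : ℕ → ℤ → ℂ} (h : PG w) {x : E3} (hx : x ∈ extDomain) :
    HasFDerivAt (SS w) (dS w x) x := by
  have hx1 : 1 < ‖x‖ := hx
  set d := (‖x‖-1)/2 with hd
  have hd0 : 0 < d := by rw [hd]; linarith
  have hball : ∀ y ∈ Metric.ball x d, 1 + d ≤ ‖y‖ := by
    intro y hy
    rw [Metric.mem_ball, dist_eq_norm] at hy
    have := norm_sub_norm_le x y
    rw [norm_sub_rev] at this
    have : ‖x‖ = 1 + 2*d := by rw [hd]; ring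
    linarith
  have hy0 : ∀ y ∈ Metric.ball x d, y ≠ 0 := by
    intro y hy h0; have := hball y hy; rw [h0, norm_zero] at this; linarith
  have hr : (1+d)⁻¹ < 1 := inv_lt_one_of_one_lt₀ (by linarith)
  have hr0 : 0 ≤ (1+d)⁻¹ := by positivity
  have key := hasFDerivAt_tsum_of_isPreconnected (𝕜 := ℝ) (f := fun l => BB w l) (f' := fun l => dB w l)
    ((PG_summable h hr0 hr).mul_left 6) Metric.isOpen_ball
    (convex_ball x d).isPreconnected (fun l y hy => BB_hasFDeriv w l (hy0 y hy))
    (fun l y hy => by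
      refine (dB_bound w l (hy0 y hy)).trans ?_
      have h1 : rho y ≤ (1+d)⁻¹ := inv_anti₀ (by linarith) (hball y hy)
      have h2 := nn_nonneg w l
      have h3 := rho_nonneg y
      have : rho y^(l+2) ≤ ((1+d)⁻¹)^(l+1) := by
        rw [pow_succ]
        exact (mul_le_of_le_one_right (by positivity) (h1.trans hr.le)).trans (by gcongr)
      calc _ ≤ 6 * (((l:ℝ)+1) * √((l:ℝ)+2) * nn w l) * ((1+d)⁻¹)^(l+1) := by gcongr
        _ = _ := by ring)
    (Metric.mem_ball_self hd0) (PG_BB_summable h hx) (Metric.mem_ball_self hd0)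
  have e := (dB_hasSum (w := w) (PG_BB_summable (Sh_PG h 1 (by decide) Ap Ap_bd) hx)
    (PG_BB_summable (Sh_PG h (-1) (by decide) An An_bd) hx)
    (PG_BB_summable (Sh_PG h 0 (by decide) Az Az_bd) hx)).tsum_eq
  rw [e] at key
  exact key

lemma DL_contDiffOn {n : ℕ} {a b c : E3 → ℂ} {s : Set E3} (ha : ContDiffOn ℝ n a s)
   (hb : ContDiffOn ℝ n b s) (hc : ContDiffOn ℝ n c s) :
   ContDiffOn ℝ n (fun x => DL (a x) (b x) (c x)) s := by
  have key : ∀ (p : E3 →L[ℝ] ℝ) {a : E3 → ℂ}, ContDiffOn ℝ n a s →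
      ContDiffOn ℝ n (fun i => p.smulRight (a i)) s := fun p a h =>
    (ContinuousLinearMap.smulRightL ℝ E3 ℂ p).contDiff.comp_contDiffOn h
  exact ((key _ ha).add (key _ hb)).add (key _ hc)

lemma SS_contDiffOn (n : ℕ) : ∀ {w : ℕ → ℤ → ℂ}, PG w → ContDiffOn ℝ n (SS w) extDomain := by
  induction n with
  | zero => 
    intro w h
    exact contDiffOn_zero.2 fun x hx => (SS_hasFDeriv h hx).continuousAt.continuousWithinAt
  | succ n ih =>
    intro w h
    rw [Nat.cast_add, Nat.cast_one, contDiffOn_succ_iff_hasFDerivWithinAt (by simp)]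
    intro x hx
    refine ⟨extDomain, ?_, by simp, dS w, fun y hy => (SS_hasFDeriv h hy).hasFDerivWithinAt, ?_⟩
    · rw [Set.insert_eq_of_mem hx]; exact self_mem_nhdsWithin
    have hp := ih (Sh_PG h 1 (by decide) Ap Ap_bd)
    have hn := ih (Sh_PG h (-1) (by decide) An An_bd)
    have hz := ih (Sh_PG h 0 (by decide) Az Az_bd)
    exact DL_contDiffOn ((hp.add hn).div_const 2) ((contDiffOn_const.mul (hn.sub hp)).div_const 2) hz
end

/-! Part D3 -/
noncomputable section
open MeasureTheory Real Filter Topology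

/-- derivative majorant -/
def uu (w : ℕ → ℤ → ℂ) (l : ℕ) : ℝ := 6 * (((l:ℝ)+1) * √((l:ℝ)+2) * nn w l)

lemma uu_nonneg (w : ℕ → ℤ → ℂ) (l : ℕ) : 0 ≤ uu w l := by
  have := nn_nonneg w l
  unfold uu; positivity

lemma dB_bound_closed (w : ℕ → ℤ → ℂ) (l : ℕ) {x : E3} (hx : x ∈ closedExt) :
    ‖dB w l x‖ ≤ uu w l :=
  (dB_bound w l (ne_zero_of_closed hx)).trans
    (mul_le_of_le_one_right (uu_nonneg w l) (pow_le_one₀ (rho_nonneg x) (rho_le_one hx)))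

lemma BB_seg (w : ℕ → ℤ → ℂ) (l : ℕ) {a b : E3} (h : segment ℝ a b ⊆ closedExt) :
    ‖BB w l b - BB w l a‖ ≤ uu w l * ‖b - a‖ :=
  (convex_segment a b).norm_image_sub_le_of_norm_hasFDerivWithin_le
    (fun x hx => (BB_hasFDeriv w l (ne_zero_of_closed (h hx))).hasFDerivWithinAt)
    (fun x hx => dB_bound_closed w l (h hx)) (left_mem_segment ℝ a b) (right_mem_segment ℝ a b)

lemma seg_rad {x : E3} (hx : x ∈ closedExt) {c : ℝ} (hc : 1 ≤ c) :
    segment ℝ x (c • x) ⊆ closedExt := by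
  rintro y ⟨a, b, ha, hb, hab, rfl⟩
  have : a • x + b • c • x = (a + b*c) • x := by rw [add_smul, mul_smul]
  show 1 ≤ ‖_‖
  rw [this, norm_smul, Real.norm_of_nonneg (by positivity)]
  have hx1 : 1 ≤ ‖x‖ := hx
  have : 1 ≤ a + b * c := by nlinarith
  nlinarith

lemma seg_far {x y : E3} (hx : x ∈ closedExt) (hd : ‖y - x‖ ≤ 1/2) :
    segment ℝ ((1+2*‖y-x‖) • x) ((1+2*‖y-x‖) • y) ⊆ closedExt := by
  rintro z ⟨a, b, ha, hb, hab, rfl⟩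
  set d := ‖y-x‖ with hdd
  have hd0 : 0 ≤ d := norm_nonneg _
  have : a • (1+2*d) • x + b • (1+2*d) • y = (1+2*d) • (x + b • (y - x)) := by
    obtain rfl : a = 1 - b := by linarith
    module
  show 1 ≤ ‖_‖
  rw [this, norm_smul, Real.norm_of_nonneg (by positivity)]
  have hx1 : 1 ≤ ‖x‖ := hx
  have h1 : ‖x‖ ≤ ‖x + b • (y-x)‖ + b * d := by
    have := norm_sub_le (x + b • (y-x)) (b • (y-x))
    rw [add_sub_cancel_right, norm_smul, Real.norm_of_nonneg hb] at this
    exact this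
  have h2 : 1 - d ≤ ‖x + b • (y-x)‖ := by nlinarith
  nlinarith

lemma BB_lip (w : ℕ → ℤ → ℂ) (l : ℕ) {x y : E3} (hx : x ∈ closedExt) (hy : y ∈ closedExt)
    (hd : ‖y - x‖ ≤ 1/2) : ‖BB w l y - BB w l x‖ ≤ uu w l * ((4*‖x‖+3) * ‖y - x‖) := by
  set d := ‖y-x‖ with hdd
  have hd0 : 0 ≤ d := norm_nonneg _
  have h1 := BB_seg w l (seg_rad hx (show 1 ≤ 1+2*d by linarith))
  have h2 := BB_seg w l (seg_rad hy (show 1 ≤ 1+2*d by linarith))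
  have h3 := BB_seg w l (seg_far hx hd)
  have e1 : ∀ z : E3, ‖(1+2*d) • z - z‖ = 2*d*‖z‖ := by
    intro z
    rw [show (1+2*d) • z - z = (2*d) • z by module, norm_smul, Real.norm_of_nonneg (by positivity)]
  rw [e1] at h1 h2
  rw [← hdd, ← smul_sub, norm_smul, Real.norm_of_nonneg (by positivity), ← hdd] at h3
  have hyn : ‖y‖ ≤ ‖x‖ + d := by
    have := norm_add_le (y-x) x; rw [sub_add_cancel] at this; linarith
  have hu := uu_nonneg w l
  have tri : ‖BB w l y - BB w l x‖ ≤ ‖BB w l ((1+2*d)•x) - BB w l x‖ + ‖BB w l ((1+2*d)•y) - BB w l ((1+2*d)•x)‖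
      + ‖BB w l ((1+2*d)•y) - BB w l y‖ := by
    rw [show BB w l y - BB w l x = (BB w l ((1+2*d)•x) - BB w l x) + (BB w l ((1+2*d)•y) - BB w l ((1+2*d)•x))
      - (BB w l ((1+2*d)•y) - BB w l y) by ring]
    exact (norm_sub_le _ _).trans (add_le_add (norm_add_le _ _) le_rfl)
  refine tri.trans ?_
  calc _ ≤ uu w l * (2*d*‖x‖) + uu w l * ((1+2*d)*d) + uu w l * (2*d*‖y‖) := by linarith
    _ = uu w l * (d * (2*‖x‖ + (1+2*d) + 2 * ‖y‖)) := by ring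
    _ ≤ uu w l * (d * (4*‖x‖+3)) :=
        mul_le_mul_of_nonneg_left (mul_le_mul_of_nonneg_left (by linarith) hd0) hu
    _ = _ := by ring

lemma dB_hasSum_closed {w : ℕ → ℤ → ℂ} (h : H1 w) {x : E3} (hx : x ∈ closedExt) :
    HasSum (fun l => dB w l x) (dS w x) :=
  dB_hasSum (BB_summable_closed (Sh_H0 h 1 (by decide) Ap Ap_bd) hx)
    (BB_summable_closed (Sh_H0 h (-1) (by decide) An An_bd) hx)
    (BB_summable_closed (Sh_H0 h 0 (by decide) Az Az_bd) hx)

lemma SS_hasFDerivWithin {w : ℕ → ℤ → ℂ} (h : H1 w) {x : E3} (hx : x ∈ closedExt) :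
    HasFDerivWithinAt (SS w) (dS w x) closedExt x := by
  rw [hasFDerivWithinAt_iff_tendsto]
  have hsum : Summable fun l => uu w l * ((4*‖x‖+3) + 1) := (h.mul_left 6).mul_right _
  have key : Tendsto (fun y => ∑' l : ℕ, (‖y - x‖⁻¹ : ℝ) • (BB w l y - BB w l x - dB w l x (y-x)))
      (𝓝[closedExt] x) (𝓝 (∑' l : ℕ, (0:ℂ))) := by
    refine tendsto_tsum_of_dominated_convergence hsum ?_ ?_
    · intro l
      have := (hasFDerivWithinAt_iff_tendsto.1 (BB_hasFDeriv w l (ne_zero_of_closed hx)).hasFDerivWithinAt :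
        Tendsto _ (𝓝[closedExt] x) _)
      rw [tendsto_zero_iff_norm_tendsto_zero]
      refine this.congr fun y => ?_
      rw [norm_smul, norm_inv, norm_norm]
    · filter_upwards [self_mem_nhdsWithin, mem_nhdsWithin_of_mem_nhds (Metric.ball_mem_nhds x (show (0:ℝ) < 1/2 by norm_num))]
        with y hy hyb l
      rw [Metric.mem_ball, dist_eq_norm] at hyb
      have h1 := BB_lip w l hx hy hyb.le
      have h2 := (dB w l x).le_opNorm (y-x)
      have h3 := dB_bound_closed w l hx
      have h4 : ‖BB w l y - BB w l x - dB w l x (y-x)‖ ≤ uu w l * (4*‖x‖+3+1) * ‖y-x‖ := by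
        refine (norm_sub_le _ _).trans ?_
        have h5 : ‖dB w l x‖ * ‖y-x‖ ≤ uu w l * ‖y-x‖ := by gcongr
        linarith
      rw [norm_smul, norm_inv, norm_norm]
      rcases eq_or_ne (y-x) 0 with h0 | h0
      · rw [h0, norm_zero, inv_zero, zero_mul]
        have := uu_nonneg w l
        positivity
      · rw [inv_mul_le_iff₀ (norm_pos_iff.2 h0)]
        linarith
  rw [tsum_zero, tendsto_zero_iff_norm_tendsto_zero] at key
  refine key.congr' ?_
  filter_upwards [self_mem_nhdsWithin] with y hy
  have s1 := (BB_summable_closed h.H0 hy).hasSum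
  have s2 := (BB_summable_closed h.H0 hx).hasSum
  have s3 := (ContinuousLinearMap.apply ℝ ℂ (y-x)).hasSum (dB_hasSum_closed h hx)
  have := (((s1.sub s2).sub s3).const_smul (‖y-x‖⁻¹ : ℝ)).tsum_eq
  simp only [ContinuousLinearMap.apply_apply] at this
  rw [this, norm_smul, norm_inv, norm_norm]
  rfl

lemma BB_continuousOn (w : ℕ → ℤ → ℂ) (l : ℕ) : ContinuousOn (BB w l) closedExt := fun x hx =>
  (BB_hasFDeriv w l (ne_zero_of_closed hx)).continuousAt.continuousWithinAt

lemma SS_continuousOn {w : ℕ → ℤ → ℂ} (h : H0 w) : ContinuousOn (SS w) closedExt :=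
  continuousOn_tsum (fun l => BB_continuousOn w l) h fun l x hx => BB_bound_closed w l hx

lemma SS_contDiffOn_closed {w : ℕ → ℤ → ℂ} (h : H1 w) : ContDiffOn ℝ 1 (SS w) closedExt := by
  have : ContDiffOn ℝ (((0:ℕ) + 1 : WithTop ℕ∞)) (SS w) closedExt := by
    rw [contDiffOn_succ_iff_hasFDerivWithinAt (by simp)]
    intro x hx
    refine ⟨closedExt, ?_, by simp, dS w, fun y hy => SS_hasFDerivWithin h hy, ?_⟩
    · rw [Set.insert_eq_of_mem hx]; exact self_mem_nhdsWithin
    have c : ∀ {w}, H0 w → ContDiffOn ℝ (0:ℕ) (SS w) closedExt := fun h =>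
      contDiffOn_zero.2 (SS_continuousOn h)
    have hp := c (Sh_H0 h 1 (by decide) Ap Ap_bd)
    have hn := c (Sh_H0 h (-1) (by decide) An An_bd)
    have hz := c (Sh_H0 h 0 (by decide) Az Az_bd)
    exact DL_contDiffOn ((hp.add hn).div_const 2) ((contDiffOn_const.mul (hn.sub hp)).div_const 2) hz
  simpa using this

lemma SS_decay {w : ℕ → ℤ → ℂ} (h : H0 w) {x : E3} (hx : x ∈ closedExt) :
    ‖SS w x‖ ≤ (∑' l : ℕ, nn w l * √((l:ℝ)+1)) * ‖x‖⁻¹ := by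
  rw [← tsum_mul_right]
  refine tsum_of_norm_bounded (h.mul_right _).hasSum fun l => ?_
  refine (BB_bound w l (ne_zero_of_closed hx)).trans ?_
  refine mul_le_mul_of_nonneg_left ?_ (mul_nonneg (nn_nonneg _ _) (Real.sqrt_nonneg _))
  rw [pow_succ]
  exact mul_le_of_le_one_left (rho_nonneg x) (pow_le_one₀ (rho_nonneg x) (rho_le_one hx))

lemma SS_tendsto {w : ℕ → ℤ → ℂ} (h : H0 w) : Tendsto (SS w) (Bornology.cobounded E3) (𝓝 0) := by
  have h1 : Tendsto (fun x : E3 => (∑' l : ℕ, nn w l * √((l:ℝ)+1)) * ‖x‖⁻¹) (Bornology.cobounded E3) (𝓝 0) := by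
    simpa using (tendsto_inv_atTop_zero.comp (tendsto_norm_cobounded_atTop (E := E3))).const_mul (∑' l : ℕ, nn w l * √((l:ℝ)+1))
  refine squeeze_zero_norm' ?_ h1
  filter_upwards [(tendsto_norm_cobounded_atTop (E := E3)).eventually_ge_atTop 1] with x hx
  exact SS_decay h hx

lemma lap_coef (w : ℕ → ℤ → ℂ) (l : ℕ) (m : ℤ) :
    Dp (Dn w) l m + Dn (Dp w) l m + 2 * Dz (Dz w) l m = 0 := by
  rcases l with _ | _ | l
  · simp [Dp, Dn, Dz, Sh]
  · simp [Dp, Dn, Dz, Sh]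
  · simp only [Dp, Dn, Dz, Sh]
    by_cases h : m.natAbs ≤ l
    · rw [if_pos (by omega), if_pos (by omega), if_pos (by omega), if_pos (by omega), if_pos (by omega), if_pos (by omega)]
      obtain ⟨h1, h2⟩ := cast_bd h
      have q1 : Ap (l+1) (m-1) * An l m = - √((2*l+1)/(2*l+5)*((((l:ℝ)+1+m)*((l:ℝ)+m+2))*(((l:ℝ)-m+1)*((l:ℝ)-m+2)))) := by
        unfold Ap An
        rw [neg_mul, ← Real.sqrt_mul]
        · congr 2; push_cast; field_simp; ring
        · push_cast
          have : 0 ≤ ((l:ℝ)+1 + (m-1)+1) := by linarith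
          have : 0 ≤ ((l:ℝ)+1 + (m-1)+2) := by linarith
          positivity
      have q2 : An (l+1) (m+1) * Ap l m = - √((2*l+1)/(2*l+5)*((((l:ℝ)+1+m)*((l:ℝ)+m+2))*(((l:ℝ)-m+1)*((l:ℝ)-m+2)))) := by
        unfold Ap An
        rw [mul_neg, ← Real.sqrt_mul]
        · congr 2; push_cast; field_simp; ring
        · push_cast
          have : 0 ≤ ((l:ℝ)+1 - (m+1)+1) := by linarith
          have : 0 ≤ ((l:ℝ)+1 - (m+1)+2) := by linarith
          positivity
      have q3 : Az (l+1) m * Az l m = √((2*l+1)/(2*l+5)*((((l:ℝ)+1+m)*((l:ℝ)+m+2))*(((l:ℝ)-m+1)*((l:ℝ)-m+2)))) := by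
        unfold Az
        rw [mul_neg, neg_mul, neg_neg, ← Real.sqrt_mul]
        · congr 1; push_cast; field_simp; ring
        · push_cast
          have : 0 ≤ ((l:ℝ)+1+1-m) := by linarith
          have : 0 ≤ ((l:ℝ)+1+1+m) := by linarith
          positivity
      generalize √((2*l+1)/(2*l+5)*((((l:ℝ)+1+m)*((l:ℝ)+m+2))*(((l:ℝ)-m+1)*((l:ℝ)-m+2)))) = Q at q1 q2 q3
      have q1' : (Ap (l+1) (m-1):ℂ) * An l m = -Q := by rw [← Complex.ofReal_mul, q1, Complex.ofReal_neg]
      have q2' : (An (l+1) (m+1):ℂ) * Ap l m = -Q := by rw [← Complex.ofReal_mul, q2, Complex.ofReal_neg]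
      have q3' : (Az (l+1) m:ℂ) * Az l m = Q := by rw [← Complex.ofReal_mul, q3]
      simp only [sub_neg_eq_add, sub_add_cancel, add_sub_cancel_right, sub_zero]
      linear_combination (w l m) * (q1' + q2' + 2 * q3')
    · have e1 : ¬ (m - 1 - -1).natAbs ≤ l := by omega
      have e2 : ¬ (m - -1 - 1).natAbs ≤ l := by omega
      have e3 : ¬ (m - 0 - 0).natAbs ≤ l := by omega
      rw [if_neg e1, if_neg e2, if_neg e3]
      simp

lemma SS_lap {w : ℕ → ℤ → ℂ} (h : PG w) {x : E3} (hx : x ∈ extDomain) : lap (SS w) x = 0 := by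
  have hp := (Sh_PG h 1 (by decide) Ap Ap_bd)
  have hn := (Sh_PG h (-1) (by decide) An An_bd)
  have hz := (Sh_PG h 0 (by decide) Az Az_bd)
  have hev : ∀ v : E3, (fun y => fderiv ℝ (SS w) y v) =ᶠ[𝓝 x] fun y => dS w y v := fun v => by
    filter_upwards [isOpen_ext.mem_nhds hx] with y hy
    rw [(SS_hasFDeriv h hy).fderiv]
  have dp := SS_hasFDeriv hp hx
  have dn := SS_hasFDeriv hn hx
  have dz := SS_hasFDeriv hz hx
  have d0 : HasFDerivAt (fun y => dS w y (EuclideanSpace.single 0 1))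
      ((2:ℂ)⁻¹ • (dS (Sh 1 Ap w) x + dS (Sh (-1) An w) x)) x := by
    refine ((dp.fun_add dn).const_mul ((2:ℂ)⁻¹)).congr_of_eventuallyEq (Eventually.of_forall fun y => ?_)
    simp only [dS, DL_apply]; simp [Dp, Dn]; ring
  have d1 : HasFDerivAt (fun y => dS w y (EuclideanSpace.single 1 1))
      ((Complex.I/2) • (dS (Sh (-1) An w) x - dS (Sh 1 Ap w) x)) x := by
    refine ((dn.fun_sub dp).const_mul (Complex.I/2)).congr_of_eventuallyEq (Eventually.of_forall fun y => ?_)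
    simp only [dS, DL_apply]; simp [Dp, Dn]; ring
  have d2 : HasFDerivAt (fun y => dS w y (EuclideanSpace.single 2 1))
      (dS (Sh 0 Az w) x) x := by
    refine dz.congr_of_eventuallyEq (Eventually.of_forall fun y => ?_)
    simp only [dS, DL_apply]; simp [Dz]
  have hs : SS (Dp (Dn w)) x + SS (Dn (Dp w)) x + 2 * SS (Dz (Dz w)) x = 0 := by
    have s1 := (PG_BB_summable (Sh_PG hn 1 (by decide) Ap Ap_bd) hx).hasSum
    have s2 := (PG_BB_summable (Sh_PG hp (-1) (by decide) An An_bd) hx).hasSum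
    have s3 := (PG_BB_summable (Sh_PG hz 0 (by decide) Az Az_bd) hx).hasSum
    have s4 := ((s1.add s2).add (s3.mul_left 2))
    refine s4.unique ?_
    have : (fun l => BB (Sh 1 Ap (Sh (-1) An w)) l x + BB (Sh (-1) An (Sh 1 Ap w)) l x + 2 * BB (Sh 0 Az (Sh 0 Az w)) l x)
        = fun l => 0 := by
      ext l
      unfold BB
      rw [Finset.mul_sum, ← Finset.sum_add_distrib, ← Finset.sum_add_distrib]
      refine Finset.sum_eq_zero fun m _ => ?_
      have := lap_coef w l m
      simp only [Dp, Dn, Dz] at this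
      linear_combination (EE l m x) * this
    rw [this]
    exact hasSum_zero
  unfold lap
  rw [Fin.sum_univ_three, (hev _).fderiv_eq, (hev _).fderiv_eq, (hev _).fderiv_eq, d0.fderiv, d1.fderiv, d2.fderiv]
  simp only [ContinuousLinearMap.smul_apply, ContinuousLinearMap.add_apply, ContinuousLinearMap.sub_apply, dS, DL_apply]
  simp only [Dp, Dn, Dz] at *
  simp
  linear_combination (1/2:ℂ) * hs + ((1/4:ℂ) * (SS (Sh (-1) An (Sh (-1) An w)) x - SS (Sh 1 Ap (Sh (-1) An w)) x - SS (Sh (-1) An (Sh 1 Ap w)) x + SS (Sh 1 Ap (Sh 1 Ap w)) x)) * Complex.I_sq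
end

/-! Part D4 -/
noncomputable section
open MeasureTheory Real Filter Topology

lemma SS_hasSum_prod {w : ℕ → ℤ → ℂ} (h : H0 w) {x : E3} (hx : x ∈ closedExt) :
    HasSum (fun p : ℕ × ℤ => w p.1 p.2 * EE p.1 p.2 x) (SS w x) := by
  have hz : ∀ (l : ℕ), ∀ m ∉ Finset.Icc (-(l:ℤ)) l, w l m * EE l m x = 0 := by
    intro l m hm
    rw [mem_Icc_abs] at hm
    rw [EE_zero l m (by omega), mul_zero]
  have hz' : ∀ (l : ℕ), ∀ m ∉ Finset.Icc (-(l:ℤ)) l, ‖w l m * EE l m x‖ = 0 := by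
    intro l m hm; rw [hz l m hm, norm_zero]
  have hs : Summable (fun p : ℕ × ℤ => w p.1 p.2 * EE p.1 p.2 x) := by
    refine Summable.of_norm ?_
    rw [summable_prod_of_nonneg (fun p => norm_nonneg _)]
    refine ⟨fun l => summable_of_ne_finset_zero (hz' l), ?_⟩
    refine Summable.of_nonneg_of_le (fun l => tsum_nonneg fun _ => norm_nonneg _) (fun l => ?_) h
    rw [tsum_eq_sum (hz' l)]
    refine (BB_abs_bound w l (ne_zero_of_closed hx)).trans ?_
    exact mul_le_of_le_one_right (mul_nonneg (nn_nonneg _ _) (Real.sqrt_nonneg _))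
      (pow_le_one₀ (rho_nonneg x) (rho_le_one hx))
  have h2 := hs.hasSum.prod_fiberwise (g := fun l => BB w l x)
    (fun l => hasSum_sum_of_ne_finset_zero (hz l))
  have : SS w x = ∑' p : ℕ × ℤ, w p.1 p.2 * EE p.1 p.2 x := h2.tsum_eq
  rw [this]
  exact hs.hasSum

/-- coefficients of the solution -/
def wc (f : ℝ → ℝ → ℂ) (h : ℝ → ℂ) (l : ℕ) (m : ℤ) : ℂ := bCoef f l m + cCoef f h l m

lemma vFun_eq {f : ℝ → ℝ → ℂ} {h : ℝ → ℂ} (hw : H0 (wc f h)) {x : E3} (hx : x ∈ closedExt) :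
    vFun f h x = SS (wc f h) x := by
  rw [← (SS_hasSum_prod hw hx).tsum_eq, vFun]
  refine tsum_congr fun p => ?_
  rw [mul_assoc, EE_vterm _ _ (ne_zero_of_closed hx), wc]

lemma sphCoord_mem (θ φ : ℝ) : sphCoord θ φ ∈ closedExt := (sphCoord_norm θ φ).ge

lemma radialDeriv_eq {f : ℝ → ℝ → ℂ} {h : ℝ → ℂ} (hw : H1 (wc f h)) (θ φ : ℝ) :
    radialDeriv (vFun f h) θ φ = dS (wc f h) (sphCoord θ φ) (sphCoord θ φ) := by
  unfold radialDeriv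
  set x := sphCoord θ φ with hx
  have hmem : ∀ r ∈ Set.Ici (1:ℝ), r • x ∈ closedExt := by
    intro r hr
    show 1 ≤ ‖r • x‖
    have hr' : (1:ℝ) ≤ r := hr
    rw [norm_smul, sphCoord_norm, mul_one, Real.norm_of_nonneg (by linarith)]
    exact hr
  have h1 : HasDerivWithinAt (fun r : ℝ => r • x) x (Set.Ici 1) 1 := by
    simpa using ((hasDerivAt_id (1:ℝ)).smul_const x).hasDerivWithinAt (s := Set.Ici 1)
  have h2 : HasFDerivWithinAt (SS (wc f h)) (dS (wc f h) x) closedExt ((1:ℝ) • x) := by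
    rw [one_smul]; exact SS_hasFDerivWithin hw (sphCoord_mem θ φ)
  have h3 := h2.comp_hasDerivWithinAt (1:ℝ) h1 hmem
  have h4 := h3.congr (f₁ := fun r : ℝ => vFun f h (r • x)) (fun r hr => vFun_eq hw.H0 (hmem r hr))
    (vFun_eq hw.H0 (hmem 1 (by simp)))
  exact h4.derivWithin (uniqueDiffOn_Ici 1 1 (by simp))

/-- the latitudinal unit vector -/
def eth (θ φ : ℝ) : E3 := WithLp.toLp 2 ![-Real.sin θ * Real.cos φ, -Real.sin θ * Real.sin φ, Real.cos θ]

lemma thetaDeriv_eq {f : ℝ → ℝ → ℂ} {h : ℝ → ℂ} (hw : H1 (wc f h)) (θ φ : ℝ) :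
    thetaDeriv (vFun f h) θ φ = dS (wc f h) (sphCoord θ φ) (eth θ φ) := by
  unfold thetaDeriv
  have h1 : HasDerivAt (fun t : ℝ => sphCoord t φ) (eth θ φ) θ := by
    have e : (fun t : ℝ => sphCoord t φ) = fun t => Real.cos t • (WithLp.toLp 2 ![Real.cos φ, Real.sin φ, 0] : E3)
        + Real.sin t • (WithLp.toLp 2 ![0, 0, 1] : E3) := by
      ext t i
      fin_cases i <;> simp [sphCoord]
    rw [e]
    refine HasDerivAt.congr_deriv (((Real.hasDerivAt_cos θ).smul_const _).add
      ((Real.hasDerivAt_sin θ).smul_const _)) ?_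
    ext i
    fin_cases i <;> simp [eth]
  have h3 := (SS_hasFDerivWithin hw (sphCoord_mem θ φ)).comp_hasDerivWithinAt θ
    (h1.hasDerivWithinAt (s := Set.univ)) (fun t _ => sphCoord_mem t φ)
  rw [hasDerivWithinAt_univ] at h3
  have e : (fun t => vFun f h (sphCoord t φ)) = SS (wc f h) ∘ fun t => sphCoord t φ := by
    ext t; exact vFun_eq hw.H0 (sphCoord_mem t φ)
  rw [e]
  exact h3.deriv

/-- vertical unit vector -/
def ez : E3 := EuclideanSpace.single 2 1

lemma oblique_eq {f : ℝ → ℝ → ℂ} {h : ℝ → ℂ} (hw : H1 (wc f h)) (θ φ : ℝ) :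
    -2 * (Real.sin θ : ℂ) * radialDeriv (vFun f h) θ φ + (Real.cos θ : ℂ) * thetaDeriv (vFun f h) θ φ
      = dS (wc f h) (sphCoord θ φ) ez
        - 3 * (sphCoord θ φ 2 : ℂ) * dS (wc f h) (sphCoord θ φ) (sphCoord θ φ) := by
  rw [radialDeriv_eq hw, thetaDeriv_eq hw]
  have : Real.cos θ • eth θ φ - (2 * Real.sin θ) • sphCoord θ φ = ez - (3 * Real.sin θ) • sphCoord θ φ := by
    ext i
    fin_cases i
    · simp [eth, sphCoord, ez]; ring
    · simp [eth, sphCoord, ez]; ring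
    · simp [eth, sphCoord, ez]; linear_combination Real.sin_sq_add_cos_sq θ
  have h2 := congrArg (dS (wc f h) (sphCoord θ φ)) this
  simp only [map_sub, map_smul] at h2
  have e2 : (sphCoord θ φ) 2 = Real.sin θ := by simp [sphCoord]
  rw [e2]
  simp only [Complex.real_smul] at h2
  push_cast at h2 ⊢
  linear_combination h2

lemma EE_smul (l : ℕ) (m : ℤ) (x : E3) {r : ℝ} (hr : 0 < r) :
    EE l m (r • x) = ((r⁻¹^(l+1) : ℝ):ℂ) * EE l m x := by
  have h1 : rho (r • x) = r⁻¹ * rho x := by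
    rw [rho, norm_smul, Real.norm_of_nonneg hr.le, mul_inv]; rfl
  have h2 : (r • x) 2 * rho (r • x) = x 2 * rho x := by
    rw [h1]; simp; field_simp
  rw [EE, EE, eF, eF, gF, gF, h2, h1]
  have hr' : (r:ℂ) ≠ 0 := by exact_mod_cast hr.ne'
  have e : (((r • x) 0 : ℝ):ℂ) + sg m * Complex.I * ((r • x) 1 : ℝ) = r * (x 0 + sg m * Complex.I * x 1) := by
    simp; ring
  have e2 : (r:ℂ)^m.natAbs * ((r:ℂ)⁻¹)^m.natAbs = 1 := by
    rw [← mul_pow, mul_inv_cancel₀ hr', one_pow]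
  rw [e, mul_pow]
  push_cast
  rw [show l + m.natAbs + 1 = m.natAbs + (l+1) by ring, pow_add]
  ring_nf
  ring_nf at e2
  linear_combination (ep m * nrm l m.natAbs * (r:ℂ)⁻¹ * (x 0 + sg m * Complex.I * x 1)^m.natAbs * ((r:ℂ)⁻¹)^l * q l m.natAbs (x 2 * rho x) * rho x * rho x^m.natAbs * rho x^l) * e2

lemma dB_radial (w : ℕ → ℤ → ℂ) (l : ℕ) {x : E3} (hx : x ≠ 0) :
    dB w l x x = -((l:ℂ)+1) * BB w l x := by
  have h1 : HasDerivAt (fun r : ℝ => r • x) x 1 := by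
    simpa using ((hasDerivAt_id (1:ℝ)).smul_const x)
  have h2 : HasFDerivAt (BB w l) (dB w l x) ((1:ℝ) • x) := by
    rw [one_smul]; exact BB_hasFDeriv w l hx
  have h3 := h2.comp_hasDerivAt (1:ℝ) h1
  have h4 : HasDerivAt (fun r : ℝ => ((r⁻¹^(l+1) : ℝ):ℂ) * BB w l x) (-((l:ℂ)+1) * BB w l x) 1 := by
    have := (((hasDerivAt_inv (x := (1:ℝ)) one_ne_zero).fun_pow (l+1)).ofReal_comp).mul_const (BB w l x)
    refine this.congr_deriv ?_
    simp
  have h5 : (BB w l ∘ fun r : ℝ => r • x) =ᶠ[𝓝 1] fun r : ℝ => ((r⁻¹^(l+1) : ℝ):ℂ) * BB w l x := by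
    filter_upwards [lt_mem_nhds (show (0:ℝ) < 1 by norm_num)] with r hr
    simp only [Function.comp, BB, Finset.mul_sum]
    refine Finset.sum_congr rfl fun m _ => ?_
    rw [EE_smul l m x hr]; ring
  exact (h3.congr_of_eventuallyEq h5.symm).unique h4

lemma beta_sq (l : ℕ) (m : ℤ) (h : m.natAbs ≤ l + 1) :
    betaLM (l+1) m ^2 = ((l:ℝ)+1-m.natAbs)*((l:ℝ)+1+m.natAbs)/((2*(l:ℝ)+1)*(2*(l:ℝ)+3)) := by
  have : (m.natAbs:ℝ) ≤ (l:ℝ)+1 := by exact_mod_cast h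
  rw [betaLM, Real.sq_sqrt]
  · push_cast; congr 1; ring
  · push_cast
    have h1: 0 ≤ (l:ℝ)+1 - m.natAbs := by linarith
    have h2 : 0 ≤ 2*((l:ℝ)+1)-1 := by linarith [(Nat.cast_nonneg l : (0:ℝ) ≤ l)]
    positivity

lemma beta_nonneg (l : ℕ) (m : ℤ) : 0 ≤ betaLM l m := Real.sqrt_nonneg _

lemma beta_pos (l : ℕ) (m : ℤ) (h : m.natAbs ≤ l) : 0 < betaLM (l+1) m := by
  have h0 := beta_sq l m (by omega)
  have : (m.natAbs:ℝ) ≤ (l:ℝ) := by exact_mod_cast h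
  have h1: 0 < (l:ℝ)+1 - m.natAbs := by linarith
  have h2 : 0 < betaLM (l+1) m ^ 2 := by rw [h0]; positivity
  exact lt_of_le_of_ne (beta_nonneg _ _) (fun h => by rw [← h] at h2; simp at h2)

lemma beta_le_one (l : ℕ) (m : ℤ) (h : m.natAbs ≤ l + 1) : betaLM (l+1) m ≤ 1 := by
  have h0 := beta_sq l m h
  have : (m.natAbs:ℝ) ≤ (l:ℝ)+1 := by exact_mod_cast h
  have h1 : betaLM (l+1) m ^ 2 ≤ 1 := by
    rw [h0, div_le_one (by positivity)]
    nlinarith [(Nat.cast_nonneg l : (0:ℝ) ≤ l), sq_nonneg (m.natAbs:ℝ)]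
  nlinarith [beta_nonneg (l+1) m]

lemma beta_top (l : ℕ) (m : ℤ) (h : m.natAbs = l) : betaLM l m = 0 := by
  simp [betaLM, h]
end

/-! Part D5 -/
noncomputable section
open MeasureTheory Real Filter Topology

lemma beta_nrm (l : ℕ) (m : ℤ) (h : m.natAbs ≤ l) :
    nrm l m.natAbs * ((l:ℝ) - m.natAbs + 1) = (2*l+1) * betaLM (l+1) m * nrm (l+1) m.natAbs := by
  have : (m.natAbs:ℝ) ≤ (l:ℝ) := by exact_mod_cast h
  rw [nrm_r3 l _ h]
  congr 1
  rw [Real.sqrt_eq_iff_mul_self_eq_of_pos]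
  · have := beta_sq l m (by omega)
    rw [show (2 * (l:ℝ) + 1) * betaLM (l + 1) m * ((2 * ↑l + 1) * betaLM (l + 1) m) = (2 * (l:ℝ) + 1)^2 * betaLM (l + 1) m^2 by ring, this]
    field_simp
  · have := beta_pos l m h
    positivity

lemma q_mul_t (l : ℕ) (m : ℤ) (h : m.natAbs ≤ l + 1) (t : ℝ) :
    t * (nrm (l+1) m.natAbs * q (l+1) m.natAbs t) =
      betaLM (l+2) m * (nrm (l+2) m.natAbs * q (l+2) m.natAbs t)
      + betaLM (l+1) m * (nrm l m.natAbs * q l m.natAbs t) := by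
  have h1 := q_three l m.natAbs t
  have h2 := beta_nrm (l+1) m h
  have h3 : nrm (l+1) m.natAbs * ((l:ℝ)+m.natAbs+1) * q l m.natAbs t = (2*l+3) * betaLM (l+1) m * nrm l m.natAbs * q l m.natAbs t := by
    rcases Nat.lt_or_ge l m.natAbs with h4 | h4
    · rw [q_zero h4]; simp
    · have h5 := beta_nrm l m h4
      have h6 := beta_sq l m h
      have : (m.natAbs:ℝ) ≤ (l:ℝ) := by exact_mod_cast h4
      have h7 : (l:ℝ) + 1 - m.natAbs ≠ 0 := by linarith
      congr 1
      rw [eq_div_iff (by positivity)] at h6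
      apply mul_left_cancel₀ h7
      linear_combination (-(2*l+3)*betaLM (l+1) m) * h5 - nrm (l+1) m.natAbs * h6
  have h8 : (2*(l:ℝ)+3) ≠ 0 := by positivity
  apply mul_left_cancel₀ h8
  push_cast at h2
  linear_combination (nrm (l+1) m.natAbs) * h1 + h3 + q (l+2) m.natAbs t * h2

lemma EE_one (l : ℕ) (m : ℤ) {x : E3} (hx : ‖x‖ = 1) :
    EE l m x = ((ep m:ℝ):ℂ) * ((nrm l m.natAbs * q l m.natAbs (x 2) : ℝ):ℂ) * ((x 0 : ℂ) + sg m * Complex.I * x 1)^m.natAbs := by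
  have : rho x = 1 := by simp [rho, hx]
  rw [EE, eF, gF, this]
  push_cast
  simp
  ring

lemma EE_three (l : ℕ) (m : ℤ) (h : m.natAbs ≤ l + 1) {x : E3} (hx : ‖x‖ = 1) :
    (x 2 : ℂ) * EE (l+1) m x = betaLM (l+2) m * EE (l+2) m x + betaLM (l+1) m * EE l m x := by
  have h1 := congrArg (fun a : ℝ => (a:ℂ)) (q_mul_t l m h (x 2))
  rw [EE_one _ _ hx, EE_one _ _ hx, EE_one _ _ hx]
  push_cast at h1 ⊢
  linear_combination (ep m * ((x 0 : ℂ) + sg m * Complex.I * x 1)^m.natAbs) * h1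

lemma EE_three0 {x : E3} (hx : ‖x‖ = 1) :
    (x 2 : ℂ) * EE 0 0 x = betaLM 1 0 * EE 1 0 x := by
  have h1 := beta_nrm 0 0 (by simp)
  have h2 := q_step 0 (x 2)
  rw [EE_one _ _ hx, EE_one _ _ hx]
  have h3 : x 2 * (nrm 0 0 * q 0 0 (x 2)) = betaLM 1 0 * (nrm 1 0 * q 1 0 (x 2)) := by
    simp at h1 h2
    rw [h2, h1]; ring
  have h4 := congrArg (fun a : ℝ => (a:ℂ)) h3
  simp only [Int.natAbs_zero] at *
  push_cast at h4 ⊢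
  simp only [pow_zero]
  linear_combination (ep 0:ℂ) * h4

lemma Az_beta (l : ℕ) (m : ℤ) (h : m.natAbs ≤ l) : Az l m = -((2*l+1) * betaLM (l+1) m) := by
  have h0 := beta_pos l m h
  have h2 := beta_sq l m (by omega)
  have h3 : ((m.natAbs:ℝ))^2 = (m:ℝ)^2 := by
    have : ((m.natAbs:ℤ):ℝ) = |(m:ℝ)| := by push_cast; simp
    rw [Int.cast_natCast] at this
    rw [this, sq_abs]
  rw [Az, neg_inj, Real.sqrt_eq_iff_mul_self_eq_of_pos (by positivity)]
  rw [show (2 * (l:ℝ) + 1) * betaLM (l + 1) m * ((2 * ↑l + 1) * betaLM (l + 1) m) = (2 * (l:ℝ) + 1)^2 * betaLM (l + 1) m^2 by ring, h2]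
  field_simp
  linear_combination -h3

lemma DL_ez (a b c : ℂ) : DL a b c ez = c := by
  rw [DL_apply]; simp [ez]

lemma dB_ez (w : ℕ → ℤ → ℂ) (l : ℕ) (x : E3) : dB w l x ez = BB (Dz w) (l+1) x := by
  rw [dB, DL_ez]

/-- up-going part -/
def upC (w : ℕ → ℤ → ℂ) : ℕ → ℤ → ℂ := Sh 0 (fun l m => ((l:ℝ)+2) * betaLM (l+1) m) w
/-- down-going part -/
def dnC (w : ℕ → ℤ → ℂ) (l : ℕ) (m : ℤ) : ℂ := ((3 * ((l:ℝ)+2) * betaLM (l+1) m : ℝ):ℂ) * w (l+1) m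

lemma BB_dn (w : ℕ → ℤ → ℂ) (l : ℕ) (x : E3) :
    BB (dnC w) l x = ∑ m ∈ Finset.Icc (-((l+1:ℕ):ℤ)) (l+1:ℕ), w (l+1) m * (((3 * ((l:ℝ)+2) * betaLM (l+1) m : ℝ):ℂ) * EE l m x) := by
  rw [BB]
  refine Finset.sum_subset_zero_on_sdiff ?_ ?_ ?_
  · intro m hm; rw [mem_Icc_abs] at *; omega
  · intro m hm
    rw [Finset.mem_sdiff, mem_Icc_abs, mem_Icc_abs] at hm
    rw [EE_zero l m (by omega)]; simp
  · intro m _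
    rw [dnC]; ring

lemma term_succ (w : ℕ → ℤ → ℂ) (l : ℕ) {x : E3} (hx : ‖x‖ = 1) :
    dB w (l+1) x ez - 3 * (x 2 : ℂ) * dB w (l+1) x x = BB (upC w) (l+2) x + BB (dnC w) l x := by
  have hx0 : x ≠ 0 := by rintro rfl; simp at hx
  rw [dB_ez, dB_radial w _ hx0, Dz, BB_Sh 0 (by simp), upC, BB_Sh 0 (by simp), BB_dn, BB, Finset.mul_sum,
    Finset.mul_sum, ← Finset.sum_sub_distrib, ← Finset.sum_add_distrib]
  refine Finset.sum_congr rfl fun m hm => ?_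
  rw [mem_Icc_abs] at hm
  have h1 := EE_three l m hm hx
  rw [Az_beta _ _ hm, add_zero]
  push_cast
  linear_combination (3 * (l+2) * w (l+1) m) * h1

lemma term_zero (w : ℕ → ℤ → ℂ) {x : E3} (hx : ‖x‖ = 1) :
    dB w 0 x ez - 3 * (x 2 : ℂ) * dB w 0 x x = BB (upC w) 1 x := by
  have hx0 : x ≠ 0 := by rintro rfl; simp at hx
  have h1 := EE_three0 hx
  rw [dB_ez, dB_radial w _ hx0, Dz, BB_Sh 0 (by simp), upC, BB_Sh 0 (by simp), BB]
  simp
  rw [Az_beta _ _ (by simp)]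
  push_cast
  simp
  linear_combination 3 * w 0 0 * h1

lemma HasSum.congr_both {ι : Type*} {f g : ι → ℂ} {a b : ℂ} (h : HasSum g b) (hf : ∀ i, f i = g i)
    (hab : a = b) : HasSum f a := by
  rw [show f = g from funext hf, hab]; exact h

lemma oblique_series {w g : ℕ → ℤ → ℂ} (hw : H1 w)
    (hr : ∀ (l : ℕ) (m : ℤ), m.natAbs ≤ l + 1 →
      (((l:ℂ)+2) * betaLM (l+1) m) * w l m + 3 * ((l:ℂ)+3) * betaLM (l+2) m * w (l+2) m = g (l+1) m / 2)
    (hr0 : 6 * (betaLM 1 0 : ℂ) * w 1 0 = g 0 0 / 2) {x : E3} (hx : ‖x‖ = 1) :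
    HasSum (fun l => BB g l x) (2 * (dS w x ez - 3 * (x 2 : ℂ) * dS w x x)) := by
  have hxc : x ∈ closedExt := hx.ge
  have h1 := dB_hasSum_closed hw hxc
  have h2 : HasSum (fun l => dB w l x ez - 3 * (x 2 : ℂ) * dB w l x x) (dS w x ez - 3 * (x 2 : ℂ) * dS w x x) := by
    have e1 := h1.mapL (ContinuousLinearMap.apply ℝ ℂ ez)
    have e2 := h1.mapL (ContinuousLinearMap.apply ℝ ℂ x)
    exact e1.sub (e2.mul_left _)
  have hup : H0 (upC w) := by
    refine Sh_H0 hw 0 (by simp) _ ?_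
    intro l m hm
    have b1 := beta_le_one l m (by omega)
    have b0 := beta_nonneg (l+1) m
    rw [abs_of_nonneg (by positivity)]
    nlinarith [(Nat.cast_nonneg l : (0:ℝ) ≤ l)]
  have h3 : HasSum (fun l => BB (upC w) l x) (SS (upC w) x) := (BB_summable_closed hup hxc).hasSum
  have h3' : HasSum (fun l => BB (upC w) (l+1) x) (SS (upC w) x) := SS_Sh_hasSum h3.summable
  have h4 := h2.sub h3'
  have h5 := (hasSum_nat_add_iff' 1).2 h4
  have h6 : HasSum (fun l => BB (dnC w) l x) (dS w x ez - 3 * (x 2 : ℂ) * dS w x x - SS (upC w) x) := by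
    refine HasSum.congr_both h5 (fun l => ?_) ?_
    · rw [term_succ w l hx]; ring
    · simp [term_zero w hx]
  have h7 := (h6.add h3).mul_left 2
  refine HasSum.congr_both h7 (fun l => ?_) ?_
  · rw [BB, BB, BB, ← Finset.sum_add_distrib, Finset.mul_sum]
    refine Finset.sum_congr rfl fun m hm => ?_
    rw [mem_Icc_abs] at hm
    rcases l with _ | l
    · have : m = 0 := by omega
      subst this
      simp only [upC, Sh, dnC]
      push_cast
      norm_num
      linear_combination -2 * EE 0 0 x * hr0
    · have e := hr l m hm
      simp only [upC, Sh, dnC, sub_zero]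
      split_ifs with h8
      · push_cast; linear_combination -2 * EE (l+1) m x * e
      · rw [beta_top (l+1) m (by omega)] at e
        push_cast at e ⊢; linear_combination -2 * EE (l+1) m x * e
  · ring
end

/-! Part D6 -/
noncomputable section
open MeasureTheory Real Filter Topology

lemma bCoef_rec (f : ℝ → ℝ → ℂ) (l : ℕ) (m : ℤ) (hm : m.natAbs ≤ l + 1) :
    bCoef f (l+2) m = (gammaLM (l+1) m : ℂ) * bCoef f l m + aCoef f (l+1) m := by
  obtain ⟨n, hn⟩ := Nat.exists_eq_add_of_le hm
  rw [bCoef, bCoef, show l + 2 + 1 - m.natAbs = n + 2 by omega, show l + 1 - m.natAbs = n by omega, hn, bSeq]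

lemma cCoef_rec (f : ℝ → ℝ → ℂ) (h : ℝ → ℂ) (l : ℕ) (m : ℤ) (hm : m.natAbs ≤ l + 1) :
    cCoef f h (l+2) m = (gammaLM (l+1) m : ℂ) * cCoef f h l m := by
  rw [cCoef, cCoef]
  by_cases h1 : m.natAbs ≤ l
  · by_cases h2 : (l - m.natAbs) % 2 = 0
    · rw [if_pos (by omega), if_pos ⟨h1, h2⟩]
      have e : (l + 2 - m.natAbs)/2 = (l - m.natAbs)/2 + 1 := by omega
      have e2 : m.natAbs + 2 * ((l - m.natAbs)/2 + 1) - 1 = l + 1 := by omega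
      rw [e, GammaKM, Finset.prod_Icc_succ_top (by omega), e2, GammaKM]
      push_cast
      ring
    · rw [if_neg (by omega), if_neg (by omega), mul_zero]
  · rw [if_neg (by omega), if_neg (by omega), mul_zero]

lemma gamma_mul (l : ℕ) (m : ℤ) (hm : m.natAbs ≤ l + 1) :
    3 * ((l:ℝ)+3) * betaLM (l+2) m * gammaLM (l+1) m = - ((l:ℝ)+2) * betaLM (l+1) m := by
  have := beta_pos (l+1) m hm
  rw [gammaLM]
  push_cast
  field_simp
  ring

lemma aCoef_mul (f : ℝ → ℝ → ℂ) (l : ℕ) (m : ℤ) (hm : m.natAbs ≤ l) :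
    3 * ((l:ℂ)+2) * betaLM (l+1) m * aCoef f l m = flCoeff f l m / 2 := by
  have := beta_pos l m hm
  have h1 : (betaLM (l+1) m : ℂ) ≠ 0 := by exact_mod_cast this.ne'
  have h2 : (l:ℂ) + 2 ≠ 0 := by
    have : (l:ℝ) + 2 ≠ 0 := by positivity
    exact_mod_cast this
  rw [aCoef]
  push_cast
  field_simp
  ring

lemma wc_rec (f : ℝ → ℝ → ℂ) (h : ℝ → ℂ) (l : ℕ) (m : ℤ) (hm : m.natAbs ≤ l + 1) :
    (((l:ℂ)+2) * betaLM (l+1) m) * wc f h l m + 3 * ((l:ℂ)+3) * betaLM (l+2) m * wc f h (l+2) m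
      = flCoeff f (l+1) m / 2 := by
  have h1 := congrArg (fun a : ℝ => (a:ℂ)) (gamma_mul l m hm)
  have h2 := aCoef_mul f (l+1) m hm
  rw [wc, wc, bCoef_rec f l m hm, cCoef_rec f h l m hm, ← h2]
  push_cast at h1 ⊢
  linear_combination (bCoef f l m + cCoef f h l m) * h1

lemma wc_rec0 (f : ℝ → ℝ → ℂ) (h : ℝ → ℂ) :
    6 * (betaLM 1 0 : ℂ) * wc f h 1 0 = flCoeff f 0 0 / 2 := by
  rw [← aCoef_mul f 0 0 (by simp), wc, bCoef, cCoef]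
  simp [bSeq]
  norm_num

theorem main_reduction (f : ℝ → ℝ → ℂ) (h : ℝ → ℂ) (hw : H1 (wc f h))
    (hf : ∀ θ ∈ Set.Icc (-(Real.pi / 2)) (Real.pi / 2), ∀ φ : ℝ,
      HasSum (fun l => BB (flCoeff f) l (sphCoord θ φ)) (f θ φ))
    (hh : ∀ φ : ℝ, SS (wc f h) (sphCoord 0 φ) = h φ) :
    SolvesObliqueC (vFun f h) f h := by
  have he : ∀ x ∈ closedExt, vFun f h x = SS (wc f h) x := fun x hx => vFun_eq hw.H0 hx
  have he' : ∀ x ∈ extDomain, vFun f h x = SS (wc f h) x := fun x hx => he x (ext_closed hx)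
  refine ⟨(SS_contDiffOn 2 hw.H0.PG).congr he', (SS_contDiffOn_closed hw).congr he, ?_, ?_, ?_, ?_⟩
  · intro x hx
    rw [← SS_lap hw.H0.PG hx]
    unfold lap
    refine Finset.sum_congr rfl fun i _ => ?_
    congr 1
    have h1 : vFun f h =ᶠ[𝓝 x] SS (wc f h) := by
      filter_upwards [isOpen_ext.mem_nhds hx] with y hy using he' y hy
    refine Filter.EventuallyEq.fderiv_eq ?_
    filter_upwards [h1.eventuallyEq_nhds] with y hy
    rw [hy.fderiv_eq]
  · intro θ hθ φ
    rw [oblique_eq hw]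
    have h1 := oblique_series hw (wc_rec f h) (wc_rec0 f h) (sphCoord_norm θ φ)
    have h2 := h1.unique (hf θ hθ φ)
    rw [← h2]; ring
  · refine (SS_tendsto hw.H0).congr' ?_
    filter_upwards [(tendsto_norm_cobounded_atTop (E := E3)).eventually_ge_atTop 1] with x hx
    exact (he x hx).symm
  · intro φ
    rw [he _ (sphCoord_mem 0 φ), hh]
end

/-! Part E1 -/
noncomputable section
open MeasureTheory Real Filter Topology

lemma gamma_bd (l : ℕ) (m : ℤ) (hm : m.natAbs ≤ l) : |gammaLM l m| ≤ 1/3 := by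
  have hb := beta_pos l m hm
  have hml : (m.natAbs:ℝ) ≤ l := by exact_mod_cast hm
  have hM0 : (0:ℝ) ≤ m.natAbs := Nat.cast_nonneg _
  have key : ((l:ℝ)+1) * betaLM l m ≤ ((l:ℝ)+2) * betaLM (l+1) m := by
    rcases l with _ | l
    · rw [beta_top 0 m (by omega)]; simp; positivity
    · have h1 := beta_sq l m hm
      have h2 := beta_sq (l+1) m (by omega)
      refine abs_le_of_sq_le_sq' ?_ (by positivity) |>.2
      rw [mul_pow, mul_pow, h1, h2]
      push_cast at hml ⊢
      set M : ℝ := (m.natAbs:ℝ)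
      have hl : (0:ℝ) ≤ l := Nat.cast_nonneg l
      rw [← mul_div_assoc, ← mul_div_assoc, div_le_div_iff₀ (by positivity) (by positivity)]
      have : 0 ≤ (2*(l:ℝ)+3) * (((l:ℝ)+2)^2*(4*((l:ℝ)+1)^2+4*((l:ℝ)+1)-4)+M^2*(4*((l:ℝ)+1)+7)) := by
        have : 0 ≤ 4*((l:ℝ)+1)^2+4*((l:ℝ)+1)-4 := by nlinarith
        positivity
      linarith
  rw [gammaLM, abs_div, abs_neg, abs_of_nonneg (mul_nonneg (by positivity) (beta_nonneg _ _)), abs_of_pos (by positivity),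
    div_le_iff₀ (by positivity)]
  linarith

lemma gamma_nonpos (l : ℕ) (m : ℤ) : gammaLM l m ≤ 0 := by
  rw [gammaLM]
  have := beta_nonneg l m
  have := beta_nonneg (l+1) m
  exact div_nonpos_of_nonpos_of_nonneg (by simp; positivity) (by positivity)

lemma Gamma_bd (m : ℤ) (k : ℕ) : |GammaKM m k| ≤ (1/3)^k := by
  rw [GammaKM, Finset.abs_prod]
  calc ∏ j ∈ Finset.Icc 1 k, |gammaLM (m.natAbs + 2*j - 1) m| ≤ ∏ j ∈ Finset.Icc 1 k, (1/3:ℝ) := by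
        refine Finset.prod_le_prod (fun _ _ => abs_nonneg _) fun j hj => gamma_bd _ _ ?_
        rw [Finset.mem_Icc] at hj; omega
    _ = (1/3)^k := by simp

/-- `‖a_l‖² ≤ |f̂|²/(9 (n+1)(l+1))`, l = M + n -/
lemma aCoef_bd (f : ℝ → ℝ → ℂ) (m : ℤ) (n : ℕ) :
    ‖aCoef f (m.natAbs + n) m‖^2 * (9 * ((n:ℝ)+1) * ((m.natAbs:ℝ)+n+1)) ≤ ‖flCoeff f (m.natAbs+n) m‖^2 := by
  have hb := beta_pos (m.natAbs+n) m (by omega)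
  have h2 := beta_sq (m.natAbs+n) m (by omega)
  rw [aCoef, norm_div, Complex.norm_real, Real.norm_of_nonneg (by positivity), div_pow, mul_pow, mul_pow, h2]
  push_cast
  set M : ℝ := (m.natAbs:ℝ) with hM
  have hM0 : 0 ≤ M := Nat.cast_nonneg _
  set N : ℝ := (n:ℝ)
  have hN0 : 0 ≤ N := Nat.cast_nonneg _
  have hden : 9 * (N+1) * (M+N+1) ≤ 6^2 * (M+N+2)^2 * ((M+N+1-M)*(M+N+1+M)/((2*(M+N)+1)*(2*(M+N)+3))) := by
    rw [← mul_div_assoc, le_div_iff₀ (by positivity)]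
    have h1 : (2*(M+N)+1)*(2*(M+N)+3) ≤ 4 * (M+N+2)^2 := by nlinarith
    calc 9 * (N+1) * (M+N+1) * ((2*(M+N)+1)*(2*(M+N)+3)) ≤ 9 * (N+1) * (M+N+1) * (4 * (M+N+2)^2) := by gcongr
      _ ≤ 9 * (N+1) * (M+N+1+M) * (4 * (M+N+2)^2) := by
          have : M+N+1 ≤ M+N+1+M := by linarith
          gcongr
      _ = _ := by ring
  have hpos : 0 < 9 * (N+1) * (M+N+1) := by positivity
  rw [div_mul_eq_mul_div, div_le_iff₀ (lt_of_lt_of_le hpos hden)]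
  exact mul_le_mul_of_nonneg_left hden (by positivity)

lemma conv_sum {z x : ℕ → ℝ} (hz : ∀ n, 0 ≤ z n) (h0 : z 0 = 0) (h1 : z 1 = 0)
    (hr : ∀ n, z (n+2) ≤ z n / 2 + x n) (N : ℕ) :
    ∑ n ∈ Finset.range (N+2), z n ≤ 2 * ∑ n ∈ Finset.range N, x n := by
  have e : ∑ n ∈ Finset.range (N+2), z n = ∑ n ∈ Finset.range N, z (n+2) := by
    rw [Finset.sum_range_succ', Finset.sum_range_succ', h0]
    simp [h1]
  have e2 : ∑ n ∈ Finset.range N, z (n+2) ≤ (∑ n ∈ Finset.range N, z n)/2 + ∑ n ∈ Finset.range N, x n := by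
    rw [Finset.sum_div, ← Finset.sum_add_distrib]
    exact Finset.sum_le_sum fun n _ => hr n
  have e3 : ∑ n ∈ Finset.range N, z n ≤ ∑ n ∈ Finset.range (N+2), z n :=
    Finset.sum_le_sum_of_subset_of_nonneg (Finset.range_mono (by omega)) fun n _ _ => hz n
  linarith

/-- weighted square summability in `(m, n)`, `l = |m| + n` -/
def Wt (t : ℝ) (w : ℕ → ℤ → ℂ) : Prop :=
  Summable fun p : ℤ × ℕ => ((p.1.natAbs:ℝ) + p.2 + 1)^(2*t) * ‖w (p.1.natAbs + p.2) p.1‖^2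

lemma Wt.add {t : ℝ} {w v : ℕ → ℤ → ℂ} (hw : Wt t w) (hv : Wt t v) : Wt t (fun l m => w l m + v l m) := by
  refine Summable.of_nonneg_of_le (fun p => by positivity) (fun p => ?_) ((Summable.add hw hv).mul_left 2)
  have : ‖w (p.1.natAbs + p.2) p.1 + v (p.1.natAbs + p.2) p.1‖^2 ≤ 2 * (‖w (p.1.natAbs + p.2) p.1‖^2 + ‖v (p.1.natAbs + p.2) p.1‖^2) := by
    have h1 := norm_add_le (w (p.1.natAbs + p.2) p.1) (v (p.1.natAbs + p.2) p.1)
    nlinarith [norm_nonneg (w (p.1.natAbs + p.2) p.1 + v (p.1.natAbs + p.2) p.1), sq_nonneg (‖w (p.1.natAbs + p.2) p.1‖ - ‖v (p.1.natAbs + p.2) p.1‖)]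
  calc _ ≤ ((p.1.natAbs:ℝ) + p.2 + 1)^(2*t) * (2 * (‖w (p.1.natAbs + p.2) p.1‖^2 + ‖v (p.1.natAbs + p.2) p.1‖^2)) := by gcongr
    _ = _ := by ring

lemma Wt.nn {t : ℝ} {w : ℕ → ℤ → ℂ} (hw : Wt t w) :
    Summable fun l : ℕ => ((l:ℝ)+1)^(2*t) * nn w l^2 := by
  let G : ℕ × ℤ → ℝ := fun p => if p.2.natAbs ≤ p.1 then ((p.1:ℝ)+1)^(2*t) * ‖w p.1 p.2‖^2 else 0
  let i : ℤ × ℕ → ℕ × ℤ := fun p => (p.1.natAbs + p.2, p.1)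
  have hi : Function.Injective i := by
    rintro ⟨a, b⟩ ⟨c, d⟩ h
    simp only [i, Prod.mk.injEq] at h
    obtain ⟨h1, rfl⟩ := h
    simp; omega
  have hG : Summable G := by
    rw [← hi.summable_iff]
    · refine Summable.congr hw fun p => ?_
      simp [G, i]
    · rintro ⟨l, m⟩ hlm
      simp only [G]
      rw [if_neg]
      intro h
      exact hlm ⟨(m, l - m.natAbs), by simp [i]; omega⟩
  have hG0 : ∀ p, 0 ≤ G p := by
    intro p; simp only [G]; split_ifs <;> positivity
  have h2 := ((summable_prod_of_nonneg hG0).1 hG).2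
  convert h2 using 2 with l
  rw [tsum_eq_sum (s := Finset.Icc (-(l:ℤ)) l)]
  · rw [_root_.nn, Real.sq_sqrt (Finset.sum_nonneg fun _ _ => by positivity), Finset.mul_sum]
    refine Finset.sum_congr rfl fun m hm => ?_
    rw [mem_Icc_abs] at hm
    simp only [G]; rw [if_pos hm]
  · intro m hm
    rw [mem_Icc_abs] at hm
    simp only [G]; rw [if_neg hm]

lemma summable_rpow_shift {p : ℝ} (hp : p < -1) : Summable fun l : ℕ => ((l:ℝ)+1)^p := by
  have := (summable_nat_add_iff (f := fun l : ℕ => (l:ℝ)^p) 1).2 (Real.summable_nat_rpow.2 hp)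
  simpa using this

lemma Wt.H1 {t : ℝ} {w : ℕ → ℤ → ℂ} (hw : Wt t w) (ht : 2 < t) : H1 w := by
  have h1 := hw.nn
  have h2 := summable_rpow_shift (p := 3 - 2*t) (by linarith)
  refine Summable.of_nonneg_of_le (fun l => mul_nonneg (by positivity) (nn_nonneg _ _)) (fun l => ?_) (h1.add h2)
  have hL : (0:ℝ) < (l:ℝ)+1 := by positivity
  set L : ℝ := (l:ℝ)+1
  set y := _root_.nn w l
  have hy : 0 ≤ y := nn_nonneg _ _
  have a1 : √((l:ℝ)+2) ≤ √2 * √L := by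
    rw [← Real.sqrt_mul (by norm_num)]; apply Real.sqrt_le_sqrt; simp only [L]; linarith [(Nat.cast_nonneg l : (0:ℝ) ≤ l)]
  have a2 : L^(2*t) = (L^t)^2 := by rw [← Real.rpow_natCast, ← Real.rpow_mul hL.le]; norm_num; ring_nf
  have a3 : L^(3-2*t) = (L^(3/2-t))^2 := by rw [← Real.rpow_natCast, ← Real.rpow_mul hL.le]; norm_num; ring_nf
  have a4 : L * √L = L^t * L^(3/2-t) := by
    rw [← Real.rpow_add hL, Real.sqrt_eq_rpow]
    nth_rewrite 1 [← Real.rpow_one L]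
    rw [← Real.rpow_add hL]; norm_num
  have a5 : √2 ≤ 2 := by rw [Real.sqrt_le_left (by norm_num)]; norm_num
  rw [a2, a3]
  calc L * √((l:ℝ)+2) * y ≤ L * (√2 * √L) * y := by gcongr
    _ = √2 * ((L * √L) * y) := by ring
    _ ≤ 2 * ((L * √L) * y) := by gcongr
    _ = 2 * (L^t * y) * L^(3/2-t) := by rw [a4]; ring
    _ ≤ _ := by nlinarith [sq_nonneg (L^t * y - L^(3/2-t))]

lemma Wt.H0 {t : ℝ} {w : ℕ → ℤ → ℂ} (hw : Wt t w) (ht : 1 < t) : H0 w := by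
  have h1 := hw.nn
  have h2 := summable_rpow_shift (p := 1 - 2*t) (by linarith)
  refine Summable.of_nonneg_of_le (fun l => mul_nonneg (nn_nonneg _ _) (by positivity)) (fun l => ?_) (h1.add h2)
  have hL : (0:ℝ) < (l:ℝ)+1 := by positivity
  set L : ℝ := (l:ℝ)+1
  set y := _root_.nn w l
  have hy : 0 ≤ y := nn_nonneg _ _
  have a2 : L^(2*t) = (L^t)^2 := by rw [← Real.rpow_natCast, ← Real.rpow_mul hL.le]; norm_num; ring_nf
  have a3 : L^(1-2*t) = (L^(1/2-t))^2 := by rw [← Real.rpow_natCast, ← Real.rpow_mul hL.le]; norm_num; ring_nf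
  have a4 : √L = L^t * L^(1/2-t) := by
    rw [← Real.rpow_add hL, Real.sqrt_eq_rpow]; norm_num
  rw [a2, a3, a4]
  nlinarith [sq_nonneg (L^t * y - L^(1/2-t)), mul_nonneg (mul_nonneg (Real.rpow_nonneg hL.le t) hy) (Real.rpow_nonneg hL.le (1/2-t))]
end

/-! Part E2 -/
noncomputable section
open MeasureTheory Real Filter Topology

/-- combined weighted density -/
def g2 (s : ℝ) (f : ℝ → ℝ → ℂ) (m : ℤ) (n : ℕ) : ℝ :=
  ((m.natAbs:ℝ)+n+1)^(2*s) * ‖flCoeff f (m.natAbs+n) m‖^2 * (1 + (m.natAbs:ℝ)^2/((m.natAbs:ℝ)+n+1))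

lemma g2_nonneg (s : ℝ) (f : ℝ → ℝ → ℂ) (m : ℤ) (n : ℕ) : 0 ≤ g2 s f m n := by unfold g2; positivity

lemma g2_ge (s : ℝ) (f : ℝ → ℝ → ℂ) (m : ℤ) (n : ℕ) :
    ‖aCoef f (m.natAbs + n) m‖^2 * (((m.natAbs:ℝ)+n+1)^(2*s) * (9 * ((n:ℝ)+1) * (((m.natAbs:ℝ)+n+1) + (m.natAbs:ℝ)^2))) ≤ g2 s f m n := by
  have h := aCoef_bd f m n
  rw [g2]
  set y := ‖aCoef f (m.natAbs + n) m‖^2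
  set L : ℝ := (m.natAbs:ℝ)+n+1 with hL
  have hL0 : 0 < L := by positivity
  set M : ℝ := (m.natAbs:ℝ)
  have e : 1 + M^2/L = (L+M^2)/L := by field_simp
  rw [e]
  calc y * (L^(2*s) * (9 * ((n:ℝ)+1) * (L+M^2))) = L^(2*s) * (y * (9 * ((n:ℝ)+1) * L)) * ((L+M^2)/L) := by
        field_simp
    _ ≤ _ := by gcongr

lemma a_bd1 {s t : ℝ} (ht : t ≤ s + 1) (f : ℝ → ℝ → ℂ) (m : ℤ) (n : ℕ) :
    ((m.natAbs:ℝ)+n+1)^(2*t) * ‖aCoef f (m.natAbs + n) m‖^2 ≤ g2 s f m n := by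
  refine le_trans ?_ (g2_ge s f m n)
  rw [mul_comm]
  refine mul_le_mul_of_nonneg_left ?_ (by positivity)
  set M : ℝ := (m.natAbs:ℝ) with hM
  set N : ℝ := (n:ℝ)
  have hM0 : 0 ≤ M := Nat.cast_nonneg _
  have hN0 : 0 ≤ N := Nat.cast_nonneg _
  have h1 : (M+N+1)^(2*t) ≤ (M+N+1)^(2*s) * (M+N+1)^2 := by
    rw [← Real.rpow_natCast (M+N+1) 2, ← Real.rpow_add (by positivity)]
    exact Real.rpow_le_rpow_of_exponent_le (by linarith) (by push_cast; linarith)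
  refine h1.trans (mul_le_mul_of_nonneg_left ?_ (by positivity))
  have hMN : 0 ≤ M * N := by positivity
  nlinarith [mul_nonneg hMN hM0, sq_nonneg (M), sq_nonneg N]

lemma a_bd2 {s s' : ℝ} (h0 : 0 ≤ s') (h1 : s' ≤ s) (f : ℝ → ℝ → ℂ) (m : ℤ) (n : ℕ) :
    ‖aCoef f (m.natAbs + n) m‖^2 * (((m.natAbs:ℝ)+1)^(2*(s'+1)) * ((n:ℝ)+1)^(1+2*(s-s'))) ≤ g2 s f m n := by
  refine le_trans ?_ (g2_ge s f m n)
  refine mul_le_mul_of_nonneg_left ?_ (by positivity)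
  set M : ℝ := (m.natAbs:ℝ) with hM
  set N : ℝ := (n:ℝ)
  have hM0 : 0 ≤ M := Nat.cast_nonneg _
  have hN0 : 0 ≤ N := Nat.cast_nonneg _
  have e1 : (M+N+1)^(2*s) = (M+N+1)^(2*s') * (M+N+1)^(2*(s-s')) := by
    rw [← Real.rpow_add (by positivity)]; ring_nf
  have e2 : (M+1)^(2*(s'+1)) = (M+1)^(2*s') * (M+1)^2 := by
    rw [← Real.rpow_natCast (M+1) 2, ← Real.rpow_add (by positivity)]; push_cast; ring_nf
  have e3 : (N+1)^(1+2*(s-s')) = (N+1) * (N+1)^(2*(s-s')) := by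
    rw [Real.rpow_add (by positivity), Real.rpow_one]
  have i1 : (M+1)^(2*s') ≤ (M+N+1)^(2*s') := Real.rpow_le_rpow (by positivity) (by linarith) (by linarith)
  have i2 : (N+1)^(2*(s-s')) ≤ (M+N+1)^(2*(s-s')) := Real.rpow_le_rpow (by positivity) (by linarith) (by linarith)
  have i3 : (M+1)^2 ≤ 9 * ((M+N+1)+M^2) := by nlinarith
  rw [e1, e2, e3]
  calc (M+1)^(2*s') * (M+1)^2 * ((N+1) * (N+1)^(2*(s-s'))) 
      ≤ (M+N+1)^(2*s') * (9 * ((M+N+1)+M^2)) * ((N+1) * (M+N+1)^(2*(s-s'))) := by gcongr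
    _ = _ := by ring

lemma bSeq_bd (f : ℝ → ℝ → ℂ) (m : ℤ) (n : ℕ) :
    ‖bSeq f m (n+2)‖ ≤ ‖bSeq f m n‖/3 + ‖aCoef f (m.natAbs+n) m‖ := by
  rw [bSeq]
  refine (norm_add_le _ _).trans ?_
  rw [norm_mul, Complex.norm_real, Real.norm_eq_abs]
  have := mul_le_mul_of_nonneg_right (gamma_bd (m.natAbs+n) m (by omega)) (norm_nonneg (bSeq f m n))
  linarith

lemma bCoef_eq (f : ℝ → ℝ → ℂ) (m : ℤ) (n : ℕ) : bCoef f (m.natAbs+n) m = bSeq f m (n+1) := by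
  rw [bCoef]; congr 1; omega

lemma Wt_b {s t : ℝ} (f : ℝ → ℝ → ℂ) (ht0 : 0 ≤ t) (ht : t ≤ s+1) (ht2 : 2*t ≤ 5)
    (hg : Summable fun p : ℤ × ℕ => g2 s f p.1 p.2) : Wt t (bCoef f) := by
  have main : ∀ (m : ℤ) (N : ℕ), ∑ n ∈ Finset.range N, ((m.natAbs:ℝ) + n + 1)^(2*t) * ‖bCoef f (m.natAbs + n) m‖^2
      ≤ 2 * (4 * 20^(2*t) * ∑ n ∈ Finset.range N, g2 s f m n) := by
    intro m N
    let z : ℕ → ℝ := fun n => ((m.natAbs:ℝ) + n + 20)^(2*t) * ‖bSeq f m n‖^2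
    let x : ℕ → ℝ := fun n => 4 * ((m.natAbs:ℝ) + n + 20)^(2*t) * ‖aCoef f (m.natAbs+n) m‖^2
    have hr : ∀ n, z (n+2) ≤ z n / 2 + x n := by
      intro n
      have h1 := bSeq_bd f m n
      simp only [z, x]
      push_cast
      set A : ℝ := (m.natAbs:ℝ) + n + 20 with hA
      have hA0 : (20:ℝ) ≤ A := by rw [hA]; linarith [(Nat.cast_nonneg n : (0:ℝ) ≤ n), (Nat.cast_nonneg m.natAbs : (0:ℝ) ≤ m.natAbs)]
      have h2 : ((m.natAbs:ℝ) + (n+2) + 20)^(2*t) ≤ 2 * A^(2*t) := by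
        calc ((m.natAbs:ℝ) + (n+2) + 20)^(2*t) ≤ (11/10 * A)^(2*t) := by
              refine Real.rpow_le_rpow (by positivity) ?_ (by linarith)
              linarith
          _ = (11/10)^(2*t) * A^(2*t) := Real.mul_rpow (by norm_num) (by linarith)
          _ ≤ 2 * A^(2*t) := by
              refine mul_le_mul_of_nonneg_right ?_ (Real.rpow_nonneg (by linarith) _)
              calc (11/10:ℝ)^(2*t) ≤ (11/10:ℝ)^(5:ℝ) := Real.rpow_le_rpow_of_exponent_le (by norm_num) ht2
                _ ≤ 2 := by norm_num
      have h3 : ‖bSeq f m (n+2)‖^2 ≤ ‖bSeq f m n‖^2/4 + 2 * ‖aCoef f (m.natAbs+n) m‖^2 := by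
        set u := ‖bSeq f m n‖
        set v := ‖aCoef f (m.natAbs+n) m‖
        have : ‖bSeq f m (n+2)‖^2 ≤ (u/3+v)^2 := pow_le_pow_left₀ (norm_nonneg _) h1 2
        nlinarith [sq_nonneg (u/3 - v), sq_nonneg u, sq_nonneg v]
      calc _ ≤ 2 * A^(2*t) * (‖bSeq f m n‖^2/4 + 2 * ‖aCoef f (m.natAbs+n) m‖^2) := by
            refine mul_le_mul h2 h3 (by positivity) (by positivity)
        _ = _ := by ring
    have h0 := conv_sum (z := z) (x := x) (fun n => by positivity) (by simp [z, bSeq]) (by simp [z, bSeq]) hr N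
    calc _ ≤ ∑ n ∈ Finset.range N, z (n+1) := by
          refine Finset.sum_le_sum fun n _ => ?_
          rw [bCoef_eq]
          simp only [z]
          refine mul_le_mul_of_nonneg_right (Real.rpow_le_rpow (by positivity) (by push_cast; linarith) (by linarith)) (by positivity)
      _ ≤ ∑ n ∈ Finset.range (N+1), z n := by
          rw [Finset.sum_range_succ']
          simp [z, bSeq]
      _ ≤ ∑ n ∈ Finset.range (N+2), z n := Finset.sum_le_sum_of_subset_of_nonneg (Finset.range_mono (by omega)) fun n _ _ => by positivity
      _ ≤ _ := h0
      _ ≤ _ := by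
          rw [Finset.mul_sum (a := (4 * 20^(2*t) : ℝ))]
          refine mul_le_mul_of_nonneg_left (Finset.sum_le_sum fun n _ => ?_) (by norm_num)
          have h5 := a_bd1 ht f m n
          simp only [x]
          have h6 : ((m.natAbs:ℝ) + n + 20)^(2*t) ≤ 20^(2*t) * ((m.natAbs:ℝ)+n+1)^(2*t) := by
            rw [← Real.mul_rpow (by norm_num) (by positivity)]
            refine Real.rpow_le_rpow (by positivity) ?_ (by linarith)
            linarith [(Nat.cast_nonneg n : (0:ℝ) ≤ n), (Nat.cast_nonneg m.natAbs : (0:ℝ) ≤ m.natAbs)]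
          calc _ ≤ 4 * (20^(2*t) * ((m.natAbs:ℝ)+n+1)^(2*t)) * ‖aCoef f (m.natAbs+n) m‖^2 := by gcongr
            _ = 4 * 20^(2*t) * (((m.natAbs:ℝ)+n+1)^(2*t) * ‖aCoef f (m.natAbs+n) m‖^2) := by ring
            _ ≤ _ := by gcongr
  have hg' := (summable_prod_of_nonneg (fun p => g2_nonneg s f p.1 p.2)).1 hg
  have main2 : ∀ (m : ℤ) (N : ℕ), ∑ n ∈ Finset.range N, ((m.natAbs:ℝ) + n + 1)^(2*t) * ‖bCoef f (m.natAbs + n) m‖^2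
      ≤ 2 * (4 * 20^(2*t) * ∑' n, g2 s f m n) := by
    intro m N
    refine (main m N).trans ?_
    have := (hg'.1 m).sum_le_tsum (Finset.range N) (fun n _ => g2_nonneg s f m n)
    gcongr
  unfold Wt
  rw [summable_prod_of_nonneg (fun p => by positivity)]
  have hs : ∀ m : ℤ, Summable fun n : ℕ => ((m.natAbs:ℝ) + n + 1)^(2*t) * ‖bCoef f (m.natAbs + n) m‖^2 :=
    fun m => summable_of_sum_range_le (fun n => by positivity) (main2 m)
  refine ⟨hs, ?_⟩
  refine Summable.of_nonneg_of_le (fun m => tsum_nonneg fun n => by positivity) (fun m => ?_) ((hg'.2.mul_left (4 * 20^(2*t))).mul_left 2)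
  exact Real.tsum_le_of_sum_range_le (fun n => by positivity) (main2 m)

lemma bsum_bd {s s' : ℝ} (h0 : 0 ≤ s') (h1 : s' < s) (f : ℝ → ℝ → ℂ)
    (hg : Summable fun p : ℤ × ℕ => g2 s f p.1 p.2) :
    ∃ C : ℝ, 0 ≤ C ∧ ∀ (m : ℤ) (N : ℕ), ((m.natAbs:ℝ)+1)^(2*(s'+1)) * (∑ k ∈ Finset.range N, ‖bCoef f (m.natAbs+2*k) m‖)^2
      ≤ C * ∑' n, g2 s f m n := by
  have hp := summable_rpow_shift (p := -(1 + 2*(s-s'))) (by linarith)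
  have hg' := (summable_prod_of_nonneg (fun p => g2_nonneg s f p.1 p.2)).1 hg
  set Z := ∑' n : ℕ, ((n:ℝ)+1)^(-(1 + 2*(s-s')))
  have hZ : 0 ≤ Z := tsum_nonneg fun n => by positivity
  refine ⟨4 * Z, by positivity, fun m N => ?_⟩
  have s1 : ∑ k ∈ Finset.range N, ‖bCoef f (m.natAbs+2*k) m‖ ≤ ∑ n ∈ Finset.range (2*N+2), ‖bSeq f m n‖ := by
    have : ∑ k ∈ Finset.range N, ‖bCoef f (m.natAbs+2*k) m‖ = ∑ n ∈ (Finset.range N).image (fun k => 2*k+1), ‖bSeq f m n‖ := by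
      rw [Finset.sum_image (by intro a _ b _ h; simp at h; exact h)]
      exact Finset.sum_congr rfl fun k _ => by rw [bCoef_eq]
    rw [this]
    refine Finset.sum_le_sum_of_subset_of_nonneg ?_ fun n _ _ => norm_nonneg _
    intro n hn
    simp only [Finset.mem_image, Finset.mem_range] at hn ⊢
    omega
  have s2 := conv_sum (z := fun n => ‖bSeq f m n‖) (x := fun n => ‖aCoef f (m.natAbs+n) m‖) (fun n => norm_nonneg _)
    (by simp [bSeq]) (by simp [bSeq]) (fun n => (bSeq_bd f m n).trans (by linarith [norm_nonneg (bSeq f m n)])) (2*N)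
  have s3 : ((m.natAbs:ℝ)+1)^(2*(s'+1)) * (∑ n ∈ Finset.range (2*N), ‖aCoef f (m.natAbs+n) m‖)^2 ≤ Z * ∑' n, g2 s f m n := by
    have c1 := Finset.sum_mul_sq_le_sq_mul_sq (Finset.range (2*N)) (fun n : ℕ => √(((n:ℝ)+1)^(-(1 + 2*(s-s')))))
      (fun n => √(((n:ℝ)+1)^(1 + 2*(s-s'))) * ‖aCoef f (m.natAbs+n) m‖)
    have c2 : ∀ n : ℕ, √(((n:ℝ)+1)^(-(1 + 2*(s-s')))) * (√(((n:ℝ)+1)^(1 + 2*(s-s'))) * ‖aCoef f (m.natAbs+n) m‖) = ‖aCoef f (m.natAbs+n) m‖ := by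
      intro n
      rw [← mul_assoc, ← Real.sqrt_mul (by positivity), ← Real.rpow_add (by positivity)]
      simp
    simp only [c2] at c1
    have c3 : ∑ n ∈ Finset.range (2*N), √(((n:ℝ)+1)^(-(1 + 2*(s-s'))))^2 ≤ Z := by
      refine le_trans (le_of_eq (Finset.sum_congr rfl fun n _ => Real.sq_sqrt (by positivity))) ?_
      exact hp.sum_le_tsum _ (fun n _ => by positivity)
    have c4 : ((m.natAbs:ℝ)+1)^(2*(s'+1)) * ∑ n ∈ Finset.range (2*N), (√(((n:ℝ)+1)^(1 + 2*(s-s'))) * ‖aCoef f (m.natAbs+n) m‖)^2 ≤ ∑' n, g2 s f m n := by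
      refine le_trans ?_ ((hg'.1 m).sum_le_tsum (Finset.range (2*N)) (fun n _ => g2_nonneg s f m n))
      rw [Finset.mul_sum]
      refine Finset.sum_le_sum fun n _ => ?_
      rw [mul_pow, Real.sq_sqrt (by positivity)]
      refine le_trans (le_of_eq ?_) (a_bd2 h0 h1.le f m n)
      ring
    calc _ ≤ ((m.natAbs:ℝ)+1)^(2*(s'+1)) * (_ * _) := mul_le_mul_of_nonneg_left c1 (by positivity)
      _ = _ * (((m.natAbs:ℝ)+1)^(2*(s'+1)) * _) := by ring
      _ ≤ _ := mul_le_mul c3 c4 (by positivity) hZ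
  have s4 : ∑ k ∈ Finset.range N, ‖bCoef f (m.natAbs+2*k) m‖ ≤ 2 * ∑ n ∈ Finset.range (2*N), ‖aCoef f (m.natAbs+n) m‖ := s1.trans s2
  have s5 : (∑ k ∈ Finset.range N, ‖bCoef f (m.natAbs+2*k) m‖)^2 ≤ 4 * (∑ n ∈ Finset.range (2*N), ‖aCoef f (m.natAbs+n) m‖)^2 := by
    calc _ ≤ (2 * ∑ n ∈ Finset.range (2*N), ‖aCoef f (m.natAbs+n) m‖)^2 := pow_le_pow_left₀ (Finset.sum_nonneg fun _ _ => norm_nonneg _) s4 2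
      _ = _ := by ring
  calc _ ≤ ((m.natAbs:ℝ)+1)^(2*(s'+1)) * (4 * (∑ n ∈ Finset.range (2*N), ‖aCoef f (m.natAbs+n) m‖)^2) := by gcongr
    _ = 4 * (((m.natAbs:ℝ)+1)^(2*(s'+1)) * (∑ n ∈ Finset.range (2*N), ‖aCoef f (m.natAbs+n) m‖)^2) := by ring
    _ ≤ 4 * (Z * ∑' n, g2 s f m n) := by gcongr
    _ = _ := by ring
end

/-! Part E3 -/
noncomputable section
open MeasureTheory Real Filter Topology

/-- normalized value at the equator -/
def Pq (m : ℤ) (k : ℕ) : ℝ := nrm (m.natAbs+2*k) m.natAbs * q (m.natAbs+2*k) m.natAbs 0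

lemma Pzero_eq (m : ℤ) (k : ℕ) : PzeroM m k = ep m * Pq m k := by
  have h := alphaY_eq (m.natAbs+2*k) m
  rw [PzeroM, assocLegendre, Pq]
  have : ((1:ℝ) - 0^2)^((m.natAbs:ℝ)/2) = 1 := by norm_num
  rw [this, ← mul_assoc (ep m), ← h]
  simp only [q]
  rw [mul_one, mul_assoc]
  rfl

lemma Pq_rec (m : ℤ) (k : ℕ) :
    Pq m (k+1) = -(betaLM (m.natAbs+2*k+1) m / betaLM (m.natAbs+2*k+2) m) * Pq m k := by
  have h := q_mul_t (m.natAbs+2*k) m (by omega) 0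
  have hb := beta_pos (m.natAbs+2*k+1) m (by omega)
  rw [Pq, Pq, show m.natAbs + 2*(k+1) = m.natAbs+2*k+2 by ring]
  rw [zero_mul] at h
  have hb' : betaLM (m.natAbs + 2 * k + 2) m ≠ 0 := hb.ne'
  field_simp
  linarith

lemma beta_mono (l : ℕ) (m : ℤ) (hm : m ≠ 0) (h : m.natAbs ≤ l + 1) : betaLM (l+1) m ≤ betaLM (l+2) m := by
  have h1 := beta_sq l m h
  have h2 := beta_sq (l+1) m (by omega)
  have hml : (m.natAbs:ℝ) ≤ l + 1 := by exact_mod_cast h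
  have hm1 : (1:ℝ) ≤ m.natAbs := by exact_mod_cast (show 1 ≤ m.natAbs by omega)
  refine abs_le_of_sq_le_sq' ?_ (beta_nonneg _ _) |>.2
  rw [h1, h2]
  push_cast
  have hl : (0:ℝ) ≤ l := Nat.cast_nonneg l
  rw [div_le_div_iff₀ (by positivity) (by positivity)]
  nlinarith [mul_nonneg (show (0:ℝ) ≤ 2*l+3 by linarith) (show (0:ℝ) ≤ 4*(m.natAbs:ℝ)^2 - 1 by nlinarith)]

lemma Pq_le (m : ℤ) (hm : m ≠ 0) (k : ℕ) : |Pq m k| ≤ Pq m 0 := by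
  induction k with
  | zero =>
    rw [abs_of_nonneg]
    rw [Pq]; exact mul_nonneg (nrm_pos _ _).le (q_diag_pos _ _).le
  | succ k ih =>
    refine le_trans ?_ ih
    rw [Pq_rec, abs_mul, abs_neg]
    have hb := beta_pos (m.natAbs+2*k+1) m (by omega)
    rw [abs_of_nonneg (div_nonneg (beta_nonneg _ _) (beta_nonneg _ _))]
    refine mul_le_of_le_one_left (abs_nonneg _) ?_
    rw [div_le_one hb]
    exact beta_mono _ m hm (by omega)

lemma Pq0_pos (m : ℤ) : 0 < Pq m 0 := mul_pos (nrm_pos _ _) (q_diag_pos _ _)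

lemma Pq_growth (m : ℤ) (k : ℕ) : |Pq m k| ≤ 2*((m.natAbs:ℝ)+2*k)+1 := by
  have h := sum_nrm_le (m.natAbs+2*k) 0
  have h1 := Finset.single_le_sum (s := Finset.Icc (-((m.natAbs+2*k:ℕ):ℤ)) (m.natAbs+2*k:ℕ))
    (f := fun m' : ℤ => nrm (m.natAbs+2*k) m'.natAbs ^ 2 * ((1-(0:ℝ)^2)^m'.natAbs * (q (m.natAbs+2*k) m'.natAbs 0)^2))
    (fun i _ => by positivity) (a := m) ((mem_Icc_abs _ _).2 (by omega))
  rw [h] at h1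
  have h2 : Pq m k ^2 ≤ (2*((m.natAbs:ℝ)+2*k)+1) := by
    have e : Pq m k ^2 = nrm (m.natAbs+2*k) m.natAbs ^ 2 * ((1-(0:ℝ)^2)^m.natAbs * (q (m.natAbs+2*k) m.natAbs 0)^2) := by
      rw [Pq]; norm_num; ring
    rw [e]
    refine h1.trans ?_
    push_cast
    refine div_le_self (by positivity) ?_
    nlinarith [Real.pi_gt_three]
  have h3 : (1:ℝ) ≤ 2*((m.natAbs:ℝ)+2*k)+1 := by
    have : (0:ℝ) ≤ (m.natAbs:ℝ)+2*k := by positivity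
    linarith
  exact abs_le_of_sq_le_sq (by nlinarith) (by linarith)

lemma GP_summable (m : ℤ) : Summable fun k => GammaKM m k * PzeroM m k := by
  have ha : Summable fun k : ℕ => (1/3:ℝ)^k :=
    summable_geometric_of_lt_one (by norm_num) (by norm_num)
  have hb : Summable fun k : ℕ => (k:ℝ)^1 * (1/3:ℝ)^k :=
    summable_pow_mul_geometric_of_norm_lt_one (R := ℝ) (r := 1/3) 1 (by rw [Real.norm_eq_abs]; norm_num [abs_of_pos])
  have h1 : Summable fun k : ℕ => (2*(m.natAbs:ℝ)+1) * (1/3:ℝ)^k + 4 * ((k:ℝ)^1 * (1/3:ℝ)^k) :=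
    Summable.add (ha.mul_left _) (hb.mul_left 4)
  refine Summable.of_norm_bounded h1 fun k => ?_
  rw [norm_mul, Pzero_eq, norm_mul, Real.norm_eq_abs, Real.norm_eq_abs, Real.norm_eq_abs]
  have e : |ep m| = 1 := by
    have := ep_sq m
    rw [← sq_abs] at this
    nlinarith [abs_nonneg (ep m)]
  rw [e, one_mul]
  calc _ ≤ (1/3:ℝ)^k * (2*((m.natAbs:ℝ)+2*k)+1) := mul_le_mul (Gamma_bd m k) (Pq_growth m k) (abs_nonneg _) (by positivity)
    _ = _ := by ring

lemma GP_sign (m : ℤ) (k : ℕ) : 0 ≤ GammaKM m k * Pq m k := by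
  induction k with
  | zero => simp [GammaKM]; exact (Pq0_pos m).le
  | succ k ih =>
    rw [Pq_rec, GammaKM, Finset.prod_Icc_succ_top (by omega), ← GammaKM]
    have h1 := gamma_nonpos (m.natAbs + 2*(k+1) - 1) m
    have h2 : 0 ≤ betaLM (m.natAbs+2*k+1) m / betaLM (m.natAbs+2*k+2) m := div_nonneg (beta_nonneg _ _) (beta_nonneg _ _)
    have := mul_nonneg (mul_nonneg (neg_nonneg.2 h1) h2) ih
    linarith

/-- denominator -/
def DD (m : ℤ) : ℝ := ∑' k : ℕ, GammaKM m k * PzeroM m k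

lemma ep_abs (m : ℤ) : |ep m| = 1 := by
  have := ep_sq m
  rw [← sq_abs] at this
  nlinarith [abs_nonneg (ep m)]

lemma DD_ge (m : ℤ) : Pq m 0 ≤ |DD m| := by
  have h := GP_summable m
  have e : DD m = ep m * ∑' k : ℕ, GammaKM m k * Pq m k := by
    rw [DD, ← tsum_mul_left]
    refine tsum_congr fun k => ?_
    rw [Pzero_eq]; ring
  have h' : Summable fun k => GammaKM m k * Pq m k := by
    refine (h.mul_left (ep m)).congr fun k => ?_
    rw [Pzero_eq]
    linear_combination (GammaKM m k * Pq m k) * ep_sq m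
  rw [e, abs_mul, ep_abs, one_mul, abs_of_nonneg (tsum_nonneg (GP_sign m))]
  have := h'.le_tsum 0 (fun j _ => GP_sign m j)
  simpa [GammaKM] using this

lemma DD_ne (m : ℤ) : DD m ≠ 0 := by
  intro h
  have h1 := DD_ge m
  rw [h, abs_zero] at h1
  linarith [Pq0_pos m]

lemma Pq0_sq (m : ℤ) : √((m.natAbs:ℝ)+1) ≤ 4*π * Pq m 0^2 := by
  have key : ∀ M : ℕ, ((M:ℝ)+1) ≤ (4*π * (nrm M M * q M M 0)^2)^2 := by
    intro M
    induction M with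
    | zero =>
      rw [mul_pow (nrm 0 0), nrm_sq, q_zero_zero]; simp [kap]
      field_simp; norm_num
    | succ M ih =>
      have e : 4*π * (nrm (M+1) (M+1) * q (M+1) (M+1) 0)^2 = (2*M+3)/(2*M+2) * (4*π * (nrm M M * q M M 0)^2) := by
        rw [mul_pow, mul_pow, nrm_sq, nrm_sq, q_diag]
        have : kap (M+1) (M+1) * ((2*M+1)*(2*M+2)) = kap M M := by
          unfold kap
          rw [show M + 1 + (M+1) = (M+M+1)+1 by ring, Nat.factorial_succ, Nat.factorial_succ]
          simp
          field_simp
          ring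
        rw [← this]
        push_cast
        field_simp
        ring
      rw [e, mul_pow]
      have h1 : ((M:ℝ)+2)/((M:ℝ)+1) ≤ ((2*M+3)/(2*M+2))^2 := by
        rw [div_pow, div_le_div_iff₀ (by positivity) (by positivity)]
        nlinarith [(Nat.cast_nonneg M : (0:ℝ) ≤ M)]
      calc ((M+1:ℕ):ℝ)+1 = ((M:ℝ)+2)/((M:ℝ)+1) * ((M:ℝ)+1) := by push_cast; field_simp; ring
        _ ≤ _ := by gcongr
  have := key m.natAbs
  rw [Real.sqrt_le_left (by positivity)]
  simpa [Pq] using this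

lemma aTilde_bd (f : ℝ → ℝ → ℂ) (h : ℝ → ℂ) (m : ℤ) (hm : m ≠ 0)
    (hs : Summable fun k : ℕ => ‖bCoef f (m.natAbs+2*k) m‖) :
    ‖aTilde f h m‖ ≤ ‖equatorCoeff h m‖ / Pq m 0 + ∑' k : ℕ, ‖bCoef f (m.natAbs+2*k) m‖ := by
  have hP := Pq0_pos m
  have hD := DD_ge m
  have e1 : ‖∑' k : ℕ, bCoef f (m.natAbs + 2 * k) m * ((PzeroM m k : ℝ) : ℂ)‖ ≤ (∑' k : ℕ, ‖bCoef f (m.natAbs+2*k) m‖) * Pq m 0 := by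
    refine tsum_of_norm_bounded (hs.hasSum.mul_right (Pq m 0)) fun k => ?_
    rw [norm_mul, Complex.norm_real, Pzero_eq, norm_mul, Real.norm_eq_abs, Real.norm_eq_abs, ep_abs, one_mul]
    exact mul_le_mul_of_nonneg_left (Pq_le m hm k) (norm_nonneg _)
  have e2 : ‖(((∑' k : ℕ, GammaKM m k * PzeroM m k : ℝ)) : ℂ)‖ = |DD m| := by
    rw [Complex.norm_real]; rfl
  rw [aTilde, norm_div, e2]
  calc _ ≤ _ / Pq m 0 := div_le_div_of_nonneg_left (norm_nonneg _) hP hD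
    _ ≤ (‖equatorCoeff h m‖ + (∑' k : ℕ, ‖bCoef f (m.natAbs+2*k) m‖) * Pq m 0) / Pq m 0 := by
        refine div_le_div_of_nonneg_right ?_ hP.le
        exact (norm_sub_le _ _).trans (by linarith)
    _ = _ := by field_simp

lemma aTilde_summable {s s' : ℝ} (h0 : 0 ≤ s') (h1 : s' < s) (f : ℝ → ℝ → ℂ) (h : ℝ → ℂ)
    (hg : Summable fun p : ℤ × ℕ => g2 s f p.1 p.2)
    (hh : Summable fun m : ℤ => ((m.natAbs : ℝ) + 1) ^ (2 * (s+3/4)) * ‖equatorCoeff h m‖ ^ 2) :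
    Summable fun m : ℤ => ((m.natAbs:ℝ)+1)^(2*(s'+1)) * ‖aTilde f h m‖^2 := by
  obtain ⟨C, hC, hb⟩ := bsum_bd h0 h1 f hg
  have hg' := (summable_prod_of_nonneg (fun p => g2_nonneg s f p.1 p.2)).1 hg
  have hz : Summable fun m : ℤ => if m = 0 then ((m.natAbs:ℝ)+1)^(2*(s'+1)) * ‖aTilde f h m‖^2 else 0 :=
    summable_of_ne_finset_zero (s := {0}) (fun m hm => by simp at hm; simp [hm])
  refine Summable.of_nonneg_of_le (fun m => by positivity) (fun m => ?_)
    (((hh.mul_left (2*(4*π))).add ((hg'.2.mul_left C).mul_left 2)).add hz)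
  by_cases hm : m = 0
  · rw [if_pos hm]
    have h2 : 0 ≤ 2 * (C * ∑' n, g2 s f m n) := mul_nonneg (by norm_num) (mul_nonneg hC (tsum_nonneg fun n => g2_nonneg _ _ _ _))
    have h3 : 0 ≤ 2*(4*π) * (((m.natAbs : ℝ) + 1) ^ (2 * (s+3/4)) * ‖equatorCoeff h m‖ ^ 2) := by positivity
    linarith
  rw [if_neg hm, add_zero]
  set A : ℝ := ((m.natAbs:ℝ)+1)^(2*(s'+1)) with hA
  have hA0 : 0 < A := by positivity
  set X := ∑' n, g2 s f m n
  have hX : 0 ≤ X := tsum_nonneg fun n => g2_nonneg _ _ _ _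
  have hb2 : ∀ N, ∑ k ∈ Finset.range N, ‖bCoef f (m.natAbs+2*k) m‖ ≤ √(C * X / A) := by
    intro N
    refine Real.le_sqrt_of_sq_le ?_
    rw [le_div_iff₀ hA0, mul_comm]
    exact hb m N
  have hs : Summable fun k : ℕ => ‖bCoef f (m.natAbs+2*k) m‖ := summable_of_sum_range_le (fun k => norm_nonneg _) hb2
  have hS := Real.tsum_le_of_sum_range_le (fun k => norm_nonneg (bCoef f (m.natAbs+2*k) m)) hb2
  set S := ∑' k : ℕ, ‖bCoef f (m.natAbs+2*k) m‖
  have hS0 : 0 ≤ S := tsum_nonneg fun k => norm_nonneg _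
  have hS2 : A * S^2 ≤ C * X := by
    have := pow_le_pow_left₀ hS0 hS 2
    rw [Real.sq_sqrt (by positivity), le_div_iff₀ hA0] at this
    linarith
  have ha := aTilde_bd f h m hm hs
  have hP := Pq0_pos m
  have hP2 := Pq0_sq m
  set E := ‖equatorCoeff h m‖
  have ha2 : ‖aTilde f h m‖^2 ≤ 2 * (E/Pq m 0)^2 + 2 * S^2 := by
    have := pow_le_pow_left₀ (norm_nonneg _) ha 2
    nlinarith [sq_nonneg (E/Pq m 0 - S)]
  have hAE : A * (E/Pq m 0)^2 ≤ 4*π * (((m.natAbs : ℝ) + 1) ^ (2 * (s+3/4)) * E^2) := by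
    rw [div_pow, ← mul_div_assoc, div_le_iff₀ (by positivity)]
    have h5 : A ≤ ((m.natAbs : ℝ) + 1) ^ (2 * (s+3/4)) * √((m.natAbs:ℝ)+1) := by
      rw [Real.sqrt_eq_rpow, ← Real.rpow_add (by positivity)]
      refine Real.rpow_le_rpow_of_exponent_le ?_ (by linarith)
      linarith [(Nat.cast_nonneg m.natAbs : (0:ℝ) ≤ m.natAbs)]
    calc A * E^2 ≤ (((m.natAbs : ℝ) + 1) ^ (2 * (s+3/4)) * √((m.natAbs:ℝ)+1)) * E^2 := by gcongr
      _ ≤ (((m.natAbs : ℝ) + 1) ^ (2 * (s+3/4)) * (4*π * Pq m 0^2)) * E^2 := by gcongr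
      _ = _ := by ring
  nlinarith [mul_le_mul_of_nonneg_left ha2 hA0.le]

lemma Wt_c {t : ℝ} (f : ℝ → ℝ → ℂ) (h : ℝ → ℂ) (ht0 : 0 ≤ t) (ht2 : 2*t ≤ 5)
    (ha : Summable fun m : ℤ => ((m.natAbs:ℝ)+1)^(2*t) * ‖aTilde f h m‖^2) : Wt t (cCoef f h) := by
  have hgeo : Summable fun n : ℕ => ((n:ℝ)+1)^(5:ℕ) * (1/3:ℝ)^n := by
    have := (summable_nat_add_iff (f := fun n : ℕ => (n:ℝ)^5 * (1/3:ℝ)^n) 1).2 (summable_pow_mul_geometric_of_norm_lt_one 5 (by norm_num))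
    refine (this.mul_left 3).congr fun n => ?_
    push_cast
    rw [pow_succ (1/3:ℝ) n]; ring
  have hprod := ha.mul_of_nonneg hgeo (fun m => by positivity) (fun n => by positivity)
  refine Summable.of_nonneg_of_le (fun p => by positivity) (fun p => ?_) hprod
  obtain ⟨m, n⟩ := p
  simp only
  have h1 : ((m.natAbs:ℝ)+n+1)^(2*t) ≤ ((m.natAbs:ℝ)+1)^(2*t) * ((n:ℝ)+1)^(5:ℕ) := by
    calc ((m.natAbs:ℝ)+n+1)^(2*t) ≤ (((m.natAbs:ℝ)+1) * ((n:ℝ)+1))^(2*t) := by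
          refine Real.rpow_le_rpow (by positivity) ?_ (by linarith)
          have : 0 ≤ (m.natAbs:ℝ) * n := by positivity
          linarith
      _ = ((m.natAbs:ℝ)+1)^(2*t) * ((n:ℝ)+1)^(2*t) := Real.mul_rpow (by positivity) (by positivity)
      _ ≤ _ := by
          refine mul_le_mul_of_nonneg_left ?_ (by positivity)
          rw [← Real.rpow_natCast]
          refine Real.rpow_le_rpow_of_exponent_le ?_ (by push_cast; exact ht2)
          linarith [(Nat.cast_nonneg n : (0:ℝ) ≤ n)]
  have h2 : ‖cCoef f h (m.natAbs+n) m‖^2 ≤ (1/3:ℝ)^n * ‖aTilde f h m‖^2 := by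
    rw [cCoef]
    split_ifs with hc
    · rw [norm_mul, mul_pow, Complex.norm_real, Real.norm_eq_abs]
      refine mul_le_mul_of_nonneg_right ?_ (by positivity)
      have e : m.natAbs + n - m.natAbs = n := by omega
      rw [e] at hc ⊢
      calc |GammaKM m (n/2)|^2 ≤ ((1/3:ℝ)^(n/2))^2 := pow_le_pow_left₀ (abs_nonneg _) (Gamma_bd _ _) 2
        _ = (1/3:ℝ)^n := by rw [← pow_mul]; congr 1; omega
    · simp
  calc _ ≤ (((m.natAbs:ℝ)+1)^(2*t) * ((n:ℝ)+1)^(5:ℕ)) * ((1/3:ℝ)^n * ‖aTilde f h m‖^2) := by gcongr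
    _ = _ := by ring

theorem wc_H1 {s : ℝ} (hs : 1 < s) (f : ℝ → ℝ → ℂ) (h : ℝ → ℂ)
    (hg : Summable fun p : ℤ × ℕ => g2 s f p.1 p.2)
    (hh : Summable fun m : ℤ => ((m.natAbs : ℝ) + 1) ^ (2 * (s+3/4)) * ‖equatorCoeff h m‖ ^ 2) :
    H1 (wc f h) ∧ H1 (bCoef f) := by
  obtain ⟨s', h1, h2⟩ := exists_between (lt_min hs (show (1:ℝ) < 5/4 by norm_num))
  have h3 := lt_of_lt_of_le h2 (min_le_left _ _)
  have h4 := lt_of_lt_of_le h2 (min_le_right _ _)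
  have hb : Wt (s'+1) (bCoef f) := Wt_b f (by linarith) (by linarith) (by linarith) hg
  have hc : Wt (s'+1) (cCoef f h) := Wt_c f h (by linarith) (by linarith) (aTilde_summable (by linarith) h3 f h hg hh)
  exact ⟨(hb.add hc).H1 (by linarith), hb.H1 (by linarith)⟩
end

/-! Part F1 -/
noncomputable section
open MeasureTheory Real Filter Topology

/-- latitude interval -/
abbrev IT : Set ℝ := Set.Icc (-(π/2)) (π/2)
/-- longitude interval -/
abbrev IP : Set ℝ := Set.Ico (-π) π

lemma cos_nonneg_IT {θ : ℝ} (h : θ ∈ IT) : 0 ≤ cos θ := cos_nonneg_of_mem_Icc h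

lemma box_prod : (volume : Measure (ℝ×ℝ)).restrict (IT ×ˢ IP) = (volume.restrict IT).prod (volume.restrict IP) := by
  rw [Measure.volume_eq_prod, Measure.prod_restrict]

lemma ae_box : ∀ᵐ p ∂((volume : Measure (ℝ×ℝ)).restrict (IT ×ˢ IP)), p.1 ∈ IT := by
  refine (ae_restrict_iff' (measurableSet_Icc.prod measurableSet_Ico)).2 (Eventually.of_forall fun p hp => hp.1)

lemma dens_meas : Measurable fun p : ℝ×ℝ => ENNReal.ofReal (Real.cos p.1) := by fun_prop

lemma sphere_integrable_iff (g : ℝ×ℝ → ℂ) :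
    Integrable g sphereMeasure ↔ Integrable (fun p => ((cos p.1:ℝ):ℂ) * g p) ((volume.restrict IT).prod (volume.restrict IP)) := by
  rw [sphereMeasure, integrable_withDensity_iff_integrable_smul' dens_meas (by simp), ← box_prod]
  refine integrable_congr ?_
  filter_upwards [ae_box] with p hp
  rw [ENNReal.toReal_ofReal (cos_nonneg_IT hp), Complex.real_smul]

lemma sphere_integral (g : ℝ×ℝ → ℂ) :
    ∫ p, g p ∂sphereMeasure = ∫ p, ((cos p.1:ℝ):ℂ) * g p ∂((volume.restrict IT).prod (volume.restrict IP)) := by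
  rw [sphereMeasure, integral_withDensity_eq_integral_toReal_smul dens_meas (by simp), ← box_prod]
  refine integral_congr_ae ?_
  filter_upwards [ae_box] with p hp
  rw [ENNReal.toReal_ofReal (cos_nonneg_IT hp), Complex.real_smul]

instance : IsFiniteMeasure sphereMeasure := by
  have h1 : Integrable (fun p : ℝ×ℝ => cos p.1) ((volume : Measure (ℝ×ℝ)).restrict (IT ×ˢ IP)) := by
    rw [box_prod]
    refine Integrable.of_bound (C := 1) (by fun_prop) (Eventually.of_forall fun p => ?_)
    rw [Real.norm_eq_abs]; exact abs_cos_le_one _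
  exact isFiniteMeasure_withDensity_ofReal h1.2

/-- latitudinal factor -/
def AY (l : ℕ) (m : ℤ) (θ : ℝ) : ℝ := alphaY l m * assocLegendre l m.natAbs (sin θ)

lemma AL_cont (l M : ℕ) : Continuous (assocLegendre l M) := by
  unfold assocLegendre
  refine Continuous.mul (Continuous.mul continuous_const ?_) (Polynomial.continuous _)
  exact Continuous.rpow_const (by fun_prop) fun x => Or.inr (by positivity)

lemma AY_cont (l : ℕ) (m : ℤ) : Continuous (AY l m) := by
  have := AL_cont l m.natAbs
  unfold AY; fun_prop

lemma AY_bdd (l : ℕ) (m : ℤ) : ∃ C, ∀ θ, |AY l m θ| ≤ C := by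
  obtain ⟨C, hC⟩ := (isCompact_Icc (a := (-1:ℝ)) (b := 1)).exists_bound_of_continuousOn (AL_cont l m.natAbs).continuousOn
  refine ⟨|alphaY l m| * C, fun θ => ?_⟩
  rw [AY, abs_mul]
  exact mul_le_mul_of_nonneg_left (hC _ ⟨neg_one_le_sin θ, sin_le_one θ⟩) (abs_nonneg _)

lemma Ylm_conj (l : ℕ) (m : ℤ) (θ φ : ℝ) : (starRingEnd ℂ) (Ylm l m θ φ) = (AY l m θ : ℂ) * Complex.exp (-(Complex.I*m*φ)) := by
  rw [Ylm, map_mul, Complex.conj_ofReal, ← Complex.exp_conj, AY]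
  simp

lemma norm_expI (m : ℤ) (φ : ℝ) : ‖Complex.exp (-(Complex.I*m*φ))‖ = 1 := by
  rw [Complex.norm_exp]; simp

lemma Y_mul_integrable (ψ : ℝ×ℝ → ℂ) (hψ : Integrable ψ sphereMeasure) (l : ℕ) (m : ℤ) :
    Integrable (fun p => ψ p * (starRingEnd ℂ) (Ylm l m p.1 p.2)) sphereMeasure := by
  obtain ⟨C, hC⟩ := AY_bdd l m
  have hc := AY_cont l m
  refine hψ.mul_bdd (c := C) ?_ (Eventually.of_forall fun p => ?_)
  · simp only [Ylm_conj]
    exact Continuous.aestronglyMeasurable (by fun_prop)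
  · rw [Ylm_conj, norm_mul, norm_expI, mul_one, Complex.norm_real]; exact hC _

lemma eq_coeff_int (h : ℝ → ℂ) (m : ℤ) : ∫ φ in IP, h φ * Complex.exp (-(Complex.I*m*φ)) = 2*π * equatorCoeff h m := by
  rw [equatorCoeff, intervalIntegral.integral_of_le (by linarith [pi_pos]), ← integral_Ico_eq_integral_Ioc]
  have : (π:ℂ) ≠ 0 := by exact_mod_cast pi_ne_zero
  field_simp

lemma flCoeff_eq (ψ : ℝ → ℝ → ℂ) (hψ : Integrable (fun p : ℝ×ℝ => ψ p.1 p.2) sphereMeasure) (l : ℕ) (m : ℤ) :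
    flCoeff ψ l m = ∫ θ in IT, ((cos θ * AY l m θ : ℝ):ℂ) * (2*π * equatorCoeff (ψ θ) m) := by
  rw [flCoeff, sphere_integral, integral_prod _ ((sphere_integrable_iff _).1 (Y_mul_integrable _ hψ l m))]
  refine integral_congr_ae (Eventually.of_forall fun θ => ?_)
  simp only
  rw [← eq_coeff_int, ← integral_const_mul]
  refine integral_congr_ae (Eventually.of_forall fun φ => ?_)
  simp only [Ylm_conj]
  push_cast; ring

lemma eq_coeff_deriv (h : ℝ → ℂ) (m : ℤ) (hd : Differentiable ℝ h) (hper : ∀ φ, h (φ + 2*π) = h φ)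
    (hi : IntegrableOn (deriv h) IP) : equatorCoeff (deriv h) m = Complex.I * m * equatorCoeff h m := by
  have hi' : IntervalIntegrable (deriv h) volume (-π) π := by
    rw [intervalIntegrable_iff, Set.uIoc_of_le (by linarith [pi_pos])]
    exact (integrableOn_Icc_iff_integrableOn_Ioc (by simp)).1 ((integrableOn_Icc_iff_integrableOn_Ico (by simp)).2 hi)
  have hE : ∀ φ : ℝ, HasDerivAt (fun φ : ℝ => Complex.exp (-(Complex.I*m*φ))) (-(Complex.I*m) * Complex.exp (-(Complex.I*m*φ))) φ := by
    intro φ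
    have h1 : HasDerivAt (fun φ : ℝ => -(Complex.I*m*(φ:ℂ))) (-(Complex.I*m)) φ := by
      refine HasDerivAt.congr_deriv ((Complex.ofRealCLM.hasDerivAt (x := φ)).const_mul (Complex.I*m)).neg ?_
      simp
    refine HasDerivAt.congr_deriv h1.cexp ?_
    ring
  have := intervalIntegral.integral_mul_deriv_eq_deriv_mul (a := -π) (b := π)
    (u := fun φ : ℝ => Complex.exp (-(Complex.I*m*φ))) (v := h)
    (u' := fun φ : ℝ => -(Complex.I*m) * Complex.exp (-(Complex.I*m*φ))) (v' := deriv h)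
    (fun x _ => hE x) (fun x _ => (hd x).hasDerivAt) (Continuous.intervalIntegrable (by fun_prop) _ _) hi'
  have e1 : h π = h (-π) := by rw [← hper (-π)]; congr 1; ring
  have e2 : Complex.exp (-(Complex.I*m*((-π:ℝ):ℂ))) = Complex.exp (-(Complex.I*m*(π:ℂ))) := by
    rw [Complex.exp_eq_exp_iff_exists_int]
    exact ⟨m, by push_cast; ring⟩
  rw [e1, e2, sub_self, zero_sub] at this
  rw [equatorCoeff, equatorCoeff]
  have e3 : ∫ φ in (-π)..π, deriv h φ * Complex.exp (-(Complex.I*m*φ)) = Complex.I * m * ∫ φ in (-π)..π, h φ * Complex.exp (-(Complex.I*m*φ)) := by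
    rw [← intervalIntegral.integral_const_mul]
    calc _ = ∫ φ in (-π)..π, Complex.exp (-(Complex.I*m*φ)) * deriv h φ := by simp only [mul_comm]
      _ = _ := by
        rw [this, ← intervalIntegral.integral_neg]
        refine intervalIntegral.integral_congr fun φ _ => ?_
        ring
  rw [e3]; ring

lemma flCoeff_deriv (f : ℝ → ℝ → ℂ) (hfi : Integrable (fun p : ℝ×ℝ => f p.1 p.2) sphereMeasure)
    (hfd : ∀ θ : ℝ, Differentiable ℝ (f θ))
    (hfper : ∀ θ φ : ℝ, f θ (φ + 2 * Real.pi) = f θ φ)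
    (hi : Integrable (fun p : ℝ×ℝ => deriv (f p.1) p.2) sphereMeasure) (l : ℕ) (m : ℤ) :
    flCoeff (fun θ φ => deriv (f θ) φ) l m = Complex.I * m * flCoeff f l m := by
  rw [flCoeff_eq (fun θ φ => deriv (f θ) φ) hi l m, flCoeff_eq f hfi l m, ← integral_const_mul]
  refine integral_congr_ae ?_
  have h1 := ((sphere_integrable_iff (fun p : ℝ×ℝ => deriv (f p.1) p.2)).1 hi).prod_right_ae
  have h2 : ∀ᵐ θ ∂(volume.restrict IT), 0 < cos θ := by
    rw [ae_restrict_iff' measurableSet_Icc]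
    have h3 : ∀ᵐ θ : ℝ, θ ∉ ({-(π/2), π/2} : Set ℝ) := by
      refine measure_eq_zero_iff_ae_notMem.1 ?_
      exact (Set.toFinite _).measure_zero _
    filter_upwards [h3] with θ h h'
    simp only [Set.mem_insert_iff, Set.mem_singleton_iff, not_or] at h
    exact cos_pos_of_mem_Ioo ⟨lt_of_le_of_ne h'.1 (Ne.symm h.1), lt_of_le_of_ne h'.2 h.2⟩
  filter_upwards [h1, h2] with θ h1 h2
  have h3 : IntegrableOn (deriv (f θ)) IP := by
    refine (h1.const_mul (((cos θ:ℝ):ℂ)⁻¹)).congr (Eventually.of_forall fun φ => ?_)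
    have : ((cos θ:ℝ):ℂ) ≠ 0 := by exact_mod_cast h2.ne'
    simp only
    rw [inv_mul_cancel_left₀ this]
  rw [eq_coeff_deriv (f θ) m (hfd θ) (hfper θ) h3]
  ring

end

/-! Part F2 -/
noncomputable section
open MeasureTheory Real Filter Topology

lemma fourier_pointwise (h : ℝ → ℂ) (hc : Continuous h) (hper : ∀ φ, h (φ + 2*π) = h φ)
    (hs : Summable fun m : ℤ => equatorCoeff h m) (φ : ℝ) :
    HasSum (fun m : ℤ => equatorCoeff h m * Complex.exp (Complex.I*m*φ)) (h φ) := by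
  have : Fact (0 < 2*π) := ⟨by positivity⟩
  have hp : Function.Periodic h (2*π) := hper
  let F : C(AddCircle (2*π), ℂ) := ⟨hp.lift, continuous_coinduced_dom.2 hc⟩
  have hF : ∀ x : ℝ, F (x : AddCircle (2*π)) = h x := fun x => hp.lift_coe x
  have hpi : (π:ℂ) ≠ 0 := by exact_mod_cast pi_ne_zero
  have hcoef : ∀ m, fourierCoeff F m = equatorCoeff h m := by
    intro m
    rw [fourierCoeff_eq_intervalIntegral _ _ (-π), equatorCoeff, show -π + 2*π = π by ring]
    rw [Complex.real_smul]
    congr 1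
    · push_cast; ring
    · refine intervalIntegral.integral_congr fun x _ => ?_
      simp only [hF, smul_eq_mul]
      rw [fourier_coe_apply, mul_comm]
      congr 2
      push_cast; field_simp
  have hs' : Summable (fourierCoeff F) := hs.congr fun m => (hcoef m).symm
  have := has_pointwise_sum_fourier_series_of_summable hs' (φ : AddCircle (2*π))
  rw [hF] at this
  refine HasSum.congr_both this (fun m => ?_) rfl
  rw [hcoef, smul_eq_mul, fourier_coe_apply]
  congr 2
  push_cast; field_simp

/-- reindexing -/
lemma reidx_inj : Function.Injective (fun p : ℤ × ℕ => ((p.1.natAbs + p.2, p.1) : ℕ × ℤ)) := by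
  rintro ⟨a, b⟩ ⟨c, d⟩ h
  simp only [Prod.mk.injEq] at h
  obtain ⟨h1, rfl⟩ := h
  simp only [Prod.mk.injEq, true_and]; omega

lemma Wt_of_Hs {s : ℝ} {f : ℝ → ℝ → ℂ} (hf : MemHs s f) : Wt s (flCoeff f) := by
  refine Summable.congr (hf.2.comp_injective reidx_inj) fun p => ?_
  simp only [Function.comp]
  push_cast
  rfl

lemma g2_summable {s : ℝ} {f : ℝ → ℝ → ℂ} (hfd : ∀ θ : ℝ, Differentiable ℝ (f θ))
    (hfper : ∀ θ φ : ℝ, f θ (φ + 2 * Real.pi) = f θ φ)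
    (hf : MemHs s f)
    (hfφ : MemHs (s - 1 / 2) (fun θ φ => deriv (f θ) φ)) :
    Summable fun p : ℤ × ℕ => g2 s f p.1 p.2 := by
  have h1 := Wt_of_Hs hf
  have h2 := Wt_of_Hs hfφ
  refine Summable.congr (Summable.add h1 h2) fun p => ?_
  rw [flCoeff_deriv f (hf.1.integrable (by norm_num)) hfd hfper (hfφ.1.integrable (by norm_num)), g2, norm_mul, norm_mul]
  have e : ((p.1.natAbs:ℝ) + p.2 + 1)^(2*s) = ((p.1.natAbs:ℝ) + p.2 + 1)^(2*(s-1/2)) * ((p.1.natAbs:ℝ) + p.2 + 1) := by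
    rw [show 2*s = 2*(s-1/2) + 1 by ring, Real.rpow_add_one (by positivity)]
  have e2 : ‖((p.1:ℤ):ℂ)‖ = p.1.natAbs := by
    rw [Complex.norm_intCast, Nat.cast_natAbs, Int.cast_abs]
  have hz : ((p.1.natAbs:ℝ) + p.2 + 1) ≠ 0 := by positivity
  rw [e, e2, Complex.norm_I]
  field_simp

lemma eq_summable {t : ℝ} (ht : 1/2 < t) {h : ℝ → ℂ} (hh : MemHsE t h) : Summable fun m : ℤ => equatorCoeff h m := by
  have h0 : Summable fun n : ℕ => ((n:ℝ)+1)^(-(2*t)) := summable_rpow_shift (by linarith)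
  have h1 : Summable fun m : ℤ => ((m.natAbs:ℝ)+1)^(-(2*t)) := by
    refine Summable.of_nat_of_neg ?_ ?_
    · simpa using h0
    · simpa using h0
  refine Summable.of_norm_bounded (h1.add hh.2) fun m => ?_
  have hp : (0:ℝ) < ((m.natAbs:ℝ)+1)^(2*t) := by positivity
  rw [Real.rpow_neg (by positivity)]
  set A := ((m.natAbs:ℝ)+1)^(2*t)
  set y := ‖equatorCoeff h m‖
  have hy : 0 ≤ y := norm_nonneg _
  have : A⁻¹ + A*y^2 - y = A⁻¹ * ((A*y - 1/2)^2 + 3/4) := by field_simp; ring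
  have : 0 ≤ A⁻¹ + A*y^2 - y := by rw [this]; positivity
  linarith

end

/-! Part F3 -/
noncomputable section
open MeasureTheory Real Filter Topology

lemma AY_eq (l : ℕ) (m : ℤ) (θ : ℝ) :
    AY l m θ = ep m * (1 - sin θ^2)^((m.natAbs:ℝ)/2) * (nrm l m.natAbs * q l m.natAbs (sin θ)) := by
  have h := alphaY_eq l m
  have : AY l m θ = (alphaY l m * (-1)^m.natAbs) * (1 - sin θ^2)^((m.natAbs:ℝ)/2) * q l m.natAbs (sin θ) := by
    rw [AY, assocLegendre]; simp only [q]; rw [← mul_assoc, ← mul_assoc]; rfl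
  rw [this, h]; ring

lemma AY_mul (l l' : ℕ) (m : ℤ) (θ : ℝ) :
    AY l m θ * AY l' m θ = nrm l m.natAbs * nrm l' m.natAbs * ((1 - sin θ^2)^m.natAbs * q l m.natAbs (sin θ) * q l' m.natAbs (sin θ)) := by
  rw [AY_eq, AY_eq]
  have h0 : 0 ≤ 1 - sin θ^2 := by nlinarith [sin_sq_add_cos_sq θ, sq_nonneg (cos θ)]
  have h1 : ((1 - sin θ^2)^((m.natAbs:ℝ)/2))^2 = (1 - sin θ^2)^m.natAbs := by
    generalize 1 - sin θ^2 = x at h0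
    rw [← Real.rpow_natCast, ← Real.rpow_mul h0, ← Real.rpow_natCast]
    congr 1; push_cast; ring
  have h2 := ep_sq m
  rw [← h1]
  linear_combination (((1 - sin θ^2)^((m.natAbs:ℝ)/2))^2 * nrm l m.natAbs * nrm l' m.natAbs * q l m.natAbs (sin θ) * q l' m.natAbs (sin θ)) * h2

lemma int_AY (l l' : ℕ) (m : ℤ) (hl : m.natAbs ≤ l) :
    ∫ θ in IT, cos θ * (AY l m θ * AY l' m θ) = if l = l' then 1/(2*π) else 0 := by
  have e : ∫ θ in IT, cos θ * (AY l m θ * AY l' m θ) = nrm l m.natAbs * nrm l' m.natAbs * NI m.natAbs l l' := by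
    rw [integral_Icc_eq_integral_Ioc, ← intervalIntegral.integral_of_le (by linarith [pi_pos]), NI]
    have h1 := q_continuous l m.natAbs
    have h2 := q_continuous l' m.natAbs
    have := intervalIntegral.integral_comp_mul_deriv (a := -(π/2)) (b := π/2) (f := sin) (f' := cos)
      (g := fun t => (1-t^2)^m.natAbs * q l m.natAbs t * q l' m.natAbs t)
      (fun x _ => hasDerivAt_sin x) continuous_cos.continuousOn (by fun_prop)
    rw [sin_neg, sin_pi_div_two] at this
    rw [← this, ← intervalIntegral.integral_const_mul]
    refine intervalIntegral.integral_congr fun θ _ => ?_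
    simp only [AY_mul, Function.comp]
    ring
  rw [e]
  split_ifs with h
  · subst h
    rw [NI_norm _ _ hl, ← sq, nrm_sq, kap]
    have h1 : ((l+m.natAbs).factorial:ℝ) ≠ 0 := by positivity
    have h2 : ((l-m.natAbs).factorial:ℝ) ≠ 0 := by positivity
    have h3 : (2*(l:ℝ)+1) ≠ 0 := by positivity
    field_simp; norm_num
  · rw [NI_orth _ h, mul_zero]

lemma eq_coeff_exp (c : ℂ) (m m' : ℤ) : equatorCoeff (fun φ => c * Complex.exp (Complex.I*m'*φ)) m = if m = m' then c else 0 := by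
  have e : ∀ φ : ℝ, (c * Complex.exp (Complex.I*m'*φ)) * Complex.exp (-(Complex.I*m*φ)) = c * Complex.exp ((Complex.I*(m'-m))*φ) := by
    intro φ
    rw [mul_assoc, ← Complex.exp_add]; congr 2; ring
  have hpi : (π:ℂ) ≠ 0 := by exact_mod_cast pi_ne_zero
  rw [equatorCoeff]
  simp only [e]
  rw [intervalIntegral.integral_const_mul]
  split_ifs with h
  · subst h
    simp only [sub_self, mul_zero, zero_mul, Complex.exp_zero, intervalIntegral.integral_const]
    rw [Complex.real_smul]
    push_cast; field_simp; ring
  · have hz : Complex.I*((m':ℂ)-m) ≠ 0 := by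
      refine mul_ne_zero Complex.I_ne_zero (sub_ne_zero.2 ?_)
      exact_mod_cast Ne.symm h
    rw [integral_exp_mul_complex hz]
    have : Complex.exp (Complex.I*((m':ℂ)-m) * (π:ℝ)) = Complex.exp (Complex.I*((m':ℂ)-m) * ((-π:ℝ):ℂ)) := by
      rw [Complex.exp_eq_exp_iff_exists_int]
      exact ⟨m'-m, by push_cast; ring⟩
    rw [this]; simp

lemma Ylm_AY (l : ℕ) (m : ℤ) (θ φ : ℝ) : Ylm l m θ φ = (AY l m θ : ℂ) * Complex.exp (Complex.I*m*φ) := rfl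

lemma Ylm_cont (l : ℕ) (m : ℤ) : Continuous fun p : ℝ×ℝ => Ylm l m p.1 p.2 := by
  have := AY_cont l m
  simp only [Ylm_AY]; fun_prop

lemma Ylm_integrable (l : ℕ) (m : ℤ) : Integrable (fun p : ℝ×ℝ => Ylm l m p.1 p.2) sphereMeasure := by
  obtain ⟨C, hC⟩ := AY_bdd l m
  refine Integrable.of_bound (C := C) (Ylm_cont l m).aestronglyMeasurable (Eventually.of_forall fun p => ?_)
  rw [← Complex.norm_conj, Ylm_conj, norm_mul, norm_expI, mul_one, Complex.norm_real]; exact hC _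

lemma Ylm_orth (l l' : ℕ) (m m' : ℤ) (hl : m.natAbs ≤ l) :
    flCoeff (Ylm l' m') l m = if l = l' ∧ m = m' then 1 else 0 := by
  rw [flCoeff_eq _ (Ylm_integrable l' m')]
  have e : ∀ θ, equatorCoeff (Ylm l' m' θ) m = if m = m' then (AY l' m' θ : ℂ) else 0 := fun θ => eq_coeff_exp _ _ _
  simp only [e]
  by_cases h : m = m'
  · subst h
    simp only [if_true, and_true]
    have := int_AY l l' m hl
    have h2 : ∫ θ in IT, ((cos θ * AY l m θ : ℝ):ℂ) * (2*π * (AY l' m θ : ℂ)) = ((2*π * ∫ θ in IT, cos θ * (AY l m θ * AY l' m θ) : ℝ) : ℂ) := by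
      rw [← integral_const_mul, ← integral_complex_ofReal]
      refine integral_congr_ae (Eventually.of_forall fun θ => ?_)
      simp only; push_cast; ring
    rw [h2, this]
    split_ifs
    · have hpi := pi_ne_zero
      rw [mul_one_div_cancel (by positivity)]; simp
    · simp
  · simp [h]

lemma sph_cont : Continuous fun p : ℝ×ℝ => sphCoord p.1 p.2 := by
  unfold sphCoord
  refine (PiLp.continuous_toLp 2 _).comp (continuous_pi fun i => ?_)
  fin_cases i <;> simp <;> fun_prop

lemma GS_cont {w : ℕ → ℤ → ℂ} (h : H0 w) : Continuous fun p : ℝ×ℝ => SS w (sphCoord p.1 p.2) :=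
  (SS_continuousOn h).comp_continuous sph_cont fun _ => sphCoord_mem _ _

lemma cont_integrable {g : ℝ×ℝ → ℂ} (hg : Continuous g) : Integrable g sphereMeasure := by
  obtain ⟨C, hC⟩ := ((isCompact_Icc (a := -(π/2)) (b := π/2)).prod (isCompact_Icc (a := -π) (b := π))).exists_bound_of_continuousOn hg.continuousOn
  refine Integrable.of_bound (C := C) hg.aestronglyMeasurable ?_
  rw [sphereMeasure]
  refine (withDensity_absolutelyContinuous _ _).ae_le ?_
  refine (ae_restrict_iff' (measurableSet_Icc.prod measurableSet_Ico)).2 (Eventually.of_forall fun p hp => ?_)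
  exact hC p ⟨hp.1, Set.Ico_subset_Icc_self hp.2⟩

lemma ae_cos : ∀ᵐ p ∂sphereMeasure, 0 ≤ cos p.1 := by
  rw [sphereMeasure]
  refine (withDensity_absolutelyContinuous _ _).ae_le ?_
  filter_upwards [ae_box] with p hp using cos_nonneg_IT hp

lemma flCoeff_SS {w : ℕ → ℤ → ℂ} (h : H0 w) (l : ℕ) (m : ℤ) (hl : m.natAbs ≤ l) :
    flCoeff (fun θ φ => SS w (sphCoord θ φ)) l m = w l m := by
  obtain ⟨C, hC⟩ := AY_bdd l m
  have hC0 : 0 ≤ C := (abs_nonneg _).trans (hC 0)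
  let F : ℕ → ℝ×ℝ → ℂ := fun k p => BB w k (sphCoord p.1 p.2) * (starRingEnd ℂ) (Ylm l m p.1 p.2)
  have hBc : ∀ k, Continuous fun p : ℝ×ℝ => BB w k (sphCoord p.1 p.2) := fun k =>
    (BB_continuousOn w k).comp_continuous sph_cont fun _ => sphCoord_mem _ _
  have hFi : ∀ k, Integrable (F k) sphereMeasure := fun k => Y_mul_integrable _ (cont_integrable (hBc k)) l m
  have hb : ∀ k p, ‖F k p‖ ≤ nn w k * √((k:ℝ)+1) * C := by
    intro k p
    simp only [F]
    rw [norm_mul, Ylm_conj, norm_mul, norm_expI, mul_one, Complex.norm_real]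
    exact mul_le_mul (BB_bound_closed w k (sphCoord_mem _ _)) (hC _) (norm_nonneg _) (mul_nonneg (nn_nonneg _ _) (Real.sqrt_nonneg _))
  have hsum : Summable fun k => ∫ p, ‖F k p‖ ∂sphereMeasure := by
    refine Summable.of_nonneg_of_le (fun k => integral_nonneg fun p => norm_nonneg _) (fun k => ?_) ((h.mul_right C).mul_right (sphereMeasure.real Set.univ))
    calc _ ≤ ∫ p, nn w k * √((k:ℝ)+1) * C ∂sphereMeasure := integral_mono (hFi k).norm (integrable_const _) (hb k)
      _ = _ := by rw [integral_const, smul_eq_mul]; ring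
  have h1 := hasSum_integral_of_summable_integral_norm hFi hsum
  have h2 : ∫ p, ∑' k, F k p ∂sphereMeasure = flCoeff (fun θ φ => SS w (sphCoord θ φ)) l m := by
    rw [flCoeff]
    refine integral_congr_ae (Eventually.of_forall fun p => ?_)
    simp only [F, SS]
    rw [tsum_mul_right]
  have h3 : ∀ k, ∫ p, F k p ∂sphereMeasure = if k = l then w l m else 0 := by
    intro k
    have : ∫ p, F k p ∂sphereMeasure = ∫ p, ∑ m' ∈ Finset.Icc (-(k:ℤ)) k, w k m' * (Ylm k m' p.1 p.2 * (starRingEnd ℂ) (Ylm l m p.1 p.2)) ∂sphereMeasure := by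
      refine integral_congr_ae ?_
      filter_upwards [ae_cos] with p hp
      simp only [F, BB]
      rw [Finset.sum_mul]
      refine Finset.sum_congr rfl fun m' _ => ?_
      rw [EE_sphCoord _ _ _ _ hp, mul_assoc]
    rw [this, integral_finsetSum _ (fun m' _ => (Y_mul_integrable _ (Ylm_integrable k m') l m).const_mul _)]
    have e : ∀ m', ∫ p : ℝ×ℝ, w k m' * (Ylm k m' p.1 p.2 * (starRingEnd ℂ) (Ylm l m p.1 p.2)) ∂sphereMeasure = w k m' * if l = k ∧ m = m' then 1 else 0 := by
      intro m'
      rw [integral_const_mul, ← Ylm_orth l k m m' hl, flCoeff]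
    simp only [e]
    by_cases hk : k = l
    · subst hk
      simp only [true_and, if_true]
      rw [Finset.sum_eq_single m]
      · simp
      · intro b _ hb; simp [Ne.symm hb]
      · intro hm; exact absurd ((mem_Icc_abs _ _).2 hl) hm
    · simp [hk, Ne.symm hk]
  rw [h2] at h1
  simp only [h3] at h1
  exact h1.unique (hasSum_ite_eq l (w l m))

end

/-! Part F4 -/
noncomputable section
open MeasureTheory Real Filter Topology

lemma weier (k : ℝ → ℝ) (hk : Continuous k) (h : ∀ j : ℕ, ∫ θ in (-(π/2))..(π/2), k θ * sin θ^j = 0) :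
    ∀ θ ∈ IT, k θ = 0 := by
  have hle : -(π/2) ≤ π/2 := by linarith [pi_pos]
  have hlt : -(π/2) < π/2 := by linarith [pi_pos]
  have hpoly : ∀ p : Polynomial ℝ, ∫ θ in (-(π/2))..(π/2), k θ * p.eval (sin θ) = 0 := by
    intro p
    induction p using Polynomial.induction_on' with
    | add p r hp hr =>
      simp only [Polynomial.eval_add, mul_add]
      have i1 : IntervalIntegrable (fun θ => k θ * p.eval (sin θ)) volume (-(π/2)) (π/2) :=
        Continuous.intervalIntegrable (hk.mul (p.continuous.comp continuous_sin)) _ _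
      have i2 : IntervalIntegrable (fun θ => k θ * r.eval (sin θ)) volume (-(π/2)) (π/2) :=
        Continuous.intervalIntegrable (hk.mul (r.continuous.comp continuous_sin)) _ _
      rw [intervalIntegral.integral_add i1 i2, hp, hr, add_zero]
    | monomial n a =>
      simp only [Polynomial.eval_monomial]
      have : ∀ θ, k θ * (a * sin θ^n) = a * (k θ * sin θ^n) := fun θ => by ring
      simp only [this]
      rw [intervalIntegral.integral_const_mul, h, mul_zero]
  set J := ∫ θ in (-(π/2))..(π/2), |k θ|
  have hJ : 0 ≤ J := intervalIntegral.integral_nonneg hle fun _ _ => abs_nonneg _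
  have hsq : ∀ ε > 0, ∫ θ in (-(π/2))..(π/2), k θ^2 ≤ ε * J := by
    intro ε he
    obtain ⟨p, hp⟩ := exists_polynomial_near_of_continuousOn (-1) 1 (fun t => k (arcsin t)) (hk.comp continuous_arcsin).continuousOn ε he
    have hps : Continuous fun θ => p.eval (sin θ) := p.continuous.comp continuous_sin
    have e : ∫ θ in (-(π/2))..(π/2), k θ^2 = ∫ θ in (-(π/2))..(π/2), k θ * (k θ - p.eval (sin θ)) := by
      simp only [mul_sub]
      rw [intervalIntegral.integral_sub (Continuous.intervalIntegrable (by fun_prop) _ _) (Continuous.intervalIntegrable (by fun_prop) _ _), hpoly, sub_zero]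
      simp only [sq]
    rw [e, ← intervalIntegral.integral_const_mul]
    refine intervalIntegral.integral_mono_on hle (Continuous.intervalIntegrable (by fun_prop) _ _) (Continuous.intervalIntegrable (by fun_prop) _ _) fun θ hθ => ?_
    have h1 := hp (sin θ) ⟨neg_one_le_sin θ, sin_le_one θ⟩
    rw [arcsin_sin hθ.1 hθ.2, abs_sub_comm] at h1
    calc _ ≤ |k θ * (k θ - p.eval (sin θ))| := le_abs_self _
      _ = |k θ| * |k θ - p.eval (sin θ)| := abs_mul _ _
      _ ≤ |k θ| * ε := mul_le_mul_of_nonneg_left h1.le (abs_nonneg _)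
      _ = _ := mul_comm _ _
  intro θ hθ
  by_contra hne
  have hpos : 0 < ∫ θ in (-(π/2))..(π/2), k θ^2 :=
    intervalIntegral.integral_pos hlt (by fun_prop) (fun _ _ => sq_nonneg _) ⟨θ, hθ, by positivity⟩
  have h2 := hsq ((∫ θ in (-(π/2))..(π/2), k θ^2) / (2*(J+1))) (by positivity)
  set K := ∫ θ in (-(π/2))..(π/2), k θ^2
  have h3 : K / (2*(J+1)) * J ≤ K/2 := by
    rw [div_mul_eq_mul_div, div_le_div_iff₀ (by positivity) (by norm_num)]
    nlinarith
  linarith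

lemma weierC (k : ℝ → ℂ) (hk : Continuous k) (h : ∀ j : ℕ, ∫ θ in IT, k θ * ((sin θ^j : ℝ):ℂ) = 0) :
    ∀ θ ∈ IT, k θ = 0 := by
  have hle : -(π/2) ≤ π/2 := by linarith [pi_pos]
  have hi : ∀ j : ℕ, IntegrableOn (fun θ => k θ * ((sin θ^j : ℝ):ℂ)) IT := fun j =>
    (Continuous.continuousOn (by fun_prop)).integrableOn_compact isCompact_Icc
  have h1 := weier (fun θ => (k θ).re) (by fun_prop) (fun j => by
    rw [intervalIntegral.integral_of_le hle, ← integral_Icc_eq_integral_Ioc]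
    have := congrArg Complex.re (h j)
    rw [← RCLike.re_eq_complex_re, ← integral_re (hi j)] at this
    simp only [RCLike.re_eq_complex_re, Complex.re_mul_ofReal, Complex.zero_re] at this
    exact this)
  have h2 := weier (fun θ => (k θ).im) (by fun_prop) (fun j => by
    rw [intervalIntegral.integral_of_le hle, ← integral_Icc_eq_integral_Ioc]
    have := congrArg Complex.im (h j)
    rw [← RCLike.im_eq_complex_im, ← integral_im (hi j)] at this
    simp only [RCLike.im_eq_complex_im, Complex.im_mul_ofReal, Complex.zero_im] at this
    exact this)
  intro θ hθ
  exact Complex.ext (h1 θ hθ) (h2 θ hθ)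

lemma eqc_cont (F : ℝ → ℝ → ℂ) (hF : Continuous fun p : ℝ×ℝ => F p.1 p.2) (m : ℤ) : Continuous fun θ => equatorCoeff (F θ) m := by
  unfold equatorCoeff
  refine continuous_const.mul ?_
  refine intervalIntegral.continuous_parametric_intervalIntegral_of_continuous' (f := fun θ φ => F θ φ * Complex.exp (-(Complex.I*m*φ))) ?_ _ _
  refine Continuous.mul hF ?_
  fun_prop

lemma complete_aux (F : ℝ → ℝ → ℂ) (hF : Continuous fun p : ℝ×ℝ => F p.1 p.2)
    (hz : ∀ (l : ℕ) (m : ℤ), m.natAbs ≤ l → flCoeff F l m = 0) (m : ℤ) :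
    ∀ θ ∈ Set.Ioo (-(π/2)) (π/2), equatorCoeff (F θ) m = 0 := by
  have hc := eqc_cont F hF m
  have hr : Continuous fun θ : ℝ => (1 - sin θ^2)^((m.natAbs:ℝ)/2) :=
    Continuous.rpow_const (by fun_prop) fun x => Or.inr (by positivity)
  let k : ℝ → ℂ := fun θ => ((cos θ * (1 - sin θ^2)^((m.natAbs:ℝ)/2) : ℝ):ℂ) * equatorCoeff (F θ) m
  have hk : Continuous k := by
    have h1 : Continuous fun θ => cos θ * (1 - sin θ^2)^((m.natAbs:ℝ)/2) := continuous_cos.mul hr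
    exact (Complex.continuous_ofReal.comp h1).mul hc
  have hq : ∀ l, Continuous fun θ => q l m.natAbs (sin θ) := fun l => (q_continuous l m.natAbs).comp continuous_sin
  have hi : ∀ (l j : ℕ), IntegrableOn (fun θ => k θ * ((sin θ^j * (nrm l m.natAbs * q l m.natAbs (sin θ)) : ℝ):ℂ)) IT := fun l j => by
    have := hq l
    exact (Continuous.continuousOn (by fun_prop)).integrableOn_compact isCompact_Icc
  have key : ∀ (j l : ℕ), ∫ θ in IT, k θ * ((sin θ^j * (nrm l m.natAbs * q l m.natAbs (sin θ)) : ℝ):ℂ) = 0 := by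
    intro j
    induction j with
    | zero =>
      intro l
      by_cases hl : m.natAbs ≤ l
      · have h1 := hz l m hl
        rw [flCoeff_eq F (cont_integrable hF)] at h1
        have h2 : ∫ θ in IT, ((cos θ * AY l m θ : ℝ):ℂ) * (2*π * equatorCoeff (F θ) m)
            = ((2*π*ep m : ℝ):ℂ) * ∫ θ in IT, k θ * ((sin θ^0 * (nrm l m.natAbs * q l m.natAbs (sin θ)) : ℝ):ℂ) := by
          rw [← integral_const_mul]
          refine integral_congr_ae (Eventually.of_forall fun θ => ?_)
          simp only [k, AY_eq]
          push_cast; ring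
        rw [h2] at h1
        refine (mul_eq_zero.1 h1).resolve_left ?_
        have : ep m ≠ 0 := by
          intro h0; have := ep_sq m; rw [h0] at this; norm_num at this
        have := pi_ne_zero
        refine Complex.ofReal_ne_zero.2 ?_
        positivity
      · simp [q_zero (not_le.1 hl)]
    | succ j ih =>
      intro l
      by_cases hl : m.natAbs ≤ l
      · rcases l with _ | l
        · have hm : m = 0 := by omega
          subst hm
          have e : ∀ θ, k θ * ((sin θ^(j+1) * (nrm 0 0 * q 0 0 (sin θ)) : ℝ):ℂ)
              = ((nrm 0 0 / nrm 1 0 : ℝ):ℂ) * (k θ * ((sin θ^j * (nrm 1 0 * q 1 0 (sin θ)) : ℝ):ℂ)) := by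
            intro θ
            have h4 : sin θ^(j+1) * (nrm 0 0 * q 0 0 (sin θ)) = (nrm 0 0 / nrm 1 0) * (sin θ^j * (nrm 1 0 * q 1 0 (sin θ))) := by
              have h5 := q_step 0 (sin θ)
              have h6 := (nrm_pos 1 0).ne'
              simp only [zero_add] at h5
              rw [h5]
              field_simp; simp; ring
            rw [h4]; push_cast; ring
          have h3 := ih 1
          simp only [Int.natAbs_zero] at h3 ⊢
          simp only [e]
          rw [integral_const_mul, h3, mul_zero]
        · have h0 := q_mul_t l m hl
          have e : ∀ θ, k θ * ((sin θ^(j+1) * (nrm (l+1) m.natAbs * q (l+1) m.natAbs (sin θ)) : ℝ):ℂ)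
            = (betaLM (l+2) m : ℂ) * (k θ * ((sin θ^j * (nrm (l+2) m.natAbs * q (l+2) m.natAbs (sin θ)) : ℝ):ℂ))
              + (betaLM (l+1) m : ℂ) * (k θ * ((sin θ^j * (nrm l m.natAbs * q l m.natAbs (sin θ)) : ℝ):ℂ)) := by
            intro θ
            have h4 : sin θ^(j+1) * (nrm (l+1) m.natAbs * q (l+1) m.natAbs (sin θ)) = betaLM (l+2) m * (sin θ^j * (nrm (l+2) m.natAbs * q (l+2) m.natAbs (sin θ)))
               + betaLM (l+1) m * (sin θ^j * (nrm l m.natAbs * q l m.natAbs (sin θ))) := by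
              linear_combination sin θ^j * h0 (sin θ)
            rw [h4]; push_cast; ring
          simp only [e]
          rw [integral_add ((hi _ _).const_mul _) ((hi _ _).const_mul _), integral_const_mul, integral_const_mul, ih, ih]
          simp
      · simp [q_zero (not_le.1 hl)]
  have hdiag : ∀ t, q m.natAbs m.natAbs t = q m.natAbs m.natAbs 0 := by
    intro t
    induction m.natAbs with
    | zero => simp [q_zero_zero]
    | succ n ih => rw [q_diag, q_diag, ih]
  have hw := weierC k hk fun j => by
    have h1 := key j m.natAbs
    have hp : ((nrm m.natAbs m.natAbs * q m.natAbs m.natAbs 0 : ℝ):ℂ) ≠ 0 := by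
      rw [Complex.ofReal_ne_zero]
      exact (mul_pos (nrm_pos _ _) (q_diag_pos _ _)).ne'
    have h2 : ∫ θ in IT, k θ * ((sin θ^j * (nrm m.natAbs m.natAbs * q m.natAbs m.natAbs (sin θ)) : ℝ):ℂ)
       = ((nrm m.natAbs m.natAbs * q m.natAbs m.natAbs 0 : ℝ):ℂ) * ∫ θ in IT, k θ * ((sin θ^j : ℝ):ℂ) := by
      rw [← integral_const_mul]
      refine integral_congr_ae (Eventually.of_forall fun θ => ?_)
      simp only
      rw [hdiag (sin θ)]; push_cast; ring
    rw [h2] at h1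
    exact (mul_eq_zero.1 h1).resolve_left hp
  intro θ hθ
  have h1 := hw θ ⟨hθ.1.le, hθ.2.le⟩
  refine (mul_eq_zero.1 h1).resolve_left (Complex.ofReal_ne_zero.2 ?_)
  have hcp := cos_pos_of_mem_Ioo hθ
  have : 0 < 1 - sin θ^2 := by nlinarith [sin_sq_add_cos_sq θ, pow_pos hcp 2]
  positivity

theorem complete (f : ℝ → ℝ → ℂ) (hfc : Continuous fun q : ℝ × ℝ => f q.1 q.2)
    (hfper : ∀ θ φ : ℝ, f θ (φ + 2 * Real.pi) = f θ φ) (hw : H0 (flCoeff f)) :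
    ∀ θ ∈ Set.Icc (-(Real.pi / 2)) (Real.pi / 2), ∀ φ : ℝ,
      HasSum (fun l => BB (flCoeff f) l (sphCoord θ φ)) (f θ φ) := by
  let G : ℝ → ℝ → ℂ := fun θ φ => SS (flCoeff f) (sphCoord θ φ)
  let F : ℝ → ℝ → ℂ := fun θ φ => f θ φ - G θ φ
  have hG : Continuous fun p : ℝ×ℝ => G p.1 p.2 := GS_cont hw
  have hF : Continuous fun p : ℝ×ℝ => F p.1 p.2 := hfc.sub hG
  have hz : ∀ (l : ℕ) (m : ℤ), m.natAbs ≤ l → flCoeff F l m = 0 := by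
    intro l m hl
    have h1 := flCoeff_SS hw l m hl
    have h2 : flCoeff F l m = flCoeff f l m - flCoeff G l m := by
      rw [flCoeff, flCoeff, flCoeff, ← integral_sub (Y_mul_integrable _ (cont_integrable hfc) l m) (Y_mul_integrable _ (cont_integrable hG) l m)]
      simp only [F, sub_mul]
    rw [h2, h1, sub_self]
  have hper : ∀ θ φ, F θ (φ + 2*π) = F θ φ := by
    intro θ φ
    simp only [F, G, hfper]
    have : sphCoord θ (φ + 2*π) = sphCoord θ φ := by simp [sphCoord]
    rw [this]
  have hF0 : ∀ φ, ∀ θ ∈ Set.Ioo (-(π/2)) (π/2), F θ φ = 0 := by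
    intro φ θ hθ
    have e : ∀ m, equatorCoeff (F θ) m = 0 := fun m => complete_aux F hF hz m θ hθ
    have h1 := fourier_pointwise (F θ) (hF.comp (by fun_prop : Continuous fun φ : ℝ => (θ, φ))) (hper θ) (by simp only [e]; exact summable_zero) φ
    simp only [e, zero_mul] at h1
    exact h1.unique hasSum_zero
  intro θ hθ φ
  have hcl : F θ φ = 0 := by
    have hcont : Continuous fun θ => F θ φ := hF.comp (by fun_prop : Continuous fun θ : ℝ => (θ, φ))
    have hs : closure (Set.Ioo (-(π/2)) (π/2)) ⊆ {θ | F θ φ = 0} :=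
      closure_minimal (fun θ hθ => hF0 φ θ hθ) (isClosed_eq hcont continuous_const)
    rw [closure_Ioo (by linarith [pi_pos])] at hs
    exact hs hθ
  have e : f θ φ = SS (flCoeff f) (sphCoord θ φ) := sub_eq_zero.1 hcl
  rw [e]
  exact (BB_summable_closed hw (sphCoord_mem θ φ)).hasSum

end

/-! Part F5 -/
noncomputable section
open MeasureTheory Real Filter Topology

lemma q_odd (m : ℤ) (k : ℕ) : q (m.natAbs+2*k+1) m.natAbs 0 = 0 := by
  induction k with
  | zero => rw [mul_zero, add_zero, q_step]; ring
  | succ k ih =>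
    have h := q_mul_t (m.natAbs+2*k+1) m (by omega) 0
    have hb := beta_pos (m.natAbs+2*k+2) m (by omega)
    have hn := nrm_pos (m.natAbs+2*k+3) m.natAbs
    rw [ih, zero_mul, mul_zero, mul_zero, add_zero] at h
    rw [show m.natAbs + 2*(k+1)+1 = m.natAbs+2*k+3 by ring]
    have h2 : betaLM (m.natAbs+2*k+3) m * (nrm (m.natAbs+2*k+3) m.natAbs * q (m.natAbs+2*k+3) m.natAbs 0) = 0 := h.symm
    have h3 := (mul_eq_zero.1 h2).resolve_left hb.ne'
    exact (mul_eq_zero.1 h3).resolve_left hn.ne'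

lemma AY_odd (m : ℤ) (k : ℕ) : AY (m.natAbs+(2*k+1)) m 0 = 0 := by
  rw [AY_eq, sin_zero, ← add_assoc, q_odd]; ring

lemma AY_even (m : ℤ) (k : ℕ) : AY (m.natAbs+2*k) m 0 = PzeroM m k := by
  rw [AY, PzeroM, sin_zero]

lemma two_inj : Function.Injective (fun k : ℕ => 2*k) := fun a b h => by simpa using h

lemma eq_reidx {w : ℕ → ℤ → ℂ} (h : H0 w) (φ : ℝ) :
    HasSum (fun p : ℤ × ℕ => w (p.1.natAbs+p.2) p.1 * ((AY (p.1.natAbs+p.2) p.1 0 : ℂ) * Complex.exp (Complex.I*p.1*φ))) (SS w (sphCoord 0 φ)) := by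
  have h1 := SS_hasSum_prod h (sphCoord_mem 0 φ)
  rw [← reidx_inj.hasSum_iff] at h1
  · refine HasSum.congr_both h1 (fun p => ?_) rfl
    simp only [Function.comp]
    rw [EE_sphCoord _ _ _ _ (by simp), Ylm_AY]
  · rintro ⟨l, m⟩ hx
    by_cases hl : l < m.natAbs
    · simp [EE_zero l m hl]
    · exact absurd ⟨(m, l - m.natAbs), by simp only [Prod.mk.injEq, and_true]; omega⟩ hx

lemma fiber_even {w : ℕ → ℤ → ℂ} (m : ℤ) (φ : ℝ) (a : ℂ) :
    HasSum (fun n : ℕ => w (m.natAbs+n) m * ((AY (m.natAbs+n) m 0 : ℂ) * Complex.exp (Complex.I*m*φ))) (a * Complex.exp (Complex.I*m*φ)) ↔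
    HasSum (fun k : ℕ => w (m.natAbs+2*k) m * (PzeroM m k : ℂ)) a := by
  rw [← two_inj.hasSum_iff, ← hasSum_mul_right_iff (Complex.exp_ne_zero (Complex.I*m*φ)) (f := fun k : ℕ => w (m.natAbs+2*k) m * (PzeroM m k : ℂ))]
  · have : ∀ k, ((fun n : ℕ => w (m.natAbs+n) m * ((AY (m.natAbs+n) m 0 : ℂ) * Complex.exp (Complex.I*m*φ))) ∘ (fun k => 2*k)) k
      = w (m.natAbs+2*k) m * (PzeroM m k : ℂ) * Complex.exp (Complex.I*m*φ) := by
      intro k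
      simp only [Function.comp]
      rw [AY_even]; ring
    rw [funext this]
  · intro n hn
    obtain ⟨k, hk⟩ : ∃ k, n = 2*k+1 := by
      rcases Nat.even_or_odd' n with ⟨k, hk | hk⟩
      · exact absurd ⟨k, hk.symm⟩ hn
      · exact ⟨k, hk⟩
    rw [hk, AY_odd]; simp

lemma fiber_summable {w : ℕ → ℤ → ℂ} (h : H0 w) (m : ℤ) : Summable fun k : ℕ => w (m.natAbs+2*k) m * (PzeroM m k : ℂ) := by
  have h1 := (eq_reidx h 0).summable.prod_factor m
  have h2 := (fiber_even (w := w) m 0 (∑' n : ℕ, w (m.natAbs+n) m * ((AY (m.natAbs+n) m 0 : ℂ) * Complex.exp (Complex.I*m*(0:ℝ))))).1 (by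
    refine HasSum.congr_both h1.hasSum (fun n => rfl) ?_
    simp)
  exact h2.summable

theorem equator_eq {s : ℝ} (hs : 1 < s) (f : ℝ → ℝ → ℂ) (h : ℝ → ℂ) (hw : H1 (wc f h)) (hb : H1 (bCoef f))
    (hhc : Continuous h) (hhper : ∀ φ : ℝ, h (φ + 2 * Real.pi) = h φ) (hh : MemHsE (s + 3 / 4) h) (φ : ℝ) :
    SS (wc f h) (sphCoord 0 φ) = h φ := by
  have h1 := fourier_pointwise h hhc hhper (eq_summable (by linarith) hh) φ
  have h2 := eq_reidx hw.H0 φ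
  have h3 : ∀ m : ℤ, HasSum (fun k : ℕ => wc f h (m.natAbs+2*k) m * (PzeroM m k : ℂ)) (equatorCoeff h m) := by
    intro m
    have hB := (fiber_summable hb.H0 m).hasSum
    have hD : HasSum (fun k : ℕ => ((GammaKM m k * PzeroM m k : ℝ):ℂ)) (DD m : ℂ) := by
      exact_mod_cast (GP_summable m).hasSum
    refine HasSum.congr_both (hB.add (hD.mul_left (aTilde f h m))) (fun k => ?_) ?_
    · have hc : cCoef f h (m.natAbs+2*k) m = (GammaKM m k : ℂ) * aTilde f h m := by
        rw [cCoef, if_pos ⟨by omega, by omega⟩, show (m.natAbs + 2*k - m.natAbs)/2 = k by omega]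
      rw [wc, hc]; push_cast; ring
    · have hne : (DD m : ℂ) ≠ 0 := Complex.ofReal_ne_zero.2 (DD_ne m)
      rw [aTilde]
      rw [show ((∑' k : ℕ, GammaKM m k * PzeroM m k : ℝ)) = DD m from rfl, div_mul_cancel₀ _ hne]
      ring
  have h4 := h2.prod_fiberwise (fun m => (fiber_even (w := wc f h) m φ (equatorCoeff h m)).2 (h3 m))
  exact h4.unique h1

theorem main_thm (s : ℝ) (hs : 1 < s)
    (f : ℝ → ℝ → ℂ) (h : ℝ → ℂ)
    (hfc : Continuous fun q : ℝ × ℝ => f q.1 q.2)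
    (hfd : ∀ θ : ℝ, Differentiable ℝ (f θ))
    (hfper : ∀ θ φ : ℝ, f θ (φ + 2 * Real.pi) = f θ φ)
    (hf : MemHs s f)
    (hfφ : MemHs (s - 1 / 2) (fun θ φ => deriv (f θ) φ))
    (hhc : Continuous h)
    (hhper : ∀ φ : ℝ, h (φ + 2 * Real.pi) = h φ)
    (hh : MemHsE (s + 3 / 4) h) :
    SolvesObliqueC (vFun f h) f h := by
  obtain ⟨hw, hb⟩ := wc_H1 hs f h (g2_summable hfd hfper hf hfφ) hh.2
  exact main_reduction f h hw (complete f hfc hfper ((Wt_of_Hs hf).H0 hs)) (equator_eq hs f h hw hb hhc hhper hh)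

end

/-- Lemma 3.3: regularity of the series solution.
For `s > 1`, if `f ∈ H^s(𝕊)` with `f_φ ∈ H^{s-1/2}(𝕊)` and `h ∈ H^{s+3/4}(ℰ)`
(realized by continuous, `2π`-periodic representatives), then the series solution
`v = Σ (b_l^m + c_l^m) r^{-l-1} Y_l^m` belongs to `C²(Ω) ∩ C¹(cl Ω)` and solves the
oblique derivative problem in the classical sense. -/
theorem series_solution_is_classical_solution (s : ℝ) (hs : 1 < s)
    (f : ℝ → ℝ → ℂ) (h : ℝ → ℂ)
    (hfc : Continuous fun q : ℝ × ℝ => f q.1 q.2)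
    (hfd : ∀ θ : ℝ, Differentiable ℝ (f θ))
    (hfper : ∀ θ φ : ℝ, f θ (φ + 2 * Real.pi) = f θ φ)
    (hf : MemHs s f)
    (hfφ : MemHs (s - 1 / 2) (fun θ φ => deriv (f θ) φ))
    (hhc : Continuous h)
    (hhper : ∀ φ : ℝ, h (φ + 2 * Real.pi) = h φ)
    (hh : MemHsE (s + 3 / 4) h) :
    SolvesObliqueC (vFun f h) f h := by
  exact main_thm s hs f h hfc hfd hfper hf hfφ hhc hhper hh

end
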